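/- arXiv:1603.04277 — 5 statements merged into one kernel-verified Lean document; each statement's English description precedes it below -/
import Mathlib

section
/- Let α : ℝ^n → ℝ be locally log-Hölder continuous with constant c_log(α), and let R ≥ c_log(α). Then there exists a constant c > 0, independent of x, y, v and h, such that 2^{vα(x)} η_{v,h+R}(x − y) ≤ c 2^{vα(y)} η_{v,h}(x − y) for all x, y ∈ ℝ^n and all v, h ∈ ℕ₀. -/
open MeasureTheory ENNReal Real Set

noncomputable section

/-- Euclidean space ℝ^n. -/
abbrev En (n : ℕ) := EuclideanSpace ℝ (Fin n)

/-- `g` is locally log-Hölder continuous with constant `c`. -/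
def LocLogHolder {n : ℕ} (c : ℝ) (g : En n → ℝ) : Prop :=
  0 < c ∧ ∀ x y : En n, |g x - g y| ≤ c / Real.log (Real.exp 1 + 1 / ‖x - y‖)

/-- `g` is globally log-Hölder continuous with local constant `c`. -/
def GlobLogHolder {n : ℕ} (c : ℝ) (g : En n → ℝ) : Prop :=
  LocLogHolder c g ∧
    ∃ (gi cd : ℝ), 0 < cd ∧ ∀ x : En n, |g x - gi| ≤ cd / Real.log (Real.exp 1 + ‖x‖)

/-- The kernel η_{v,h}(x) = 2^{nv} (1 + 2^v |x|)^{-h}. -/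
def eta (n : ℕ) (v : ℕ) (h : ℝ) (x : En n) : ℝ :=
  (2 : ℝ) ^ (n * v) * (1 + (2 : ℝ) ^ v * ‖x‖) ^ (-h)

/-- The dyadic cube Q_{v,m}. -/
def dyadicCube (n : ℕ) (v : ℤ) (m : Fin n → ℤ) : Set (En n) :=
  {x | ∀ i, (m i : ℝ) ≤ (2 : ℝ) ^ v * x i ∧ (2 : ℝ) ^ v * x i < m i + 1}

/-- Luxemburg (quasi-)norm of an ℝ≥0∞-valued function with variable exponent `p`. -/
def luxNorm {n : ℕ} (p : En n → ℝ) (F : En n → ℝ≥0∞) : ℝ≥0∞ :=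
  sInf {c : ℝ≥0∞ | 0 < c ∧ ∫⁻ x, (F x / c) ^ p x ≤ 1}

/-- The mixed Lebesgue-sequence space norm ‖(F_v)_v‖_{L^{p(·)}(ℓ_{q(·)})}. -/
def mixedNorm {n : ℕ} (p q : En n → ℝ) (F : ℕ → En n → ℝ≥0∞) : ℝ≥0∞ :=
  luxNorm p fun x => (∑' v : ℕ, F v x ^ q x) ^ (1 / q x)

/-- The sequence space norm ‖λ‖_{f^{α(·)}_{p(·),q(·)}}. -/
def seqNorm {n : ℕ} (α p q : En n → ℝ) (lam : ℕ → (Fin n → ℤ) → ℂ) : ℝ≥0∞ :=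
  mixedNorm p q fun v x =>
    ∑' m : Fin n → ℤ,
      ENNReal.ofReal ((2 : ℝ) ^ ((v : ℝ) * (α x + n / 2)) * ‖lam v m‖) *
        (dyadicCube n (v : ℤ) m).indicator (fun _ => (1 : ℝ≥0∞)) x

/-- The sequence space norm ‖λ‖_{f^{α(·)}_{∞,q}}. -/
def seqNormInf {n : ℕ} (α : En n → ℝ) (q : ℝ) (lam : ℕ → (Fin n → ℤ) → ℂ) : ℝ≥0∞ :=
  ⨆ (vQ : ℤ) (mQ : Fin n → ℤ),
    volume (dyadicCube n vQ mQ) ^ (-(1 / q)) *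
      (∑' v : ℕ, if vQ ≤ (v : ℤ) then
          ∫⁻ x in dyadicCube n vQ mQ,
            ∑' m : Fin n → ℤ,
              ENNReal.ofReal ((2 : ℝ) ^ ((v : ℝ) * (α x + n / 2) * q) * ‖lam v m‖ ^ q) *
                (dyadicCube n (v : ℤ) m).indicator (fun _ => (1 : ℝ≥0∞)) x
        else 0) ^ (1 / q)

/-- The Calderón product (quasi-)norm associated to two sequence space norms. -/
def calderonNorm {n : ℕ} (N0 N1 : (ℕ → (Fin n → ℤ) → ℂ) → ℝ≥0∞) (θ : ℝ)
    (lam : ℕ → (Fin n → ℤ) → ℂ) : ℝ≥0∞ :=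
  sInf {M : ℝ≥0∞ | ∃ μ ν : ℕ → (Fin n → ℤ) → ℂ, N0 μ ≤ 1 ∧ N1 ν ≤ 1 ∧
    ∀ v m, ENNReal.ofReal ‖lam v m‖ ≤
      M * ENNReal.ofReal ‖μ v m‖ ^ (1 - θ) * ENNReal.ofReal ‖ν v m‖ ^ θ}

/-- Lemma on moving variable smoothness (Lemma `DHR-lemma`):
if `α` is locally log-Hölder with constant `cα` and `R ≥ cα`, then
`2^{vα(x)} η_{v,h+R}(x−y) ≤ c 2^{vα(y)} η_{v,h}(x−y)` for all `x, y, v, h`. -/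
theorem stmt0 {n : ℕ} (α : En n → ℝ) (cα : ℝ) (hα : LocLogHolder cα α)
    (R : ℝ) (hR : cα ≤ R) :
    ∃ c : ℝ, 0 < c ∧ ∀ (x y : En n) (v h : ℕ),
      (2 : ℝ) ^ ((v : ℝ) * α x) * eta n v ((h : ℝ) + R) (x - y) ≤
        c * ((2 : ℝ) ^ ((v : ℝ) * α y) * eta n v (h : ℝ) (x - y)) := by
  obtain ⟨hc, hα⟩ := hα
  refine ⟨Real.exp R, Real.exp_pos R, ?_⟩
  intro x y v h
  have hr0 : 0 ≤ ‖x - y‖ := norm_nonneg _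
  have hB : 1 ≤ 1 + (2 : ℝ) ^ v * ‖x - y‖ := by
    have : 0 ≤ (2 : ℝ) ^ v * ‖x - y‖ := by positivity
    linarith
  have hB0 : 0 < 1 + (2 : ℝ) ^ v * ‖x - y‖ := by linarith
  have hlogB : 0 ≤ Real.log (1 + (2 : ℝ) ^ v * ‖x - y‖) := Real.log_nonneg hB
  have hl2 : 0 < Real.log 2 := Real.log_pos (by norm_num)
  have key : (v : ℝ) * (α x - α y) * Real.log 2
      ≤ R * (Real.log (1 + (2 : ℝ) ^ v * ‖x - y‖) + 1) := by
    rcases hr0.eq_or_lt with h0 | hr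
    · have hxy : x = y := by
        rw [← sub_eq_zero]; exact norm_eq_zero.mp h0.symm
      subst hxy
      rw [sub_self, mul_zero, zero_mul]
      exact mul_nonneg (by linarith) (by linarith)
    · have h1 := hα x y
      set r := ‖x - y‖ with hrdef
      set L := Real.log (Real.exp 1 + 1 / r) with hL
      have hir : 0 < 1 / r := by positivity
      have hL1 : 1 ≤ L := by
        rw [hL, Real.le_log_iff_exp_le (by positivity)]
        linarith
      have hLr : -Real.log r ≤ L := by
        rw [← Real.log_inv, ← one_div]
        exact Real.log_le_log hir (by linarith [Real.exp_pos 1])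
      have hBA : (v : ℝ) * Real.log 2 + Real.log r ≤ Real.log (1 + (2 : ℝ) ^ v * r) := by
        rw [← Real.log_pow, ← Real.log_mul (by positivity) hr.ne']
        exact Real.log_le_log (by positivity) (by linarith)
      set A := (v : ℝ) * Real.log 2 with hA
      have hA0 : 0 ≤ A := by positivity
      have hAL : A / L ≤ Real.log (1 + (2 : ℝ) ^ v * r) + 1 := by
        rw [div_le_iff₀ (by linarith)]
        rcases le_total A L with hle | hle
        · nlinarith
        · nlinarith [mul_nonneg (sub_nonneg.2 hle) (sub_nonneg.2 hL1)]
      calc (v : ℝ) * (α x - α y) * Real.log 2 = A * (α x - α y) := by rw [hA]; ring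
        _ ≤ A * (cα / L) := mul_le_mul_of_nonneg_left ((le_abs_self _).trans h1) hA0
        _ = cα * (A / L) := by ring
        _ ≤ cα * (Real.log (1 + (2 : ℝ) ^ v * r) + 1) := mul_le_mul_of_nonneg_left hAL hc.le
        _ ≤ R * (Real.log (1 + (2 : ℝ) ^ v * r) + 1) :=
            mul_le_mul_of_nonneg_right hR (by linarith)
  unfold eta
  have main : (2 : ℝ) ^ ((v : ℝ) * α x) * (1 + (2 : ℝ) ^ v * ‖x - y‖) ^ (-((h : ℝ) + R))
      ≤ Real.exp R * ((2 : ℝ) ^ ((v : ℝ) * α y) *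
        (1 + (2 : ℝ) ^ v * ‖x - y‖) ^ (-(h : ℝ))) := by
    simp only [Real.rpow_def_of_pos hB0, Real.rpow_def_of_pos (zero_lt_two' ℝ), ← Real.exp_add]
    rw [Real.exp_le_exp]
    linarith
  have := mul_le_mul_of_nonneg_left main (by positivity : (0 : ℝ) ≤ (2 : ℝ) ^ (n * v))
  linarith
end
end

section
/- Let α : ℝ^n → ℝ be locally log-Hölder continuous with constant c_log(α), and let R ≥ c_log(α). Then there exists a constant c > 0 such that for every measurable function f : ℝ^n → ℂ, every v, h ∈ ℕ₀ and every x ∈ ℝ^n, one has 2^{vα(x)} (η_{v,h+R} ∗ |f|)(x) ≤ c (η_{v,h} ∗ (2^{vα(·)}|f|))(x), i.e. the variable smoothness factor 2^{vα(·)} can be moved inside the convolution at the cost of increasing the decay parameter by R. -/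
open MeasureTheory ENNReal Real Set

noncomputable section

/-- Pointwise estimate behind the theorem. -/
theorem pointwise_aux {n : ℕ} (α : En n → ℝ) (cα : ℝ) (hα : LocLogHolder cα α)
    (R : ℝ) (hR : cα ≤ R) (v : ℕ) (x y : En n) :
    (2 : ℝ) ^ ((v : ℝ) * α x) ≤
      Real.exp cα * ((1 + (2 : ℝ) ^ v * ‖x - y‖) ^ R * (2 : ℝ) ^ ((v : ℝ) * α y)) := by
  obtain ⟨hc, hH⟩ := hα
  have hA1 : 1 ≤ 1 + (2 : ℝ) ^ v * ‖x - y‖ := by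
    have : 0 ≤ (2 : ℝ) ^ v * ‖x - y‖ := by positivity
    linarith
  have hxy := hH x y
  set A : ℝ := 1 + (2 : ℝ) ^ v * ‖x - y‖ with hA
  have hA0 : 0 < A := by linarith
  have hlA : 0 ≤ Real.log A := Real.log_nonneg hA1
  have key : (v : ℝ) * Real.log 2 * (α x - α y) ≤ cα * (Real.log A + 1) := by
    rcases eq_or_ne x y with rfl | hne
    · simp only [sub_self, mul_zero]
      positivity
    · have ht : 0 < ‖x - y‖ := norm_pos_iff.mpr (sub_ne_zero.mpr hne)
      set B : ℝ := Real.exp 1 + 1 / ‖x - y‖ with hB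
      have hBe : Real.exp 1 ≤ B := by
        have : 0 ≤ 1 / ‖x - y‖ := by positivity
        linarith
      have hB0 : 0 < B := lt_of_lt_of_le (Real.exp_pos 1) hBe
      have hL : 1 ≤ Real.log B := (Real.le_log_iff_exp_le hB0).mpr hBe
      have hV0 : 0 ≤ (v : ℝ) * Real.log 2 :=
        mul_nonneg (Nat.cast_nonneg v) (Real.log_nonneg (by norm_num))
      have hle : (2 : ℝ) ^ v ≤ A * B := by
        calc (2 : ℝ) ^ v = ((2 : ℝ) ^ v * ‖x - y‖) * (1 / ‖x - y‖) := by field_simp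
          _ ≤ A * B := by
            apply mul_le_mul
            · linarith
            · have := Real.exp_pos 1
              linarith
            · positivity
            · exact hA0.le
      have hV : (v : ℝ) * Real.log 2 ≤ Real.log A + Real.log B := by
        rw [← Real.log_mul hA0.ne' hB0.ne', ← Real.log_pow]
        exact Real.log_le_log (by positivity) hle
      have hVL : (v : ℝ) * Real.log 2 ≤ (Real.log A + 1) * Real.log B := by
        nlinarith
      calc (v : ℝ) * Real.log 2 * (α x - α y)
          ≤ (v : ℝ) * Real.log 2 * (cα / Real.log B) :=
            mul_le_mul_of_nonneg_left ((le_abs_self _).trans hxy) hV0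
        _ = cα * ((v : ℝ) * Real.log 2 / Real.log B) := by ring
        _ ≤ cα * (Real.log A + 1) := by
            apply mul_le_mul_of_nonneg_left _ hc.le
            rw [div_le_iff₀ (by linarith)]
            exact hVL
  rw [Real.rpow_def_of_pos hA0, Real.rpow_def_of_pos two_pos, Real.rpow_def_of_pos two_pos,
    ← Real.exp_add, ← Real.exp_add]
  apply Real.exp_le_exp.mpr
  have := mul_le_mul_of_nonneg_right hR hlA
  nlinarith

/-- the variable smoothness factor `2^{vα(·)}` can be moved inside the
convolution at the cost of increasing the decay parameter by `R ≥ c_log(α)`. -/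
theorem stmt1 {n : ℕ} (α : En n → ℝ) (cα : ℝ) (hα : LocLogHolder cα α)
    (R : ℝ) (hR : cα ≤ R) :
    ∃ c : ℝ, 0 < c ∧ ∀ f : En n → ℂ, Measurable f → ∀ (v h : ℕ) (x : En n),
      ENNReal.ofReal ((2 : ℝ) ^ ((v : ℝ) * α x)) *
          ∫⁻ y, ENNReal.ofReal (eta n v ((h : ℝ) + R) (x - y) * ‖f y‖) ≤
        ENNReal.ofReal c *
          ∫⁻ y, ENNReal.ofReal (eta n v (h : ℝ) (x - y) * ((2 : ℝ) ^ ((v : ℝ) * α y) * ‖f y‖)) := by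
  refine ⟨Real.exp cα, Real.exp_pos _, fun f _ v h x => ?_⟩
  rw [← lintegral_const_mul' _ _ ENNReal.ofReal_ne_top,
    ← lintegral_const_mul' _ _ ENNReal.ofReal_ne_top]
  apply lintegral_mono
  intro y
  simp only []
  rw [← ENNReal.ofReal_mul (by positivity), ← ENNReal.ofReal_mul (by positivity)]
  apply ENNReal.ofReal_le_ofReal
  have hp := pointwise_aux α cα hα R hR v x y
  have hA0 : 0 < 1 + (2 : ℝ) ^ v * ‖x - y‖ := by positivity
  have e1 : (1 + (2 : ℝ) ^ v * ‖x - y‖) ^ (-(h : ℝ)) =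
      (1 + (2 : ℝ) ^ v * ‖x - y‖) ^ (-((h : ℝ) + R)) * (1 + (2 : ℝ) ^ v * ‖x - y‖) ^ R := by
    rw [← Real.rpow_add hA0]
    congr 1
    ring
  have e0 : 0 ≤ eta n v ((h : ℝ) + R) (x - y) * ‖f y‖ := by
    unfold eta
    positivity
  refine (mul_le_mul_of_nonneg_right hp e0).trans (le_of_eq ?_)
  unfold eta
  rw [e1]
  ring
end
end

section
/- Let p, q : ℝ^n → (0,∞) be globally log-Hölder continuous with 1 < p⁻ ≤ p⁺ < ∞ and 1 < q⁻ ≤ q⁺ < ∞, and let h > n. Then there exists a constant c > 0 such that for every sequence (f_v)_{v≥0} of measurable functions on ℝ^n, ‖(η_{v,h} ∗ f_v)_{v≥0}‖_{L^{p(·)}(ℓ_{q(·)})} ≤ c ‖(f_v)_{v≥0}‖_{L^{p(·)}(ℓ_{q(·)})}. -/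
open MeasureTheory ENNReal Real Set

noncomputable section

section pointwise

theorem aux_pow_add_le (A d : ℝ≥0∞) {p : ℝ} (hp : 1 ≤ p) :
    (A + d) ^ p ≤ A ^ p + ENNReal.ofReal p * (A + d) ^ (p - 1) * d := by
  have hp0 : 0 < p := by linarith
  by_cases hA : A = ∞
  · simp [hA, hp0]
  by_cases hd : d = ∞
  · have h1 : (∞ : ℝ≥0∞) ^ (p - 1) ≠ 0 := by
      rw [Ne, ENNReal.rpow_eq_zero_iff]; push Not
      exact ⟨fun h => absurd h (by simp), fun _ => by linarith⟩
    have h2 : ENNReal.ofReal p * (∞ : ℝ≥0∞) ^ (p - 1) * ∞ = ∞ := by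
      apply ENNReal.mul_top
      apply mul_ne_zero _ h1
      simpa using hp0
    simp [hd, h2]
  lift A to NNReal using hA
  lift d to NNReal using hd
  have key : ((A + d : NNReal) : ℝ) ^ p ≤ (A : ℝ) ^ p + p * ((A + d : NNReal) : ℝ) ^ (p - 1) * d := by
    by_cases h0 : (A + d : NNReal) = 0
    · have hA0 : A = 0 := by simpa using (add_eq_zero.1 h0).1
      have hd0 : d = 0 := by simpa using (add_eq_zero.1 h0).2
      simp [hA0, hd0]
    have hpos : (0 : ℝ) < ((A + d : NNReal) : ℝ) := by
      exact_mod_cast pos_iff_ne_zero.2 h0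
    set b : ℝ := ((A + d : NNReal) : ℝ) with hb
    have hAb : (A : ℝ) = b - d := by simp [hb]
    have hdb : (d : ℝ) ≤ b := by simp [hb]
    have hB := one_add_mul_self_le_rpow_one_add (s := -(d / b : ℝ)) (by
      have : (d : ℝ) / b ≤ 1 := by rw [div_le_one hpos]; exact hdb
      linarith) hp
    have h3 : (A : ℝ) ^ p = b ^ p * (1 + -(d / b : ℝ)) ^ p := by
      rw [← Real.mul_rpow hpos.le]
      · congr 1; rw [hAb]; field_simp; ring
      · have : (d : ℝ) / b ≤ 1 := by rw [div_le_one hpos]; exact hdb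
        linarith
    have h4 : b ^ p = b ^ (p - 1) * b := by
      rw [← Real.rpow_add_one hpos.ne']; simp
    have h5 : b ^ p * (1 + p * -(d / b : ℝ)) = b ^ p - p * b ^ (p - 1) * d := by
      rw [h4]; field_simp; ring
    have h6 := mul_le_mul_of_nonneg_left hB (Real.rpow_nonneg hpos.le p)
    rw [h5, ← h3] at h6
    linarith
  rw [← ENNReal.coe_add, ← ENNReal.coe_rpow_of_nonneg _ hp0.le,
    ← ENNReal.coe_rpow_of_nonneg _ hp0.le,
    ← ENNReal.coe_rpow_of_nonneg _ (by linarith : (0:ℝ) ≤ p - 1), ENNReal.ofReal,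
    ← ENNReal.coe_mul, ← ENNReal.coe_mul, ← ENNReal.coe_add, ENNReal.coe_le_coe,
    ← NNReal.coe_le_coe]
  push_cast
  rw [Real.coe_toNNReal _ hp0.le]
  simpa using key

theorem aux_pow_sum_le (d : ℕ → ℝ≥0∞) {p : ℝ} (hp : 1 ≤ p) (N : ℕ) :
    (∑ v ∈ Finset.range N, d v) ^ p ≤
      ∑ v ∈ Finset.range N,
        ENNReal.ofReal p * (∑ w ∈ Finset.range (v + 1), d w) ^ (p - 1) * d v := by
  induction N with
  | zero => simp; linarith
  | succ N ih =>
    rw [Finset.sum_range_succ (n := N), Finset.sum_range_succ (n := N)]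
    refine (aux_pow_add_le _ _ hp).trans ?_
    rw [Finset.sum_range_succ (n := N)]
    gcongr

theorem aux_rpow_sub_mul (F : ℝ≥0∞) {p : ℝ} (hp : 1 ≤ p) : F ^ (p - 1) * F = F ^ p := by
  have := ENNReal.rpow_add_of_nonneg (x := F) (p - 1) 1 (by linarith) (by norm_num)
  simpa using this.symm

theorem aux_absorb (F S k : ℝ≥0∞) (hk : k ≠ 0) (hk' : k ≠ ∞) {p : ℝ} (hp : 1 ≤ p) :
    F ^ (p - 1) * S ≤ F ^ p / k + k ^ (p - 1) * S ^ p := by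
  rcases le_total S (F / k) with h | h
  · calc F ^ (p - 1) * S ≤ F ^ (p - 1) * (F / k) := by gcongr
      _ = F ^ p / k := by rw [← mul_div_assoc, aux_rpow_sub_mul F hp]
      _ ≤ _ := le_self_add
  · have h' : F ≤ k * S := by
      rw [mul_comm]; exact (ENNReal.div_le_iff hk hk').1 h
    calc F ^ (p - 1) * S ≤ (k * S) ^ (p - 1) * S := by
          gcongr
      _ = k ^ (p - 1) * S ^ p := by
          rw [ENNReal.mul_rpow_of_nonneg _ _ (by linarith), mul_assoc, aux_rpow_sub_mul S hp]
      _ ≤ _ := le_add_self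

theorem aux_exchange {l : ℝ} (hl : 1 ≤ l) {K C0 s s' : ℝ} (hK : 0 ≤ K)
    (hs : |s - s'| * Real.log l ≤ C0) {A : ℝ≥0∞}
    (h1 : ENNReal.ofReal l ^ (-K) ≤ A) (h2 : A ≤ ENNReal.ofReal l ^ K) :
    A ^ s ≤ ENNReal.ofReal (Real.exp (K * C0)) * A ^ s' := by
  have hl0 : 0 < l := by linarith
  have e1 : ENNReal.ofReal l ^ (-K) = ENNReal.ofReal (l ^ (-K)) :=
    ENNReal.ofReal_rpow_of_pos hl0
  have e2 : ENNReal.ofReal l ^ K = ENNReal.ofReal (l ^ K) :=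
    ENNReal.ofReal_rpow_of_pos hl0
  rw [e1] at h1; rw [e2] at h2
  have hAt : A ≠ ∞ := ne_top_of_le_ne_top ENNReal.ofReal_ne_top h2
  have hA0 : A ≠ 0 := by
    intro h
    rw [h] at h1
    have : 0 < l ^ (-K) := Real.rpow_pos_of_pos hl0 _
    simp at h1; linarith
  have hs1 : A ^ s = A ^ (s - s') * A ^ s' := by
    rw [← ENNReal.rpow_add _ _ hA0 hAt]; simp
  rw [hs1]
  gcongr
  set a := A.toReal with ha
  have hAa : A = ENNReal.ofReal a := (ENNReal.ofReal_toReal hAt).symm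
  have ha0 : 0 < a := ENNReal.toReal_pos hA0 hAt
  rw [hAa] at h1 h2 ⊢
  rw [ENNReal.ofReal_le_ofReal_iff ha0.le] at h1
  rw [ENNReal.ofReal_le_ofReal_iff (by positivity)] at h2
  rw [ENNReal.ofReal_rpow_of_pos ha0]
  apply ENNReal.ofReal_le_ofReal
  rw [Real.rpow_def_of_pos ha0]
  apply Real.exp_le_exp.2
  have l1 := Real.log_le_log (by positivity) h1
  have l2 := Real.log_le_log ha0 h2
  rw [Real.log_rpow hl0] at l1 l2
  have hll : 0 ≤ Real.log l := Real.log_nonneg hl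
  have labs : |Real.log a| ≤ K * Real.log l := abs_le.2 ⟨by linarith, l2⟩
  calc Real.log a * (s - s') ≤ |Real.log a| * |s - s'| := by
        rw [← abs_mul]; exact le_abs_self _
    _ ≤ K * Real.log l * |s - s'| := by gcongr
    _ = K * (|s - s'| * Real.log l) := by ring
    _ ≤ K * C0 := by gcongr

theorem aux_tsum_pow {ι : Type*} (c z : ι → ℝ≥0∞) {r : ℝ} (hr : 0 < r) :
    (∑' k, c k * z k) ^ r ≤
      (∑' k, c k ^ (1 / 2 : ℝ)) ^ r * ∑' k, (c k ^ (1 / 2 : ℝ)) ^ r * z k ^ r := by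
  set T := ∑' k, (c k ^ (1 / 2 : ℝ)) ^ r * z k ^ r with hT
  have hk : ∀ k, c k ^ (1 / 2 : ℝ) * z k ≤ T ^ (1 / r) := by
    intro k
    rw [one_div r, ENNReal.le_rpow_inv_iff hr, ENNReal.mul_rpow_of_nonneg _ _ hr.le]
    exact ENNReal.le_tsum k
  have h1 : ∑' k, c k * z k ≤ (∑' k, c k ^ (1 / 2 : ℝ)) * T ^ (1 / r) := by
    rw [← ENNReal.tsum_mul_right]
    apply ENNReal.tsum_le_tsum
    intro k
    calc c k * z k = c k ^ (1 / 2 : ℝ) * (c k ^ (1 / 2 : ℝ) * z k) := by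
          rw [← mul_assoc, ← ENNReal.rpow_add_of_nonneg _ _ (by norm_num) (by norm_num)]
          norm_num
      _ ≤ _ := by gcongr; exact hk k
  calc (∑' k, c k * z k) ^ r ≤ ((∑' k, c k ^ (1 / 2 : ℝ)) * T ^ (1 / r)) ^ r := by gcongr
    _ = _ := by
      rw [ENNReal.mul_rpow_of_nonneg _ _ hr.le, ← ENNReal.rpow_mul, one_div_mul_cancel hr.ne',
        ENNReal.rpow_one]

end pointwise


/-- A nested family of partitions of `ℝ^n` into cells of side length `2^{-v}`. -/
structure Grid (n : ℕ) where
  c : ℕ → En n → (Fin n → ℤ)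
  meas : ∀ v, Measurable (c v)
  nested : ∀ v x y, c (v + 1) x = c (v + 1) y → c v x = c v y
  vol : ∀ v x, volume {y | c v y = c v x} = ((2 : ℝ≥0∞) ^ (n * v))⁻¹
  diam : ∀ v x y, c v x = c v y → ‖x - y‖ * 2 ^ v ≤ n

/-- The weight `2^v (e + |x|)`. -/
def lamR {n : ℕ} (v : ℕ) (x : En n) : ℝ := 2 ^ v * (Real.exp 1 + ‖x‖)

theorem lamR_ge_one {n : ℕ} (v : ℕ) (x : En n) : Real.exp 1 ≤ lamR v x := by
  unfold lamR
  have h1 : (1 : ℝ) ≤ 2 ^ v := one_le_pow₀ (by norm_num)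
  have h3 := norm_nonneg x
  have := Real.exp_pos 1
  nlinarith

theorem one_le_lamR {n : ℕ} (v : ℕ) (x : En n) : 1 ≤ lamR v x := by
  have := Real.add_one_le_exp (1 : ℝ)
  have := lamR_ge_one v x
  linarith

/-- Local log-Hölder regularity along a grid. -/
def LHG {n : ℕ} (G : Grid n) (C0 : ℝ) (p : En n → ℝ) : Prop :=
  ∀ v x y, G.c v x = G.c v y → |p x - p y| * Real.log (lamR v x) ≤ C0

namespace Grid

variable {n : ℕ} (G : Grid n)

/-- Averaging operator over the cells of level `v`. -/
def E (v : ℕ) (f : En n → ℝ≥0∞) (x : En n) : ℝ≥0∞ :=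
  (2 : ℝ≥0∞) ^ (n * v) * ∫⁻ y in {y | G.c v y = G.c v x}, f y

theorem nested_le {v w : ℕ} (hvw : v ≤ w) {x y : En n} (h : G.c w x = G.c w y) :
    G.c v x = G.c v y := by
  induction w, hvw using Nat.le_induction with
  | base => exact h
  | succ w _ ih => exact ih (G.nested w x y h)

theorem measSet (v : ℕ) (i : Fin n → ℤ) : MeasurableSet {y | G.c v y = i} :=
  G.meas v (measurableSet_singleton i)

theorem E_congr {v : ℕ} {x y : En n} (h : G.c v x = G.c v y) (f : En n → ℝ≥0∞) :
    G.E v f x = G.E v f y := by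
  unfold E; rw [h]

theorem E_congr_le {v w : ℕ} (hvw : v ≤ w) {x y : En n} (h : G.c w x = G.c w y)
    (f : En n → ℝ≥0∞) : G.E v f x = G.E v f y :=
  G.E_congr (G.nested_le hvw h) f

theorem E_mono {v : ℕ} {x : En n} {f g : En n → ℝ≥0∞}
    (h : ∀ y, G.c v y = G.c v x → f y ≤ g y) : G.E v f x ≤ G.E v g x := by
  unfold E
  gcongr 1
  exact setLIntegral_mono' (G.measSet v _) (fun y hy => h y hy)

theorem E_mono_ae {v : ℕ} {x : En n} {f g : En n → ℝ≥0∞}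
    (h : ∀ᵐ y, f y ≤ g y) : G.E v f x ≤ G.E v g x := by
  unfold E
  gcongr 1
  exact lintegral_mono_ae (ae_restrict_of_ae h)

theorem two_pow_ne (v : ℕ) : (2 : ℝ≥0∞) ^ (n * v) ≠ 0 ∧ (2 : ℝ≥0∞) ^ (n * v) ≠ ∞ :=
  ⟨pow_ne_zero _ (by norm_num), ENNReal.pow_ne_top (by norm_num)⟩

theorem E_const (v : ℕ) (x : En n) (a : ℝ≥0∞) : G.E v (fun _ => a) x = a := by
  unfold E
  rw [setLIntegral_const, G.vol, mul_left_comm, ENNReal.mul_inv_cancel, mul_one]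
  · exact (two_pow_ne v).1
  · exact (two_pow_ne v).2

theorem E_le_const {v : ℕ} {x : En n} {f : En n → ℝ≥0∞} {a : ℝ≥0∞}
    (h : ∀ y, G.c v y = G.c v x → f y ≤ a) : G.E v f x ≤ a :=
  (G.E_mono h).trans (G.E_const v x a).le

theorem le_E_const {v : ℕ} {x : En n} {f : En n → ℝ≥0∞} {a : ℝ≥0∞}
    (h : ∀ y, G.c v y = G.c v x → a ≤ f y) : a ≤ G.E v f x :=
  (G.E_const v x a).symm.le.trans (G.E_mono h)

theorem E_add {v : ℕ} {x : En n} {f g : En n → ℝ≥0∞} (hf : Measurable f) :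
    G.E v (fun y => f y + g y) x = G.E v f x + G.E v g x := by
  unfold E
  rw [lintegral_add_left hf, mul_add]

theorem E_const_mul {v : ℕ} {x : En n} {f : En n → ℝ≥0∞} (hf : Measurable f) (a : ℝ≥0∞) :
    G.E v (fun y => a * f y) x = a * G.E v f x := by
  unfold E
  rw [lintegral_const_mul _ hf, mul_left_comm]

theorem measurable_E (v : ℕ) (f : En n → ℝ≥0∞) : Measurable (G.E v f) := by
  have : G.E v f = (fun i => (2 : ℝ≥0∞) ^ (n * v) * ∫⁻ y in {y | G.c v y = i}, f y) ∘ G.c v := rfl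
  rw [this]
  exact (measurable_of_countable _).comp (G.meas v)

theorem E_adjoint (v : ℕ) (i : Fin n → ℤ) {f g : En n → ℝ≥0∞} (hf : Measurable f)
    (hg : Measurable g) :
    ∫⁻ x in {x | G.c 0 x = i}, g x * G.E v f x = ∫⁻ x in {x | G.c 0 x = i}, f x * G.E v g x := by
  classical
  set Z := {x | G.c 0 x = i} with hZ
  have hZm : MeasurableSet Z := G.measSet 0 i
  have hD : MeasurableSet {z : En n × En n | G.c v z.2 = G.c v z.1} :=
    measurableSet_eq_fun ((G.meas v).comp measurable_snd) ((G.meas v).comp measurable_fst)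
  have rep : ∀ (f : En n → ℝ≥0∞), ∀ x ∈ Z, G.E v f x =
      (2 : ℝ≥0∞) ^ (n * v) * ∫⁻ y in Z, (if G.c v y = G.c v x then 1 else 0) * f y := by
    intro f x hx
    unfold E
    congr 1
    have hsub : {y | G.c v y = G.c v x} ⊆ Z := by
      intro y hy
      have := G.nested_le (Nat.zero_le v) hy
      exact this.trans hx
    rw [← inter_eq_left.2 hsub, ← Measure.restrict_restrict (G.measSet v _),
      ← lintegral_indicator (G.measSet v _)]
    congr 1; ext y
    by_cases h : G.c v y = G.c v x <;> simp [indicator, h]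
  have hF : ∀ {f g : En n → ℝ≥0∞}, Measurable f → Measurable g →
      Measurable (fun z : En n × En n => g z.1 * ((2 : ℝ≥0∞) ^ (n * v) *
        ((if G.c v z.2 = G.c v z.1 then 1 else 0) * f z.2))) := by
    intro f g hf hg
    refine (hg.comp measurable_fst).mul (Measurable.const_mul ?_ _)
    exact (Measurable.ite hD measurable_const measurable_const).mul (hf.comp measurable_snd)
  have hind : ∀ x, Measurable (fun y => (if G.c v y = G.c v x then (1 : ℝ≥0∞) else 0)) := fun x =>
    Measurable.ite (G.measSet v _) measurable_const measurable_const
  have expand : ∀ {f g : En n → ℝ≥0∞}, Measurable f → Measurable g →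
      ∫⁻ x in Z, g x * G.E v f x = ∫⁻ x in Z, ∫⁻ y in Z, g x * ((2 : ℝ≥0∞) ^ (n * v) *
        ((if G.c v y = G.c v x then 1 else 0) * f y)) := by
    intro f g hf hg
    apply setLIntegral_congr_fun hZm
    intro x hx
    simp only
    rw [rep f x hx, lintegral_const_mul, lintegral_const_mul]
    · exact (hind x).mul hf
    · exact ((hind x).mul hf).const_mul _
  rw [expand hf hg, expand hg hf, lintegral_lintegral_swap (hF hf hg).aemeasurable]
  congr 1; ext x; congr 1; ext y
  by_cases h : G.c v x = G.c v y
  · simp [h]; ring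
  · have h' : ¬ G.c v y = G.c v x := fun e => h e.symm
    simp [h, h']

/-- comparability of `lamR` on cells -/
theorem lamR_le {v w : ℕ} {x y : En n} (h : G.c v x = G.c v y) :
    lamR w x ≤ (n + 1) * lamR w y := by
  have h0 := G.diam 0 x y (G.nested_le (Nat.zero_le v) h)
  simp at h0
  unfold lamR
  have h1 : ‖x‖ ≤ ‖x - y‖ + ‖y‖ := by simpa using norm_add_le (x - y) y
  have h2 := norm_nonneg y
  have h3 := Real.add_one_le_exp (1 : ℝ)
  have h4 : (0 : ℝ) ≤ n := Nat.cast_nonneg n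
  rw [mul_left_comm]
  gcongr
  nlinarith

end Grid


theorem le_of_le_half_add {I J : ℝ≥0∞} (hI : I ≠ ∞) (h : I ≤ I / 2 + J) : I ≤ 2 * J := by
  have h1 : I / 2 + I / 2 ≤ I / 2 + J := by rw [ENNReal.add_halves]; exact h
  have h2 : I / 2 ≤ J := (ENNReal.add_le_add_iff_left (by
    exact (ENNReal.div_lt_top hI (by norm_num)).ne)).1 h1
  rw [mul_comm]
  exact (ENNReal.div_le_iff (by norm_num) (by norm_num)).1 h2

theorem Grid.finite_int {n : ℕ} (G : Grid n) {p : En n → ℝ} {P K : ℝ} (hK : 0 ≤ K)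
    (hp : ∀ x, 1 ≤ p x ∧ p x ≤ P) (i : Fin n → ℤ) (N : ℕ) (F : En n → ℝ≥0∞)
    (hF : ∀ x, G.c 0 x = i → F x ≤ ENNReal.ofReal (lamR N x) ^ K) :
    ∫⁻ x in {x | G.c 0 x = i}, F x ^ p x ≠ ∞ := by
  by_cases hne : ∃ x0, G.c 0 x0 = i
  swap
  · have : {x | G.c 0 x = i} = ∅ := by
      ext x; simp; intro h; exact hne ⟨x, h⟩
    simp [this]
  obtain ⟨x0, hx0⟩ := hne
  have hb : ∀ x, G.c 0 x = i → F x ^ p x ≤ ENNReal.ofReal ((n + 1) * lamR N x0) ^ (K * P) := by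
    intro x hx
    have hl : lamR N x ≤ (n + 1) * lamR N x0 := G.lamR_le (hx.trans hx0.symm)
    have h1 : F x ≤ ENNReal.ofReal ((n + 1) * lamR N x0) ^ K :=
      (hF x hx).trans (by gcongr)
    calc F x ^ p x ≤ (ENNReal.ofReal ((n + 1) * lamR N x0) ^ K) ^ p x := by
          gcongr; linarith [(hp x).1]
      _ ≤ (ENNReal.ofReal ((n + 1) * lamR N x0) ^ K) ^ P := by
          apply ENNReal.rpow_le_rpow_of_exponent_le _ (hp x).2
          rw [← ENNReal.rpow_zero (x := ENNReal.ofReal ((n + 1) * lamR N x0))]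
          apply ENNReal.rpow_le_rpow_of_exponent_le _ hK
          rw [ENNReal.one_le_ofReal]
          exact (one_le_lamR N x).trans hl
      _ = _ := by rw [ENNReal.rpow_mul]
  have hP : 0 ≤ P := by linarith [(hp x0).1, (hp x0).2]
  refine ne_top_of_le_ne_top ?_ (setLIntegral_mono' (G.measSet 0 i) hb)
  rw [setLIntegral_const, ← hx0, G.vol]
  apply ENNReal.mul_ne_top
  · exact ENNReal.rpow_ne_top_of_nonneg (by positivity) ENNReal.ofReal_ne_top
  · simp

theorem Grid.dualDoob {n : ℕ} (G : Grid n) {p : En n → ℝ} (hpm : Measurable p) {P C0 K : ℝ}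
    (hK : 0 ≤ K) (hp : ∀ x, 1 ≤ p x ∧ p x ≤ P) (hLH : LHG G C0 p) :
    ∃ C : ℝ≥0∞, C ≠ ∞ ∧ ∀ (i : Fin n → ℤ) (N : ℕ) (a : ℕ → En n → ℝ≥0∞),
      (∀ v, Measurable (a v)) →
      (∀ v < N, ∀ x, G.c 0 x = i →
        ENNReal.ofReal (lamR v x) ^ (-K) ≤ ∑ w ∈ Finset.range (v + 1), G.E w (a w) x ∧
        ∑ w ∈ Finset.range (v + 1), G.E w (a w) x ≤ ENNReal.ofReal (lamR v x) ^ K) →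
      ∫⁻ x in {x | G.c 0 x = i}, (∑ w ∈ Finset.range N, G.E w (a w) x) ^ p x ≤
        C * ∫⁻ x in {x | G.c 0 x = i}, (∑ w ∈ Finset.range N, a w x) ^ p x := by
  set C1 : ℝ≥0∞ := ENNReal.ofReal (Real.exp (K * C0)) with hC1
  have hC1t : C1 ≠ ∞ := ENNReal.ofReal_ne_top
  have hC10 : C1 ≠ 0 := by simp [hC1, Real.exp_pos]
  have hP1 : 1 ≤ P := (hp 0).1.trans (hp 0).2
  set P' : ℝ≥0∞ := ENNReal.ofReal P with hP'
  have hP't : P' ≠ ∞ := ENNReal.ofReal_ne_top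
  have hP'1 : 1 ≤ P' := by rw [hP', ENNReal.one_le_ofReal]; exact hP1
  have hP'0 : P' ≠ 0 := by intro h; rw [h] at hP'1; simp at hP'1
  set D := P' * C1 with hD
  have hDt : D ≠ ∞ := ENNReal.mul_ne_top hP't hC1t
  have hD0 : D ≠ 0 := mul_ne_zero hP'0 hC10
  set k := 2 * D with hk
  have hk0 : k ≠ 0 := mul_ne_zero (by norm_num) hD0
  have hkt : k ≠ ∞ := ENNReal.mul_ne_top (by norm_num) hDt
  set k1 := max k 1 with hk1
  have hk1t : k1 ≠ ∞ := by simp [hk1, hkt]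
  refine ⟨2 * (D * k1 ^ P), ?_, ?_⟩
  · exact ENNReal.mul_ne_top (by norm_num) (ENNReal.mul_ne_top hDt
      (ENNReal.rpow_ne_top_of_nonneg (by linarith) hk1t))
  intro i N a ha hb
  rcases Nat.eq_zero_or_pos N with hN | hN
  · subst hN
    have : ∀ x, (0 : ℝ≥0∞) ^ p x = 0 := fun x => ENNReal.zero_rpow_of_pos (by linarith [(hp x).1])
    simp [this]
  set Z := {x | G.c 0 x = i} with hZ
  have hZm : MeasurableSet Z := G.measSet 0 i
  set A : ℕ → En n → ℝ≥0∞ := fun v x => ∑ w ∈ Finset.range (v + 1), G.E w (a w) x with hA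
  set F : En n → ℝ≥0∞ := fun x => ∑ w ∈ Finset.range N, G.E w (a w) x with hF
  set S : En n → ℝ≥0∞ := fun x => ∑ w ∈ Finset.range N, a w x with hS
  have hAm : ∀ v, Measurable (A v) := fun v =>
    Finset.measurable_sum _ (fun w _ => G.measurable_E w (a w))
  have hFm : Measurable F := Finset.measurable_sum _ (fun w _ => G.measurable_E w (a w))
  have hAF : ∀ v < N, ∀ x, A v x ≤ F x := fun v hv x =>
    Finset.sum_le_sum_of_subset (Finset.range_mono hv)
  have hApm : ∀ v, Measurable (fun x => A v x ^ (p x - 1)) := fun v =>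
    (hAm v).pow (hpm.sub_const 1)
  have hFin : ∫⁻ x in Z, F x ^ p x ≠ ∞ := by
    apply G.finite_int hK hp i (N - 1)
    intro x hx
    have := (hb (N - 1) (by omega) x hx).2
    rwa [Nat.sub_add_cancel hN] at this
  have step : ∀ v < N, ∫⁻ x in Z, A v x ^ (p x - 1) * G.E v (a v) x ≤
      ∫⁻ x in Z, C1 * (F x ^ (p x - 1) * a v x) := by
    intro v hv
    rw [G.E_adjoint v i (ha v) (hApm v)]
    apply setLIntegral_mono' hZm
    intro x hx
    have : G.E v (fun x => A v x ^ (p x - 1)) x ≤ C1 * F x ^ (p x - 1) := by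
      apply G.E_le_const
      intro y hy
      have hAy : A v y = A v x := by
        apply Finset.sum_congr rfl
        intro w hw
        exact G.E_congr_le (by simpa [Nat.lt_succ_iff] using hw) hy _
      rw [hAy]
      have hbx := hb v hv x hx
      calc A v x ^ (p y - 1) ≤ C1 * A v x ^ (p x - 1) := by
            apply aux_exchange (one_le_lamR v x) hK _ hbx.1 hbx.2
            have := hLH v x y hy.symm
            rw [abs_sub_comm] at this
            convert this using 3
            ring
        _ ≤ _ := by
          gcongr
          · linarith [(hp x).1]
          · exact hAF v hv x
    calc a v x * G.E v (fun x => A v x ^ (p x - 1)) x ≤ a v x * (C1 * F x ^ (p x - 1)) := by gcongr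
      _ = _ := by ring
  have main : ∫⁻ x in Z, F x ^ p x ≤ ∫⁻ x in Z, D * (F x ^ (p x - 1) * S x) := by
    calc ∫⁻ x in Z, F x ^ p x ≤ ∫⁻ x in Z, ∑ v ∈ Finset.range N,
          P' * (A v x ^ (p x - 1) * G.E v (a v) x) := by
          apply setLIntegral_mono' hZm
          intro x _
          refine (aux_pow_sum_le _ (hp x).1 N).trans ?_
          apply Finset.sum_le_sum
          intro v _
          rw [mul_assoc]
          gcongr
          exact ENNReal.ofReal_le_ofReal (hp x).2
      _ = ∑ v ∈ Finset.range N, P' * ∫⁻ x in Z, A v x ^ (p x - 1) * G.E v (a v) x := by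
          rw [lintegral_finsetSum]
          · apply Finset.sum_congr rfl
            intro v _
            rw [lintegral_const_mul]
            exact (hApm v).mul (G.measurable_E v _)
          · intro v _
            exact ((hApm v).mul (G.measurable_E v _)).const_mul _
      _ ≤ ∑ v ∈ Finset.range N, P' * ∫⁻ x in Z, C1 * (F x ^ (p x - 1) * a v x) := by
          apply Finset.sum_le_sum
          intro v hv
          gcongr 1
          exact step v (Finset.mem_range.1 hv)
      _ = ∫⁻ x in Z, D * (F x ^ (p x - 1) * S x) := by
          have hm : ∀ v, Measurable (fun x => F x ^ (p x - 1) * a v x) := fun v =>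
            (hFm.pow (hpm.sub_const 1)).mul (ha v)
          simp only [hS, Finset.mul_sum]
          rw [lintegral_finsetSum]
          · apply Finset.sum_congr rfl
            intro v _
            rw [lintegral_const_mul _ (hm v), lintegral_const_mul _ (hm v), hD, mul_assoc]
          · intro v _
            exact (hm v).const_mul _
  have abs1 : ∀ x, D * (F x ^ (p x - 1) * S x) ≤ F x ^ p x / 2 + D * k1 ^ P * S x ^ p x := by
    intro x
    have hab := aux_absorb (F x) (S x) k hk0 hkt (hp x).1
    calc D * (F x ^ (p x - 1) * S x) ≤ D * (F x ^ p x / k + k ^ (p x - 1) * S x ^ p x) := by gcongr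
      _ = F x ^ p x / 2 + D * k ^ (p x - 1) * S x ^ p x := by
          rw [mul_add, ← mul_assoc D (k ^ (p x - 1))]
          congr 1
          rw [hk, div_eq_mul_inv, div_eq_mul_inv, ENNReal.mul_inv (by simp) (by simp)]
          calc D * (F x ^ p x * (2⁻¹ * D⁻¹)) = (D * D⁻¹) * (F x ^ p x * 2⁻¹) := by ring
            _ = _ := by rw [ENNReal.mul_inv_cancel hD0 hDt, one_mul]
      _ ≤ _ := by
          gcongr
          calc k ^ (p x - 1) ≤ k1 ^ (p x - 1) := by
                gcongr
                · linarith [(hp x).1]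
                · exact le_max_left _ _
            _ ≤ k1 ^ P := by
                apply ENNReal.rpow_le_rpow_of_exponent_le (le_max_right _ _)
                linarith [(hp x).2]
  have fin : ∫⁻ x in Z, F x ^ p x ≤ (∫⁻ x in Z, F x ^ p x) / 2 +
      D * k1 ^ P * ∫⁻ x in Z, S x ^ p x := by
    refine main.trans ((lintegral_mono abs1).trans ?_)
    have hSm : Measurable S := Finset.measurable_sum _ (fun w _ => ha w)
    rw [lintegral_add_left ((hFm.pow hpm).div_const 2), lintegral_const_mul _ (hSm.pow hpm)]
    simp only [div_eq_mul_inv]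
    rw [lintegral_mul_const _ (hFm.pow hpm)]
  rw [mul_assoc]
  exact le_of_le_half_add hFin fin


/-- The integrable weight `(e + |x|)^{-(n+1)}`. -/
def om {n : ℕ} (x : En n) : ℝ≥0∞ := ENNReal.ofReal (lamR 0 x) ^ (-((n : ℝ) + 1))

theorem one_le_lam {n : ℕ} (v : ℕ) (x : En n) : 1 ≤ ENNReal.ofReal (lamR v x) := by
  rw [ENNReal.one_le_ofReal]; exact one_le_lamR v x

theorem two_le_lam {n : ℕ} (v : ℕ) (x : En n) : 2 ≤ ENNReal.ofReal (lamR v x) := by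
  rw [show (2 : ℝ≥0∞) = ENNReal.ofReal 2 by simp]
  apply ENNReal.ofReal_le_ofReal
  have := Real.add_one_le_exp (1 : ℝ)
  have := lamR_ge_one v x
  linarith

theorem om_le_one {n : ℕ} (x : En n) : om x ≤ 1 := by
  unfold om
  rw [ENNReal.rpow_neg, ENNReal.inv_le_one]
  exact ENNReal.one_le_rpow (one_le_lam 0 x) (by positivity)

theorem measurable_lamR {n : ℕ} (v : ℕ) : Measurable (fun x : En n => lamR v x) := by
  unfold lamR; fun_prop

theorem measurable_om {n : ℕ} : Measurable (om : En n → ℝ≥0∞) := by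
  unfold om
  exact (ENNReal.measurable_ofReal.comp (measurable_lamR 0)).pow_const _

theorem lam_eq {n : ℕ} (v : ℕ) (x : En n) :
    ENNReal.ofReal (lamR v x) = 2 ^ v * ENNReal.ofReal (lamR 0 x) := by
  have : lamR v x = 2 ^ v * lamR 0 x := by simp [lamR]
  rw [this, ENNReal.ofReal_mul (by positivity), ENNReal.ofReal_pow (by norm_num)]
  simp

theorem lam_mono {n : ℕ} {w v : ℕ} (h : w ≤ v) (x : En n) :
    ENNReal.ofReal (lamR w x) ≤ ENNReal.ofReal (lamR v x) := by
  rw [lam_eq w, lam_eq v]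
  gcongr
  norm_num

theorem Grid.lam_le_pow {n : ℕ} (G : Grid n) {v w : ℕ} {x y : En n} (h : G.c v x = G.c v y) :
    ENNReal.ofReal (lamR w x) ≤ ENNReal.ofReal (lamR w y) ^ ((n : ℝ) + 1) := by
  rw [ENNReal.ofReal_rpow_of_pos (by linarith [one_le_lamR w y])]
  apply ENNReal.ofReal_le_ofReal
  refine (G.lamR_le (w := w) h).trans ?_
  have h1 : (n : ℝ) + 1 ≤ lamR w y ^ (n : ℝ) := by
    calc (n : ℝ) + 1 ≤ Real.exp n := Real.add_one_le_exp _
      _ = Real.exp 1 ^ (n : ℝ) := by rw [← Real.exp_mul]; simp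
      _ ≤ _ := by
        apply Real.rpow_le_rpow (Real.exp_pos 1).le (lamR_ge_one w y) (Nat.cast_nonneg n)
  have h2 := one_le_lamR w y
  rw [Real.rpow_add_one (by linarith)]
  gcongr

theorem Grid.om_lower {n : ℕ} (G : Grid n) (v : ℕ) (x : En n) :
    ENNReal.ofReal (lamR v x) ^ (-(((n : ℝ) + 1) * (n + 1))) ≤ (2 ^ v)⁻¹ * G.E v om x := by
  have hl : ENNReal.ofReal (lamR 0 x) ^ (-(((n : ℝ) + 1) * (n + 1))) ≤ G.E v om x := by
    apply G.le_E_const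
    intro y hy
    unfold om
    have h1 := G.lam_le_pow (w := 0) hy
    rw [ENNReal.rpow_neg, ENNReal.rpow_neg]
    apply ENNReal.inv_le_inv.2
    rw [ENNReal.rpow_mul]
    gcongr
  have hK : (1 : ℝ) ≤ ((n : ℝ) + 1) * (n + 1) := by
    have : (0 : ℝ) ≤ n := Nat.cast_nonneg n
    nlinarith
  calc ENNReal.ofReal (lamR v x) ^ (-(((n : ℝ) + 1) * (n + 1)))
      ≤ (2 ^ v)⁻¹ * ENNReal.ofReal (lamR 0 x) ^ (-(((n : ℝ) + 1) * (n + 1))) := by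
        rw [lam_eq v, ENNReal.rpow_neg, ENNReal.rpow_neg, ← ENNReal.mul_inv (by simp) (by simp)]
        apply ENNReal.inv_le_inv.2
        rw [ENNReal.mul_rpow_of_nonneg _ _ (by linarith)]
        gcongr
        apply ENNReal.le_rpow_self_of_one_le _ hK
        exact one_le_pow₀ (by norm_num)
    _ ≤ _ := by gcongr

theorem sum_lam_bound {n : ℕ} {K : ℝ} (hK : 0 ≤ K) (x : En n) (e : ℕ → ℝ≥0∞) (v : ℕ)
    (h : ∀ w ≤ v, e w ≤ 2 * ENNReal.ofReal (lamR w x) ^ K) :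
    ∑ w ∈ Finset.range (v + 1), e w ≤ ENNReal.ofReal (lamR v x) ^ (K + 2) := by
  have h1 : ∑ w ∈ Finset.range (v + 1), e w ≤
      ∑ w ∈ Finset.range (v + 1), 2 * ENNReal.ofReal (lamR v x) ^ K := by
    apply Finset.sum_le_sum
    intro w hw
    have hwv : w ≤ v := by simpa [Nat.lt_succ_iff] using hw
    refine (h w hwv).trans ?_
    gcongr
    have := lam_mono hwv x
    rwa [ENNReal.ofReal_le_ofReal_iff (by linarith [one_le_lamR v x])] at this
  refine h1.trans ?_
  rw [Finset.sum_const, Finset.card_range, nsmul_eq_mul]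
  have h2 : ((v + 1 : ℕ) : ℝ≥0∞) ≤ ENNReal.ofReal (lamR v x) := by
    rw [lam_eq]
    calc ((v + 1 : ℕ) : ℝ≥0∞) ≤ ((2 ^ v : ℕ) : ℝ≥0∞) := by
          exact_mod_cast Nat.lt_two_pow_self
      _ = 2 ^ v * 1 := by simp
      _ ≤ _ := by gcongr; exact one_le_lam 0 x
  rw [ENNReal.rpow_add_of_nonneg _ _ hK (by norm_num)]
  calc ((v + 1 : ℕ) : ℝ≥0∞) * (2 * ENNReal.ofReal (lamR v x) ^ K)
      ≤ ENNReal.ofReal (lamR v x) * (ENNReal.ofReal (lamR v x) * ENNReal.ofReal (lamR v x) ^ K) := by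
        gcongr
        exact two_le_lam v x
    _ = _ := by
        rw [show (2 : ℝ) = ((2 : ℕ) : ℝ) by norm_num, ENNReal.rpow_natCast]; ring

theorem aux_add_pow_le (a b : ℝ≥0∞) {r R : ℝ} (hr : 0 ≤ r) (hR : r ≤ R) :
    (a + b) ^ r ≤ 2 ^ R * (a ^ r + b ^ r) := by
  have h2 : (2 : ℝ≥0∞) ^ r ≤ 2 ^ R := ENNReal.rpow_le_rpow_of_exponent_le (by norm_num) hR
  rcases le_total a b with h | h
  · calc (a + b) ^ r ≤ (2 * b) ^ r := by gcongr; rw [two_mul]; gcongr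
      _ = 2 ^ r * b ^ r := ENNReal.mul_rpow_of_nonneg _ _ hr
      _ ≤ _ := by gcongr; exact le_add_self
  · calc (a + b) ^ r ≤ (2 * a) ^ r := by gcongr; rw [two_mul]; gcongr
      _ = 2 ^ r * a ^ r := ENNReal.mul_rpow_of_nonneg _ _ hr
      _ ≤ _ := by gcongr; exact le_self_add

theorem aux_one_le_rpow {x : ℝ≥0∞} (hx : 1 ≤ x) {K : ℝ} (hK : 0 ≤ K) : 1 ≤ x ^ K := by
  calc (1 : ℝ≥0∞) = x ^ (0 : ℝ) := by simp
    _ ≤ _ := ENNReal.rpow_le_rpow_of_exponent_le hx hK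

theorem Grid.maxDoob {n : ℕ} (G : Grid n) {p : En n → ℝ} (hpm : Measurable p) {a P C0 K : ℝ}
    (hK : 0 ≤ K) (ha : 1 < a) (hp : ∀ x, a ≤ p x ∧ p x ≤ P) (hLH : LHG G C0 p) :
    ∃ C : ℝ≥0∞, C ≠ ∞ ∧ ∀ (i : Fin n → ℤ) (N : ℕ) (g : En n → ℝ≥0∞),
      Measurable g →
      (∀ v < N, ∀ x, G.c 0 x = i → G.E v g x ≤ ENNReal.ofReal (lamR v x) ^ K) →
      ∫⁻ x in {x | G.c 0 x = i}, ((Finset.range N).sup (fun v => G.E v g x)) ^ p x ≤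
        C * ((∫⁻ x in {x | G.c 0 x = i}, g x ^ p x) + (∫⁻ x in {x | G.c 0 x = i}, om x)) := by
  have hp1 : ∀ x, 0 < p x - 1 := fun x => by linarith [(hp x).1]
  have ha1 : 0 < a - 1 := by linarith
  set r : En n → ℝ := fun x => 1 + 1 / (p x - 1) with hr
  set R : ℝ := 1 + 1 / (a - 1) with hR
  have hrm : Measurable r := by
    simp only [hr]
    exact measurable_const.add (measurable_const.div (hpm.sub_const 1))
  have hrb : ∀ x, 1 ≤ r x ∧ r x ≤ R := by
    intro x
    refine ⟨by simp only [hr]; have := hp1 x; have : 0 < 1 / (p x - 1) := by positivity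
               linarith, ?_⟩
    simp only [hr, hR]
    gcongr
    exact (hp x).1
  have hconj : ∀ x, (p x).HolderConjugate (r x) := by
    intro x
    rw [Real.holderConjugate_iff]
    refine ⟨by linarith [hp1 x], ?_⟩
    have := hp1 x
    have h2 : 0 < p x := by linarith
    simp only [hr]
    field_simp
    ring
  have hrLH : LHG G (C0 / (a - 1) ^ 2) r := by
    intro v x y hxy
    have h1 := hLH v x y hxy
    have hx := hp1 x
    have hy := hp1 y
    have hlog : 0 ≤ Real.log (lamR v x) := Real.log_nonneg (one_le_lamR v x)
    have h2 : |r x - r y| ≤ |p x - p y| / (a - 1) ^ 2 := by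
      have : r x - r y = (p y - p x) / ((p x - 1) * (p y - 1)) := by
        simp only [hr]; field_simp; ring
      rw [this, abs_div, abs_sub_comm, abs_of_pos (mul_pos hx hy)]
      gcongr
      rw [sq]
      gcongr
      · exact (hp x).1
      · exact (hp y).1
    calc |r x - r y| * Real.log (lamR v x) ≤ |p x - p y| / (a - 1) ^ 2 * Real.log (lamR v x) := by
          gcongr
      _ = |p x - p y| * Real.log (lamR v x) / (a - 1) ^ 2 := by ring
      _ ≤ _ := by gcongr
  have hP0 : 0 ≤ P := by linarith [(hp 0).1, (hp 0).2]
  have hn0 : (0 : ℝ) ≤ n := Nat.cast_nonneg n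
  set K1 : ℝ := ((n : ℝ) + 1) * (K * P) with hK1
  have hK10 : 0 ≤ K1 := by positivity
  set K2 : ℝ := max (K1 + 2) (((n : ℝ) + 1) * (n + 1)) with hK2
  have hK20 : 0 ≤ K2 := le_max_of_le_left (by linarith)
  obtain ⟨C3, hC3t, hC3⟩ := G.dualDoob hrm hK20 hrb hrLH
  set R2 : ℝ≥0∞ := 2 ^ R with hR2
  have hR0 : 0 ≤ R := by positivity
  have hR2t : R2 ≠ ∞ := ENNReal.rpow_ne_top_of_nonneg hR0 (by norm_num)
  set k : ℝ≥0∞ := 2 * (C3 * R2) + 1 with hk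
  have hkt : k ≠ ∞ := by
    simp only [hk]; exact ENNReal.add_ne_top.2 ⟨ENNReal.mul_ne_top (by norm_num)
      (ENNReal.mul_ne_top hC3t hR2t), by norm_num⟩
  have hk1 : 1 ≤ k := by simp [hk]
  have hk0 : k ≠ 0 := by intro h; rw [h] at hk1; simp at hk1
  refine ⟨2 * (k ^ P + R2), ?_, ?_⟩
  · exact ENNReal.mul_ne_top (by norm_num) (ENNReal.add_ne_top.2
      ⟨ENNReal.rpow_ne_top_of_nonneg hP0 hkt, hR2t⟩)
  intro i N g hg hb
  set Z := {x | G.c 0 x = i} with hZ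
  have hZm : MeasurableSet Z := G.measSet 0 i
  rcases Nat.eq_zero_or_pos N with hN | hN
  · subst hN
    have : ∀ x, (0 : ℝ≥0∞) ^ p x = 0 := fun x => ENNReal.zero_rpow_of_pos (by linarith [hp1 x])
    simp [this]
  set M : En n → ℝ≥0∞ := fun x => (Finset.range N).sup (fun v => G.E v g x) with hM
  have hMm : Measurable M := by
    simp only [hM, Finset.sup_eq_iSup]
    exact Measurable.iSup fun v => Measurable.iSup fun _ => G.measurable_E v g
  have hex : ∀ x, ∃ v, v < N ∧ G.E v g x = M x := by
    intro x
    obtain ⟨v, hv, he⟩ := Finset.exists_mem_eq_sup (Finset.range N) ⟨0, by simpa using hN⟩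
      (fun v => G.E v g x)
    exact ⟨v, Finset.mem_range.1 hv, he.symm⟩
  classical
  set idx : En n → ℕ := fun x => Nat.find (hex x) with hidx
  have hidxm : Measurable idx := by
    apply measurable_find
    intro v
    by_cases hv : v < N
    · simp only [hv, true_and]
      exact measurableSet_eq_fun (G.measurable_E v g) hMm
    · simp [hv]
  have hidx1 : ∀ x, idx x < N := fun x => (Nat.find_spec (hex x)).1
  have hidx2 : ∀ x, G.E (idx x) g x = M x := fun x => (Nat.find_spec (hex x)).2
  set bb : ℕ → En n → ℝ≥0∞ := fun v x => if v = idx x then M x ^ (p x - 1) else 0 with hbb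
  have hbbm : ∀ v, Measurable (bb v) := by
    intro v
    refine Measurable.ite ?_ (hMm.pow (hpm.sub_const 1)) measurable_const
    exact measurableSet_eq_fun measurable_const hidxm
  set b' : ℕ → En n → ℝ≥0∞ := fun v x => bb v x + (2 ^ v)⁻¹ * om x with hb'
  have hb'm : ∀ v, Measurable (b' v) := fun v => (hbbm v).add (measurable_om.const_mul _)
  have hsumbb : ∀ x, ∑ v ∈ Finset.range N, bb v x = M x ^ (p x - 1) := by
    intro x
    simp only [hbb]
    rw [Finset.sum_ite_eq' (Finset.range N) (idx x)]
    simp [hidx1 x]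
  have hsumb' : ∀ x, ∑ v ∈ Finset.range N, b' v x ≤ M x ^ (p x - 1) + 2 * om x := by
    intro x
    simp only [hb']
    rw [Finset.sum_add_distrib, hsumbb, ← Finset.sum_mul]
    gcongr
    calc ∑ v ∈ Finset.range N, ((2 : ℝ≥0∞) ^ v)⁻¹ ≤ ∑' v : ℕ, ((2 : ℝ≥0∞) ^ v)⁻¹ :=
          ENNReal.sum_le_tsum _
      _ = 2 := by
        rw [show (fun v : ℕ => ((2 : ℝ≥0∞) ^ v)⁻¹) = fun v => (2 : ℝ≥0∞)⁻¹ ^ v from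
          funext fun v => ENNReal.inv_pow.symm ▸ rfl]
        exact ENNReal.tsum_geometric_two
  have hEb : ∀ v, ∀ x, G.E v (b' v) x = G.E v (bb v) x + (2 ^ v)⁻¹ * G.E v om x := by
    intro v x
    simp only [hb']
    rw [G.E_add (hbbm v), G.E_const_mul measurable_om]
  have hbnd : ∀ v < N, ∀ x, G.c 0 x = i →
        ENNReal.ofReal (lamR v x) ^ (-K2) ≤ ∑ w ∈ Finset.range (v + 1), G.E w (b' w) x ∧
        ∑ w ∈ Finset.range (v + 1), G.E w (b' w) x ≤ ENNReal.ofReal (lamR v x) ^ K2 := by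
    intro v hv x hx
    constructor
    · calc ENNReal.ofReal (lamR v x) ^ (-K2) ≤
            ENNReal.ofReal (lamR v x) ^ (-(((n : ℝ) + 1) * (n + 1))) := by
            apply ENNReal.rpow_le_rpow_of_exponent_le (one_le_lam v x)
            exact neg_le_neg (le_max_right _ _)
        _ ≤ (2 ^ v)⁻¹ * G.E v om x := G.om_lower v x
        _ ≤ G.E v (b' v) x := by rw [hEb]; exact le_add_self
        _ ≤ _ := Finset.single_le_sum (f := fun w => G.E w (b' w) x) (fun _ _ => zero_le)
            (by simp)
    · refine (sum_lam_bound hK10 x _ v ?_).trans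
        (ENNReal.rpow_le_rpow_of_exponent_le (one_le_lam v x) (le_max_left _ _))
      intro w hw
      have h1 : G.E w (bb w) x ≤ ENNReal.ofReal (lamR w x) ^ K1 := by
        apply G.E_le_const
        intro y hy
        simp only [hbb]
        split_ifs with h
        · have hy0 : G.c 0 y = i := (G.nested_le (Nat.zero_le w) hy).trans hx
          have hMy : M y ≤ ENNReal.ofReal (lamR w y) ^ K := by
            rw [← hidx2 y, ← h]; exact hb w (lt_of_le_of_lt hw hv) y hy0
          calc M y ^ (p y - 1) ≤ (ENNReal.ofReal (lamR w y) ^ K) ^ (p y - 1) := by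
                gcongr
                exact (hp1 y).le
            _ ≤ (ENNReal.ofReal (lamR w y) ^ K) ^ P := by
                apply ENNReal.rpow_le_rpow_of_exponent_le _ (by linarith [(hp y).2])
                exact aux_one_le_rpow (one_le_lam w y) hK
            _ = ENNReal.ofReal (lamR w y) ^ (K * P) := by rw [ENNReal.rpow_mul]
            _ ≤ (ENNReal.ofReal (lamR w x) ^ ((n : ℝ) + 1)) ^ (K * P) := by
                gcongr
                exact G.lam_le_pow hy
            _ = _ := by rw [← ENNReal.rpow_mul]
        · exact zero_le
      have h2 : (2 ^ w)⁻¹ * G.E w om x ≤ 1 := by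
        calc (2 ^ w)⁻¹ * G.E w om x ≤ 1 * 1 := by
              gcongr
              · rw [ENNReal.inv_le_one]; exact one_le_pow₀ (by norm_num)
              · exact G.E_le_const (fun y _ => om_le_one y)
          _ = 1 := one_mul 1
      rw [hEb, two_mul]
      gcongr
      exact h2.trans (aux_one_le_rpow (one_le_lam w x) hK10)
  have hD := hC3 i N b' hb'm hbnd
  set H : En n → ℝ≥0∞ := fun x => ∑ w ∈ Finset.range N, G.E w (b' w) x with hH
  have hHm : Measurable H := Finset.measurable_sum _ (fun w _ => G.measurable_E w _)
  have e1 : ∫⁻ x in Z, M x ^ p x ≤ ∫⁻ x in Z, g x * H x := by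
    calc ∫⁻ x in Z, M x ^ p x = ∫⁻ x in Z, ∑ v ∈ Finset.range N, bb v x * G.E v g x := by
          congr 1; ext x
          simp only [hbb, ite_mul, zero_mul]
          rw [Finset.sum_ite_eq' (Finset.range N) (idx x)]
          simp only [Finset.mem_range, hidx1 x, if_true, hidx2 x]
          rw [aux_rpow_sub_mul _ (by linarith [hp1 x])]
      _ = ∑ v ∈ Finset.range N, ∫⁻ x in Z, bb v x * G.E v g x := by
          rw [lintegral_finsetSum]
          intro v _
          exact (hbbm v).mul (G.measurable_E v g)
      _ = ∑ v ∈ Finset.range N, ∫⁻ x in Z, g x * G.E v (bb v) x := by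
          apply Finset.sum_congr rfl
          intro v _
          exact G.E_adjoint v i hg (hbbm v)
      _ = ∫⁻ x in Z, ∑ v ∈ Finset.range N, g x * G.E v (bb v) x := by
          rw [lintegral_finsetSum]
          intro v _
          exact hg.mul (G.measurable_E v _)
      _ ≤ _ := by
          apply lintegral_mono
          intro x
          simp only [hH]
          rw [Finset.mul_sum]
          apply Finset.sum_le_sum
          intro v _
          gcongr
          rw [hEb]; exact le_self_add
  have e2 : ∀ x, g x * H x ≤ k ^ P * g x ^ p x + k⁻¹ * H x ^ r x := by
    intro x
    have hy := ENNReal.young_inequality (k * g x) (k⁻¹ * H x) (hconj x)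
    have hpx : 1 ≤ ENNReal.ofReal (p x) := by rw [ENNReal.one_le_ofReal]; linarith [hp1 x]
    have hrx : 1 ≤ ENNReal.ofReal (r x) := by rw [ENNReal.one_le_ofReal]; exact (hrb x).1
    calc g x * H x = (k * k⁻¹) * (g x * H x) := by rw [ENNReal.mul_inv_cancel hk0 hkt, one_mul]
      _ = k * g x * (k⁻¹ * H x) := by ring
      _ ≤ _ := hy
      _ ≤ (k * g x) ^ p x + (k⁻¹ * H x) ^ r x := by
          gcongr
          · exact ENNReal.div_le_of_le_mul (le_mul_of_one_le_right zero_le hpx)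
          · exact ENNReal.div_le_of_le_mul (le_mul_of_one_le_right zero_le hrx)
      _ ≤ _ := by
          rw [ENNReal.mul_rpow_of_nonneg _ _ (by linarith [hp1 x]),
            ENNReal.mul_rpow_of_nonneg _ _ (by linarith [(hrb x).1])]
          gcongr
          · exact (hp x).2
          · exact ENNReal.rpow_le_self_of_le_one (ENNReal.inv_le_one.2 hk1) (hrb x).1
  have e3 : ∀ x, (∑ v ∈ Finset.range N, b' v x) ^ r x ≤ R2 * (M x ^ p x + R2 * om x) := by
    intro x
    have hr0 : 0 ≤ r x := by linarith [(hrb x).1]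
    calc (∑ v ∈ Finset.range N, b' v x) ^ r x ≤ (M x ^ (p x - 1) + 2 * om x) ^ r x := by
          gcongr; exact hsumb' x
      _ ≤ R2 * ((M x ^ (p x - 1)) ^ r x + (2 * om x) ^ r x) := aux_add_pow_le _ _ hr0 (hrb x).2
      _ ≤ _ := by
          have hpr : (p x - 1) * r x = p x := by
            simp only [hr]; have := (hp1 x).ne'; field_simp; ring
          rw [← ENNReal.rpow_mul, hpr, ENNReal.mul_rpow_of_nonneg _ _ hr0]
          gcongr
          · exact ENNReal.rpow_le_rpow_of_exponent_le (by norm_num) (hrb x).2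
          · exact ENNReal.rpow_le_self_of_le_one (om_le_one x) (hrb x).1
  have hFin : ∫⁻ x in Z, M x ^ p x ≠ ∞ := by
    apply G.finite_int hK (fun x => ⟨by linarith [hp1 x], (hp x).2⟩) i N
    intro x hx
    apply Finset.sup_le
    intro v hv
    have hv' := Finset.mem_range.1 hv
    refine (hb v hv' x hx).trans ?_
    have := lam_mono hv'.le x
    exact ENNReal.rpow_le_rpow this hK
  have hMpm : Measurable (fun x => M x ^ p x) := hMm.pow hpm
  have kk : k⁻¹ * (C3 * R2) ≤ 1 / 2 := by
    rw [mul_comm, ← div_eq_mul_inv]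
    apply ENNReal.div_le_of_le_mul
    calc C3 * R2 = 1 / 2 * (2 * (C3 * R2)) := by
          rw [← mul_assoc, ENNReal.div_mul_cancel (by norm_num) (by norm_num), one_mul]
      _ ≤ _ := by gcongr; simp [hk]
  set gi := ∫⁻ x in Z, g x ^ p x with hgi
  set oi := ∫⁻ x in Z, om x with hoi
  set mi := ∫⁻ x in Z, M x ^ p x with hmi
  have fin : mi ≤ mi / 2 +
      (k ^ P + R2) * (gi + oi) := by
    calc mi ≤ ∫⁻ x in Z, (k ^ P * g x ^ p x + k⁻¹ * H x ^ r x) :=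
          e1.trans (lintegral_mono e2)
      _ = k ^ P * gi + k⁻¹ * ∫⁻ x in Z, H x ^ r x := by
          rw [lintegral_add_left ((hg.pow hpm).const_mul _), lintegral_const_mul _ (hg.pow hpm),
            lintegral_const_mul _ (hHm.pow hrm)]
      _ ≤ k ^ P * gi + k⁻¹ * (C3 * (∫⁻ x in Z, R2 * (M x ^ p x + R2 * om x))) := by
          gcongr
          refine hD.trans ?_
          gcongr with x
          exact e3 x
      _ = k ^ P * gi +
          (k⁻¹ * (C3 * R2)) * (mi + R2 * oi) := by
          rw [lintegral_const_mul' _ _ hR2t,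
            lintegral_add_left hMpm, lintegral_const_mul _ measurable_om]
          ring
      _ ≤ k ^ P * gi +
          (1 / 2) * (mi + R2 * oi) := by gcongr
      _ = mi / 2 + (k ^ P * gi +
          (1 / 2) * R2 * oi) := by
          rw [div_eq_mul_inv, div_eq_mul_inv]; ring
      _ ≤ _ := by
          gcongr 1
          rw [mul_add]
          gcongr
          · exact le_self_add
          · calc (1 / 2) * R2 ≤ 1 * R2 := by
                  gcongr
                  exact ENNReal.half_le_self
              _ ≤ _ := by rw [one_mul]; exact le_add_self
  rw [mul_assoc]
  exact le_of_le_half_add hFin fin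


theorem om_int {n : ℕ} : ∫⁻ x : En n, om x ≠ ∞ := by
  have h1 : (Module.finrank ℝ (En n) : ℝ) < (n : ℝ) + 1 := by simp
  have h := finite_integral_one_add_norm (μ := (volume : Measure (En n))) h1
  refine ne_top_of_le_ne_top h.ne (lintegral_mono fun x => ?_)
  unfold om
  have h0 : 0 < 1 + ‖x‖ := by positivity
  rw [← ENNReal.ofReal_rpow_of_pos h0, ENNReal.rpow_neg, ENNReal.rpow_neg]
  apply ENNReal.inv_le_inv.2
  gcongr
  simp only [lamR, pow_zero, one_mul]
  have := Real.add_one_le_exp (1 : ℝ)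
  linarith

theorem om_pos {n : ℕ} (x : En n) : om x ≠ 0 := by
  unfold om
  intro h
  rw [ENNReal.rpow_eq_zero_iff] at h
  rcases h with ⟨h, _⟩ | ⟨h, _⟩
  · have := one_le_lam 0 x
    rw [h] at this; simp at this
  · exact ENNReal.ofReal_ne_top h

theorem sum_geom_le (N : ℕ) : ∑ v ∈ Finset.range N, ((2 : ℝ≥0∞) ^ v)⁻¹ ≤ 2 := by
  calc ∑ v ∈ Finset.range N, ((2 : ℝ≥0∞) ^ v)⁻¹ ≤ ∑' v : ℕ, ((2 : ℝ≥0∞) ^ v)⁻¹ :=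
        ENNReal.sum_le_tsum _
    _ = 2 := by
      rw [show (fun v : ℕ => ((2 : ℝ≥0∞) ^ v)⁻¹) = fun v => (2 : ℝ≥0∞)⁻¹ ^ v from
        funext fun v => ENNReal.inv_pow.symm ▸ rfl]
      exact ENNReal.tsum_geometric_two

theorem aux_interp (x y : ℝ≥0∞) {t : ℝ} (h0 : 0 ≤ t) (h1 : t ≤ 1) :
    x ^ t * y ^ (1 - t) ≤ x + y := by
  have key : ∀ m : ℝ≥0∞, x ≤ m → y ≤ m → x ^ t * y ^ (1 - t) ≤ m := by
    intro m hx hy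
    calc x ^ t * y ^ (1 - t) ≤ m ^ t * m ^ (1 - t) := by
          gcongr
      _ = m := by
          rw [← ENNReal.rpow_add_of_nonneg _ _ h0 (by linarith)]; simp
  exact key _ le_self_add le_add_self

/-- pointwise bound used in the dyadic vector-valued estimate -/
theorem aux_pt (f a s σ : ℝ≥0∞) {q : ℝ} (hq : 1 ≤ q) (hs0 : s ≠ 0) (hs : s ≠ ∞) (hσ0 : σ ≠ 0)
    (hσ : σ ≠ ∞) (h : f ^ q * s ^ (1 - q) ≤ a) : f ≤ σ ^ (-(1 / q)) * (σ * a + s) := by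
  have hq0 : 0 < q := by linarith
  have hq1 : 1 / q ≤ 1 := by rw [div_le_one hq0]; exact hq
  calc f = (f ^ q * s ^ (1 - q)) ^ (1 / q) * s ^ (1 - 1 / q) := by
        rw [ENNReal.mul_rpow_of_nonneg _ _ (by positivity), ← ENNReal.rpow_mul,
          ← ENNReal.rpow_mul, mul_assoc, ← ENNReal.rpow_add _ _ hs0 hs]
        have e1 : q * (1 / q) = 1 := by field_simp
        have e2 : (1 - q) * (1 / q) + (1 - 1 / q) = 0 := by field_simp; ring
        rw [e1, e2]; simp
    _ ≤ a ^ (1 / q) * s ^ (1 - 1 / q) := by gcongr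
    _ = σ ^ (-(1 / q)) * ((σ * a) ^ (1 / q) * s ^ (1 - 1 / q)) := by
        rw [ENNReal.mul_rpow_of_nonneg _ _ (by positivity), ← mul_assoc, ← mul_assoc,
          ← ENNReal.rpow_add _ _ hσ0 hσ]
        simp
    _ ≤ _ := by
        gcongr
        exact aux_interp _ _ (by positivity) hq1

theorem Grid.lintegral_cells {n : ℕ} (G : Grid n) (f : En n → ℝ≥0∞) :
    ∫⁻ x, f x = ∑' i : Fin n → ℤ, ∫⁻ x in {x | G.c 0 x = i}, f x := by
  rw [← lintegral_iUnion (fun i => G.measSet 0 i)]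
  · have : (⋃ i, {x | G.c 0 x = i}) = univ := by ext x; simp
    rw [this]; simp
  · intro i j hij
    rw [Function.onFun, Set.disjoint_left]
    intro x hx hy
    exact hij (hx.symm.trans hy)

theorem aux_two_pow_bound (D : ℝ≥0∞) (hD : D ≠ ∞) : ∃ m : ℕ, D ≤ 2 ^ m := by
  obtain ⟨m, hm⟩ := ENNReal.exists_nat_gt hD
  refine ⟨m, hm.le.trans ?_⟩
  have : m ≤ 2 ^ m := Nat.lt_two_pow_self.le
  exact_mod_cast this

theorem Grid.E_le_of_modular {n : ℕ} (G : Grid n) {p : En n → ℝ} (hp : ∀ x, 1 ≤ p x)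
    {g : En n → ℝ≥0∞} {D : ℝ≥0∞} (hg : ∫⁻ x, g x ^ p x ≤ D) (v : ℕ)
    (x : En n) : G.E v g x ≤ 2 ^ (n * v) * (1 + D) := by
  calc G.E v g x ≤ (2 : ℝ≥0∞) ^ (n * v) * ∫⁻ y in {y | G.c v y = G.c v x}, (1 + g y ^ p y) := by
        unfold Grid.E
        gcongr with y
        rcases le_total (g y) 1 with h | h
        · exact h.trans le_self_add
        · exact (ENNReal.le_rpow_self_of_one_le h (hp y)).trans le_add_self
    _ = (2 : ℝ≥0∞) ^ (n * v) * (((2 : ℝ≥0∞) ^ (n * v))⁻¹ +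
          ∫⁻ y in {y | G.c v y = G.c v x}, g y ^ p y) := by
        rw [lintegral_add_left measurable_const, lintegral_const, Measure.restrict_apply_univ,
          G.vol, one_mul]
    _ ≤ (2 : ℝ≥0∞) ^ (n * v) * (1 + D) := by
        gcongr
        · rw [ENNReal.inv_le_one]; exact one_le_pow₀ (by norm_num)
        · exact (setLIntegral_le_lintegral _ _).trans hg

theorem lam_ge_two_pow {n : ℕ} (v : ℕ) (x : En n) : (2 : ℝ≥0∞) ^ v ≤ ENNReal.ofReal (lamR v x) := by
  rw [lam_eq]; exact le_mul_of_one_le_right zero_le (one_le_lam 0 x)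

theorem lam_absorb {n : ℕ} (v : ℕ) (x : En n) (m : ℕ) :
    (2 : ℝ≥0∞) ^ (n * v) * 2 ^ m ≤ ENNReal.ofReal (lamR v x) ^ ((n : ℝ) + m) := by
  rw [ENNReal.rpow_add_of_nonneg _ _ (by positivity) (by positivity), ENNReal.rpow_natCast,
    ENNReal.rpow_natCast, mul_comm n v, pow_mul]
  exact mul_le_mul' (pow_le_pow_left₀ zero_le (lam_ge_two_pow v x) n)
    (pow_le_pow_left₀ zero_le (two_le_lam v x) m)


theorem Grid.E_mono_ae' {n : ℕ} (G : Grid n) {v : ℕ} {x : En n} {f g : En n → ℝ≥0∞}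
    (h : ∀ᵐ y, G.c v y = G.c v x → f y ≤ g y) : G.E v f x ≤ G.E v g x := by
  unfold Grid.E
  gcongr 1
  exact setLIntegral_mono_ae' (G.measSet v _) h

/-- Pointwise estimate: the averaged sequence is controlled by two scalar-type averages. -/
theorem Grid.E_interp {n : ℕ} (G : Grid n) {q : En n → ℝ} {K C1 : ℝ}
    (hK : 0 ≤ K) (hq : ∀ x, 1 ≤ q x) (hLH : LHG G C1 (fun x => 1 / q x))
    (v : ℕ) (x : En n) {f a s : En n → ℝ≥0∞} (ham : Measurable a) (hsm : Measurable s)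
    (hs0 : ∀ y, s y ≠ 0) (hst : ∀ᵐ y, s y ≠ ∞)
    (hfa : ∀ y, f y ^ q y * s y ^ (1 - q y) ≤ a y)
    (hA1 : ENNReal.ofReal (lamR v x) ^ (-K) ≤ G.E v a x)
    (hA2 : G.E v a x ≤ ENNReal.ofReal (lamR v x) ^ K)
    (hB1 : ENNReal.ofReal (lamR v x) ^ (-K) ≤ G.E v s x)
    (hB2 : G.E v s x ≤ ENNReal.ofReal (lamR v x) ^ K) :
    G.E v f x ≤ (2 * ENNReal.ofReal (Real.exp (2 * K * C1))) *
      (G.E v a x ^ (1 / q x) * G.E v s x ^ (1 - 1 / q x)) := by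
  set A := G.E v a x with hA
  set B := G.E v s x with hB
  set l := ENNReal.ofReal (lamR v x) with hl
  have hl1 : 1 ≤ l := one_le_lam v x
  have hl0 : l ≠ 0 := by intro h; rw [h] at hl1; simp at hl1
  have hlt : l ≠ ∞ := ENNReal.ofReal_ne_top
  have hlK0 : l ^ (-K) ≠ 0 := by
    intro h
    rw [ENNReal.rpow_eq_zero_iff] at h
    rcases h with ⟨h, _⟩ | ⟨h, _⟩
    · exact hl0 h
    · exact hlt h
  have hlKt : l ^ K ≠ ∞ := ENNReal.rpow_ne_top_of_nonneg hK hlt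
  have hA0 : A ≠ 0 := fun h => hlK0 (le_antisymm (h ▸ hA1) zero_le)
  have hB0 : B ≠ 0 := fun h => hlK0 (le_antisymm (h ▸ hB1) zero_le)
  have hAt : A ≠ ∞ := ne_top_of_le_ne_top hlKt hA2
  have hBt : B ≠ ∞ := ne_top_of_le_ne_top hlKt hB2
  set σ := B / A with hσ
  have hσ0 : σ ≠ 0 := (ENNReal.div_pos hB0 hAt).ne'
  have hσt : σ ≠ ∞ := ENNReal.div_ne_top hBt hA0
  have hσ1 : l ^ (-(2 * K)) ≤ σ := by
    calc l ^ (-(2 * K)) = l ^ (-K) / l ^ K := by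
          rw [div_eq_mul_inv, ← ENNReal.rpow_neg, ← ENNReal.rpow_add _ _ hl0 hlt]
          congr 1; ring
      _ ≤ σ := ENNReal.div_le_div hB1 hA2
  have hσ2 : σ ≤ l ^ (2 * K) := by
    calc σ ≤ l ^ K / l ^ (-K) := ENNReal.div_le_div hB2 hA1
      _ = l ^ (2 * K) := by
          rw [div_eq_mul_inv, ← ENNReal.rpow_neg, ← ENNReal.rpow_add _ _ hl0 hlt]
          congr 1; ring
  set C := ENNReal.ofReal (Real.exp (2 * K * C1)) with hC
  have hx : 1 / q x ≤ 1 := by rw [div_le_one (by linarith [hq x])]; exact hq x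
  calc G.E v f x ≤ G.E v (fun y => C * σ ^ (-(1 / q x)) * (σ * a y + s y)) x := by
        apply G.E_mono_ae'
        filter_upwards [hst] with y hy hyx
        calc f y ≤ σ ^ (-(1 / q y)) * (σ * a y + s y) :=
              aux_pt _ _ _ _ (hq y) (hs0 y) hy hσ0 hσt (hfa y)
          _ ≤ (C * σ ^ (-(1 / q x))) * (σ * a y + s y) := by
              gcongr
              refine aux_exchange (one_le_lamR v x) (by positivity) ?_ hσ1 hσ2
              have := hLH v x y hyx.symm
              rwa [show -(1 / q y) - -(1 / q x) = 1 / q x - 1 / q y by ring]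
    _ = C * σ ^ (-(1 / q x)) * (σ * A + B) := by
        rw [G.E_const_mul (f := fun y => σ * a y + s y) ((ham.const_mul σ).add hsm), G.E_add (ham.const_mul σ),
          G.E_const_mul ham]
    _ = C * σ ^ (-(1 / q x)) * (2 * B) := by
        rw [hσ, ENNReal.div_mul_cancel hA0 hAt, two_mul]
    _ = (2 * C) * (σ ^ (-(1 / q x)) * B) := by ring
    _ = _ := by
        congr 1
        rw [ENNReal.rpow_neg, ← ENNReal.inv_rpow, hσ, ENNReal.inv_div (Or.inl hAt) (Or.inl hA0),
          div_eq_mul_inv, ENNReal.mul_rpow_of_nonneg _ _ (by have := hq x; positivity), mul_assoc,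
          ENNReal.inv_rpow, ← ENNReal.rpow_neg]
        congr 1
        nth_rewrite 2 [← ENNReal.rpow_one B]
        rw [← ENNReal.rpow_add _ _ hB0 hBt]
        congr 1; ring

theorem Grid.main {n : ℕ} (G : Grid n) {p q : En n → ℝ} (hpm : Measurable p) (hqm : Measurable q)
    {a P Q C0 C1 : ℝ} (ha : 1 < a) (hp : ∀ x, a ≤ p x ∧ p x ≤ P)
    (hq : ∀ x, 1 ≤ q x ∧ q x ≤ Q) (hLH : LHG G C0 p) (hLHq : LHG G C1 (fun x => 1 / q x)) :
    ∃ C : ℝ≥0∞, C ≠ ∞ ∧ ∀ f : ℕ → En n → ℝ≥0∞, (∀ v, Measurable (f v)) →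
      ∫⁻ x, ((∑' v, f v x ^ q x) ^ (1 / q x)) ^ p x ≤ 1 →
      ∫⁻ x, ((∑' v, G.E v (f v) x ^ q x) ^ (1 / q x)) ^ p x ≤ C := by
  have hp1 : ∀ x, 1 ≤ p x := fun x => by linarith [(hp x).1]
  have hP1 : 1 ≤ P := (hp1 0).trans (hp 0).2
  have hP0 : 0 ≤ P := by linarith
  set oi : ℝ≥0∞ := ∫⁻ x : En n, om x with hoi
  have hoit : oi ≠ ∞ := om_int
  set D : ℝ≥0∞ := 2 ^ P * (1 + oi) with hD
  have hDt : D ≠ ∞ := ENNReal.mul_ne_top (ENNReal.rpow_ne_top_of_nonneg hP0 (by norm_num))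
    (ENNReal.add_ne_top.2 ⟨by norm_num, hoit⟩)
  obtain ⟨m, hm⟩ := aux_two_pow_bound (3 * (1 + D)) (ENNReal.mul_ne_top (by norm_num)
    (ENNReal.add_ne_top.2 ⟨by norm_num, hDt⟩))
  set K0 : ℝ := (n : ℝ) + m with hK0
  have hK00 : 0 ≤ K0 := by positivity
  set K : ℝ := max (K0 + 2) (((n : ℝ) + 1) * (n + 1)) with hK
  have hK1 : K0 + 2 ≤ K := le_max_left _ _
  have hK2 : ((n : ℝ) + 1) * (n + 1) ≤ K := le_max_right _ _
  have hKnn : 0 ≤ K := by linarith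
  obtain ⟨Cd, hCdt, hCd⟩ := G.dualDoob hpm hKnn (fun x => ⟨hp1 x, (hp x).2⟩) hLH
  obtain ⟨Cm, hCmt, hCm⟩ := G.maxDoob hpm hKnn ha hp hLH
  set C2 : ℝ≥0∞ := 2 * ENNReal.ofReal (Real.exp (2 * K * C1)) + 1 with hC2
  have hC2t : C2 ≠ ∞ := ENNReal.add_ne_top.2
    ⟨ENNReal.mul_ne_top (by norm_num) ENNReal.ofReal_ne_top, by norm_num⟩
  have hC21 : 1 ≤ C2 := le_add_self
  refine ⟨C2 ^ P * (2 ^ P * (Cd * (3 ^ P * D) + Cm * (D + oi))), ?_, ?_⟩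
  · have h3 : (3 : ℝ≥0∞) ^ P ≠ ∞ := ENNReal.rpow_ne_top_of_nonneg hP0 (by norm_num)
    have h2 : (2 : ℝ≥0∞) ^ P ≠ ∞ := ENNReal.rpow_ne_top_of_nonneg hP0 (by norm_num)
    have h4 : C2 ^ P ≠ ∞ := ENNReal.rpow_ne_top_of_nonneg hP0 hC2t
    exact ENNReal.mul_ne_top h4 (ENNReal.mul_ne_top h2 (ENNReal.add_ne_top.2
      ⟨ENNReal.mul_ne_top hCdt (ENNReal.mul_ne_top h3 hDt),
       ENNReal.mul_ne_top hCmt (ENNReal.add_ne_top.2 ⟨hDt, hoit⟩)⟩))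
  intro f hf hmod
  have hq0 : ∀ x, 0 < q x := fun x => by linarith [(hq x).1]
  have hfqm : ∀ v, Measurable (fun x => f v x ^ q x) := fun v => (hf v).pow hqm
  have hiq : Measurable (fun x => 1 / q x) := measurable_const.div hqm
  set S : En n → ℝ≥0∞ := fun x => (∑' v, f v x ^ q x) ^ (1 / q x) with hS
  have hSm : Measurable S := (Measurable.tsum hfqm).pow hiq
  set s : En n → ℝ≥0∞ := fun x => S x + om x with hs
  have hsm : Measurable s := hSm.add measurable_om
  have hs0 : ∀ y, s y ≠ 0 := fun y h => om_pos y (le_antisymm (le_add_self.trans h.le) zero_le)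
  have hsD : ∫⁻ x, s x ^ p x ≤ D := by
    calc ∫⁻ x, s x ^ p x ≤ ∫⁻ x, 2 ^ P * (S x ^ p x + om x) := by
          apply lintegral_mono
          intro x
          refine (aux_add_pow_le _ _ (by linarith [hp1 x]) (hp x).2).trans ?_
          exact mul_le_mul' le_rfl (add_le_add le_rfl
            (ENNReal.rpow_le_self_of_le_one (om_le_one x) (hp1 x)))
      _ = 2 ^ P * ((∫⁻ x, S x ^ p x) + oi) := by
          rw [lintegral_const_mul' _ _ (ENNReal.rpow_ne_top_of_nonneg hP0 (by norm_num)),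
            lintegral_add_left (hSm.pow hpm)]
      _ ≤ D := by
          simp only [hD]; gcongr
  have hst : ∀ᵐ y, s y ≠ ∞ := by
    have h1 : ∀ᵐ y, s y ^ p y < ∞ :=
      ae_lt_top (hsm.pow hpm) (ne_top_of_le_ne_top hDt hsD)
    filter_upwards [h1] with y hy h
    rw [h, ENNReal.top_rpow_of_pos (by linarith [hp1 y])] at hy
    exact lt_irrefl _ hy
  set b : ℕ → En n → ℝ≥0∞ := fun v x => f v x ^ q x * s x ^ (1 - q x) + (2 ^ v)⁻¹ * om x with hb
  have hbm0 : ∀ v, Measurable (fun x => f v x ^ q x * s x ^ (1 - q x)) := fun v =>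
    (hfqm v).mul (hsm.pow (measurable_const.sub hqm))
  have hbm : ∀ v, Measurable (b v) := fun v => (hbm0 v).add (measurable_om.const_mul _)
  have hom3 : ∀ x, om x ≤ s x := fun x => le_add_self
  have hsum : ∀ N x, ∑ v ∈ Finset.range N, b v x ≤ 3 * s x := by
    intro N x
    by_cases hx : s x = ∞
    · rw [hx]; simp
    calc ∑ v ∈ Finset.range N, b v x
        = (∑ v ∈ Finset.range N, f v x ^ q x) * s x ^ (1 - q x) +
          (∑ v ∈ Finset.range N, (2 ^ v)⁻¹) * om x := by
          simp only [hb]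
          rw [Finset.sum_add_distrib, Finset.sum_mul, Finset.sum_mul]
      _ ≤ s x ^ q x * s x ^ (1 - q x) + 2 * s x := by
          gcongr
          · calc ∑ v ∈ Finset.range N, f v x ^ q x ≤ ∑' v, f v x ^ q x := ENNReal.sum_le_tsum _
              _ = S x ^ q x := by
                simp only [hS]
                rw [← ENNReal.rpow_mul, one_div, inv_mul_cancel₀ (hq0 x).ne', ENNReal.rpow_one]
              _ ≤ _ := ENNReal.rpow_le_rpow le_self_add (hq0 x).le
          · exact sum_geom_le N
          · exact hom3 x
      _ = 3 * s x := by
          rw [← ENNReal.rpow_add _ _ (hs0 x) hx]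
          simp only [add_sub_cancel, ENNReal.rpow_one]
          ring
  have hb3 : ∀ v x, b v x ≤ 3 * s x := fun v x =>
    (Finset.single_le_sum (f := fun w => b w x) (fun _ _ => zero_le)
      (Finset.self_mem_range_succ v)).trans (hsum (v + 1) x)
  have hEs : ∀ v x, 3 * G.E v s x ≤ ENNReal.ofReal (lamR v x) ^ K0 := by
    intro v x
    calc 3 * G.E v s x ≤ 3 * (2 ^ (n * v) * (1 + D)) := by
          gcongr; exact G.E_le_of_modular hp1 hsD v x
      _ = 2 ^ (n * v) * (3 * (1 + D)) := by ring
      _ ≤ 2 ^ (n * v) * 2 ^ m := by gcongr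
      _ ≤ _ := lam_absorb v x m
  have hlK : ∀ v (x : En n), ENNReal.ofReal (lamR v x) ^ K0 ≤ ENNReal.ofReal (lamR v x) ^ K :=
    fun v x => ENNReal.rpow_le_rpow_of_exponent_le (one_le_lam v x) (by linarith)
  have hEs' : ∀ v x, G.E v s x ≤ ENNReal.ofReal (lamR v x) ^ K := fun v x =>
    (le_mul_of_one_le_left zero_le (by norm_num)).trans ((hEs v x).trans (hlK v x))
  have hEb : ∀ v x, G.E v (b v) x ≤ ENNReal.ofReal (lamR v x) ^ K0 := by
    intro v x
    refine le_trans ?_ (hEs v x)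
    rw [← G.E_const_mul hsm]
    exact G.E_mono (fun y _ => hb3 v y)
  have hlow : ∀ v x, ENNReal.ofReal (lamR v x) ^ (-K) ≤ (2 ^ v)⁻¹ * G.E v om x := fun v x =>
    (ENNReal.rpow_le_rpow_of_exponent_le (one_le_lam v x) (neg_le_neg hK2)).trans (G.om_lower v x)
  have hlowb : ∀ v x, ENNReal.ofReal (lamR v x) ^ (-K) ≤ G.E v (b v) x := by
    intro v x
    refine (hlow v x).trans ?_
    rw [← G.E_const_mul measurable_om]
    exact G.E_mono (fun y _ => le_add_self)
  have hlows : ∀ v x, ENNReal.ofReal (lamR v x) ^ (-K) ≤ G.E v s x := by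
    intro v x
    refine (hlow v x).trans ?_
    calc (2 ^ v)⁻¹ * G.E v om x ≤ 1 * G.E v om x := by
          gcongr; rw [ENNReal.inv_le_one]; exact one_le_pow₀ (by norm_num)
      _ = G.E v om x := one_mul _
      _ ≤ _ := G.E_mono (fun y _ => hom3 y)
  have hpt : ∀ v x, G.E v (f v) x ≤ C2 * (G.E v (b v) x ^ (1 / q x) *
      G.E v s x ^ (1 - 1 / q x)) := by
    intro v x
    refine (G.E_interp hKnn (fun x => (hq x).1) hLHq v x (hbm v) hsm hs0 hst
      (fun y => le_self_add) (hlowb v x) ((hEb v x).trans (hlK v x)) (hlows v x)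
      (hEs' v x)).trans ?_
    gcongr
    exact le_self_add
  have hFb : ∀ v x, ∑ w ∈ Finset.range (v + 1), G.E w (b w) x ≤ ENNReal.ofReal (lamR v x) ^ K := by
    intro v x
    refine (sum_lam_bound hK00 x _ v ?_).trans
      (ENNReal.rpow_le_rpow_of_exponent_le (one_le_lam v x) hK1)
    intro w _
    exact (hEb w x).trans (le_mul_of_one_le_left zero_le (by norm_num))
  have hFl : ∀ v x, ENNReal.ofReal (lamR v x) ^ (-K) ≤ ∑ w ∈ Finset.range (v + 1), G.E w (b w) x :=
    fun v x => (hlowb v x).trans (Finset.single_le_sum (f := fun w => G.E w (b w) x)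
      (fun _ _ => zero_le) (Finset.self_mem_range_succ v))
  have main : ∀ N, ∫⁻ x, ((∑ v ∈ Finset.range N, G.E v (f v) x ^ q x) ^ (1 / q x)) ^ p x ≤
      C2 ^ P * (2 ^ P * (Cd * (3 ^ P * D) + Cm * (D + oi))) := by
    intro N
    set F : En n → ℝ≥0∞ := fun x => ∑ w ∈ Finset.range N, G.E w (b w) x with hF
    set M : En n → ℝ≥0∞ := fun x => (Finset.range N).sup (fun v => G.E v s x) with hM
    have hFm : Measurable F := Finset.measurable_sum _ (fun w _ => G.measurable_E w _)
    have h1 : ∀ x, (∑ v ∈ Finset.range N, G.E v (f v) x ^ q x) ^ (1 / q x) ≤ C2 * (F x + M x) := by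
      intro x
      have hqx := hq0 x
      have h2 : ∑ v ∈ Finset.range N, G.E v (f v) x ^ q x ≤ (C2 * (F x + M x)) ^ q x := by
        calc ∑ v ∈ Finset.range N, G.E v (f v) x ^ q x
            ≤ ∑ v ∈ Finset.range N, C2 ^ q x * (G.E v (b v) x * M x ^ (q x - 1)) := by
              apply Finset.sum_le_sum
              intro v hv
              calc G.E v (f v) x ^ q x ≤ (C2 * (G.E v (b v) x ^ (1 / q x) *
                    G.E v s x ^ (1 - 1 / q x))) ^ q x := by gcongr; exact hpt v x
                _ = C2 ^ q x * (G.E v (b v) x * G.E v s x ^ (q x - 1)) := by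
                    rw [ENNReal.mul_rpow_of_nonneg _ _ hqx.le,
                      ENNReal.mul_rpow_of_nonneg _ _ hqx.le, ← ENNReal.rpow_mul,
                      ← ENNReal.rpow_mul]
                    have e1 : 1 / q x * q x = 1 := by field_simp
                    have e2 : (1 - 1 / q x) * q x = q x - 1 := by field_simp
                    rw [e1, e2, ENNReal.rpow_one]
                _ ≤ _ := by
                    gcongr
                    · linarith [(hq x).1]
                    · exact Finset.le_sup (f := fun v => G.E v s x) hv
          _ = C2 ^ q x * (F x * M x ^ (q x - 1)) := by
              rw [← Finset.mul_sum, ← Finset.sum_mul]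
          _ ≤ C2 ^ q x * ((F x + M x) * (F x + M x) ^ (q x - 1)) := by
              gcongr
              · exact le_self_add
              · linarith [(hq x).1]
              · exact le_add_self
          _ = _ := by
              rw [mul_comm (F x + M x), aux_rpow_sub_mul _ (hq x).1,
                ENNReal.mul_rpow_of_nonneg _ _ hqx.le]
      calc _ ≤ ((C2 * (F x + M x)) ^ q x) ^ (1 / q x) := by gcongr
        _ = _ := by
          rw [← ENNReal.rpow_mul, one_div, mul_inv_cancel₀ hqx.ne', ENNReal.rpow_one]
    have hcell : ∀ i : Fin n → ℤ,
        ∫⁻ x in {x | G.c 0 x = i},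
          ((∑ v ∈ Finset.range N, G.E v (f v) x ^ q x) ^ (1 / q x)) ^ p x ≤
        C2 ^ P * (2 ^ P * (Cd * (3 ^ P * (∫⁻ x in {x | G.c 0 x = i}, s x ^ p x)) +
          Cm * ((∫⁻ x in {x | G.c 0 x = i}, s x ^ p x) +
            (∫⁻ x in {x | G.c 0 x = i}, om x)))) := by
      intro i
      have hFi := hCd i N b hbm (fun v _ x _ => ⟨hFl v x, hFb v x⟩)
      have hMi := hCm i N s hsm (fun v _ x _ => hEs' v x)
      set Z := {x | G.c 0 x = i} with hZ
      calc ∫⁻ x in Z, ((∑ v ∈ Finset.range N, G.E v (f v) x ^ q x) ^ (1 / q x)) ^ p x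
          ≤ ∫⁻ x in Z, C2 ^ P * (2 ^ P * (F x ^ p x + M x ^ p x)) := by
            apply lintegral_mono
            intro x
            have hpx : 0 ≤ p x := by linarith [hp1 x]
            calc ((∑ v ∈ Finset.range N, G.E v (f v) x ^ q x) ^ (1 / q x)) ^ p x
                ≤ (C2 * (F x + M x)) ^ p x := ENNReal.rpow_le_rpow (h1 x) hpx
              _ = C2 ^ p x * (F x + M x) ^ p x := ENNReal.mul_rpow_of_nonneg _ _ hpx
              _ ≤ _ := mul_le_mul' (ENNReal.rpow_le_rpow_of_exponent_le hC21 (hp x).2)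
                  (aux_add_pow_le _ _ hpx (hp x).2)
        _ = C2 ^ P * (2 ^ P * ((∫⁻ x in Z, F x ^ p x) + (∫⁻ x in Z, M x ^ p x))) := by
            rw [lintegral_const_mul' _ _ (ENNReal.rpow_ne_top_of_nonneg hP0 hC2t),
              lintegral_const_mul' _ _ (ENNReal.rpow_ne_top_of_nonneg hP0 (by norm_num)),
              lintegral_add_left (hFm.pow hpm)]
        _ ≤ _ := by
            gcongr
            refine hFi.trans ?_
            gcongr
            rw [← lintegral_const_mul' _ _ (ENNReal.rpow_ne_top_of_nonneg hP0 (by norm_num))]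
            apply lintegral_mono
            intro x
            have hpx : 0 ≤ p x := by linarith [hp1 x]
            calc (∑ w ∈ Finset.range N, b w x) ^ p x ≤ (3 * s x) ^ p x :=
                  ENNReal.rpow_le_rpow (hsum N x) hpx
              _ = 3 ^ p x * s x ^ p x := ENNReal.mul_rpow_of_nonneg _ _ hpx
              _ ≤ _ := mul_le_mul'
                  (ENNReal.rpow_le_rpow_of_exponent_le (by norm_num) (hp x).2) le_rfl
    rw [G.lintegral_cells]
    refine (ENNReal.tsum_le_tsum hcell).trans ?_
    rw [ENNReal.tsum_mul_left, ENNReal.tsum_mul_left, ENNReal.tsum_add, ENNReal.tsum_mul_left,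
      ENNReal.tsum_mul_left, ENNReal.tsum_mul_left, ENNReal.tsum_add, ← G.lintegral_cells,
      ← G.lintegral_cells]
    gcongr
  have hlim : ∀ x, ((∑' v, G.E v (f v) x ^ q x) ^ (1 / q x)) ^ p x =
      ⨆ N, ((∑ v ∈ Finset.range N, G.E v (f v) x ^ q x) ^ (1 / q x)) ^ p x := by
    intro x
    have hr : 0 < 1 / q x * p x := by
      have := hq0 x
      have := hp1 x
      positivity
    simp only [← ENNReal.rpow_mul]
    rw [ENNReal.tsum_eq_iSup_nat]
    exact (ENNReal.orderIsoRpow _ hr).map_iSup _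
  simp_rw [hlim]
  rw [lintegral_iSup]
  · exact iSup_le main
  · intro N
    exact ((Finset.measurable_sum _ (fun v _ => (G.measurable_E v _).pow hqm)).pow hiq).pow hpm
  · intro N N' hNN x
    have hqx := hq0 x
    have := hp1 x
    apply ENNReal.rpow_le_rpow _ (by linarith)
    apply ENNReal.rpow_le_rpow _ (by positivity)
    exact Finset.sum_le_sum_of_subset (Finset.range_mono hNN)


/-- The kernel `η_{0,h}`. -/
def kap {n : ℕ} (h : ℝ) (z : En n) : ℝ≥0∞ := ENNReal.ofReal ((1 + ‖z‖) ^ (-h))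

theorem measurable_kap {n : ℕ} (h : ℝ) : Measurable (kap h : En n → ℝ≥0∞) := by
  unfold kap
  apply Measurable.ennreal_ofReal
  exact (measurable_const.add measurable_norm).pow_const _

theorem kap_le_one {n : ℕ} {h : ℝ} (hh : 0 ≤ h) (z : En n) : kap h z ≤ 1 := by
  unfold kap
  rw [ENNReal.ofReal_le_one]
  exact Real.rpow_le_one_of_one_le_of_nonpos (by linarith [norm_nonneg z]) (by linarith)

theorem kap_int {n : ℕ} {h : ℝ} (hh : (n : ℝ) < h) : ∫⁻ z : En n, kap h z ≠ ∞ := by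
  have h1 : (Module.finrank ℝ (En n) : ℝ) < h := by simpa using hh
  exact (finite_integral_one_add_norm (μ := (volume : Measure (En n))) h1).ne

/-- Convolution with `η_{0,h}`. -/
def Tk {n : ℕ} (h : ℝ) (f : En n → ℝ≥0∞) (x : En n) : ℝ≥0∞ := ∫⁻ y, kap h (x - y) * f y

theorem measurable_Tk_aux {n : ℕ} (h : ℝ) {f : En n → ℝ≥0∞} (hf : Measurable f) :
    Measurable (fun z : En n × En n => kap h (z.1 - z.2) * f z.2) :=
  ((measurable_kap h).comp (measurable_fst.sub measurable_snd)).mul (hf.comp measurable_snd)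

theorem measurable_Tk {n : ℕ} (h : ℝ) {f : En n → ℝ≥0∞} (hf : Measurable f) :
    Measurable (Tk h f) := (measurable_Tk_aux h hf).lintegral_prod_right'

theorem Tk_int {n : ℕ} (h : ℝ) {f : En n → ℝ≥0∞} (hf : Measurable f) :
    ∫⁻ x, Tk h f x = (∫⁻ z : En n, kap h z) * ∫⁻ y, f y := by
  unfold Tk
  rw [lintegral_lintegral_swap (measurable_Tk_aux h hf).aemeasurable]
  rw [← lintegral_const_mul _ hf]
  congr 1; ext y
  have hk : Measurable (fun x => kap h (x - y)) :=
    (measurable_kap h).comp (measurable_id.sub_const y)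
  rw [lintegral_mul_const _ hk]
  congr 1
  exact lintegral_sub_right_eq_self (kap h) y

theorem Tk_mono {n : ℕ} (h : ℝ) {f g : En n → ℝ≥0∞} (hfg : ∀ y, f y ≤ g y) (x : En n) :
    Tk h f x ≤ Tk h g x := by
  unfold Tk
  gcongr with y
  exact hfg y

theorem Tk_one {n : ℕ} (h : ℝ) (x : En n) :
    ∫⁻ y, kap h (x - y) = ∫⁻ z : En n, kap h z :=
  lintegral_sub_left_eq_self (kap h) x

theorem Tk_holder {n : ℕ} (h : ℝ) {f : En n → ℝ≥0∞} (hf : Measurable f) {r : ℝ} (hr : 1 < r)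
    (x : En n) : Tk h f x ^ r ≤ (∫⁻ z : En n, kap h z) ^ (r - 1) * Tk h (fun y => f y ^ r) x := by
  have hc : (Real.conjExponent r).HolderConjugate r :=
    (Real.HolderConjugate.conjExponent hr).symm
  set r' := Real.conjExponent r with hr'
  have hkm : Measurable (fun y => kap h (x - y)) :=
    (measurable_kap h).comp (measurable_const.sub measurable_id)
  have hr0 : 0 < r := by linarith
  have hr'0 : 0 < r' := hc.pos
  have hsum : 1 / r' + 1 / r = 1 := by
    have := hc.inv_add_inv_eq_one; simpa [one_div] using this
  have h1 : Tk h f x ≤ (∫⁻ y, kap h (x - y)) ^ (1 / r') *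
      (∫⁻ y, kap h (x - y) * f y ^ r) ^ (1 / r) := by
    have := ENNReal.lintegral_mul_le_Lp_mul_Lq (volume : Measure (En n)) hc
      (f := fun y => kap h (x - y) ^ (1 / r')) (g := fun y => kap h (x - y) ^ (1 / r) * f y)
      (hkm.pow_const _).aemeasurable ((hkm.pow_const _).mul hf).aemeasurable
    calc Tk h f x = ∫⁻ y, kap h (x - y) ^ (1 / r') * (kap h (x - y) ^ (1 / r) * f y) := by
          unfold Tk
          congr 1; ext y
          rw [← mul_assoc, ← ENNReal.rpow_add_of_nonneg _ _ (by positivity) (by positivity), hsum,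
            ENNReal.rpow_one]
      _ ≤ _ := this
      _ = _ := by
          congr 3
          · ext y
            rw [← ENNReal.rpow_mul, one_div, inv_mul_cancel₀ hr'0.ne', ENNReal.rpow_one]
          · ext y
            rw [ENNReal.mul_rpow_of_nonneg _ _ hr0.le, ← ENNReal.rpow_mul, one_div,
              inv_mul_cancel₀ hr0.ne', ENNReal.rpow_one]
  calc Tk h f x ^ r ≤ ((∫⁻ y, kap h (x - y)) ^ (1 / r') *
      (∫⁻ y, kap h (x - y) * f y ^ r) ^ (1 / r)) ^ r := by gcongr
    _ = _ := by
      rw [ENNReal.mul_rpow_of_nonneg _ _ hr0.le, ← ENNReal.rpow_mul, ← ENNReal.rpow_mul,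
        Tk_one]
      have e1 : 1 / r' * r = r - 1 := by
        have : 1 / r' = 1 - 1 / r := by linarith
        rw [this]; field_simp
      have e2 : 1 / r * r = 1 := by field_simp
      rw [e1, e2, ENNReal.rpow_one]
      rfl

theorem om_conv {n : ℕ} (x : En n) {u : ℝ≥0∞} (hu : u ≤ 1) {s t cd : ℝ} (hs : 1 ≤ s)
    (hst : |s - t| ≤ cd / Real.log (Real.exp 1 + ‖x‖)) :
    u ^ s ≤ ENNReal.ofReal (Real.exp (((n : ℝ) + 1) * cd)) * u ^ t + om x := by
  rcases le_total u (om x) with h | h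
  · exact ((ENNReal.rpow_le_self_of_le_one hu hs).trans h).trans le_add_self
  · refine le_trans ?_ le_self_add
    have hl : lamR 0 x = Real.exp 1 + ‖x‖ := by simp [lamR]
    refine aux_exchange (one_le_lamR 0 x) (by positivity) ?_ h
      (hu.trans (aux_one_le_rpow (one_le_lam 0 x) (by positivity)))
    rw [hl]
    have hlog : 0 < Real.log (Real.exp 1 + ‖x‖) := by
      apply Real.log_pos
      have := Real.add_one_le_exp (1 : ℝ)
      have := norm_nonneg x
      linarith
    rwa [le_div_iff₀ hlog] at hst

theorem Tk_bound {n : ℕ} {p : En n → ℝ} (hpm : Measurable p) {a P gi cd h : ℝ} (ha : 1 < a)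
    (hp : ∀ x, a ≤ p x ∧ p x ≤ P)
    (hdec : ∀ x, |p x - gi| ≤ cd / Real.log (Real.exp 1 + ‖x‖)) (hh : (n : ℝ) < h) :
    ∃ C : ℝ≥0∞, C ≠ ∞ ∧ ∀ f : En n → ℝ≥0∞, Measurable f → ∫⁻ x, f x ^ p x ≤ 1 →
      ∫⁻ x, Tk h f x ^ p x ≤ C := by
  have hp1 : ∀ x, 1 ≤ p x := fun x => by linarith [(hp x).1]
  have hP1 : 1 ≤ P := (hp1 0).trans (hp 0).2
  have hP0 : 0 ≤ P := by linarith
  have hh0 : 0 ≤ h := (Nat.cast_nonneg n).trans hh.le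
  set r : ℝ := max gi a with hr
  have hr1 : 1 < r := lt_max_of_lt_right ha
  have hdec' : ∀ x, |p x - r| ≤ cd / Real.log (Real.exp 1 + ‖x‖) := by
    intro x
    refine le_trans ?_ (hdec x)
    have := (hp x).1
    rcases le_total gi a with h | h
    · rw [hr, max_eq_right h, abs_of_nonneg (by linarith), abs_of_nonneg (by linarith)]; linarith
    · rw [hr, max_eq_left h]
  set oi : ℝ≥0∞ := ∫⁻ x : En n, om x with hoi
  have hoit : oi ≠ ∞ := om_int
  set m : ℝ≥0∞ := ∫⁻ z : En n, kap h z with hm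
  have hmt : m ≠ ∞ := kap_int hh
  set C : ℝ≥0∞ := ENNReal.ofReal (Real.exp (((n : ℝ) + 1) * cd)) with hC
  have hCt : C ≠ ∞ := ENNReal.ofReal_ne_top
  have h2P : (2 : ℝ≥0∞) ^ P ≠ ∞ := ENNReal.rpow_ne_top_of_nonneg hP0 (by norm_num)
  have hm1t : m + 1 ≠ ∞ := ENNReal.add_ne_top.2 ⟨hmt, by norm_num⟩
  have hmP : (m + 1) ^ P ≠ ∞ := ENNReal.rpow_ne_top_of_nonneg hP0 hm1t
  have hmr : m ^ (r - 1) ≠ ∞ := ENNReal.rpow_ne_top_of_nonneg (by linarith) hmt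
  refine ⟨2 ^ P * (m + (m + 1) ^ P * (C * (m ^ (r - 1) * (m * (C + oi))) + oi)), ?_, ?_⟩
  · exact ENNReal.mul_ne_top h2P (ENNReal.add_ne_top.2 ⟨hmt, ENNReal.mul_ne_top hmP
      (ENNReal.add_ne_top.2 ⟨ENNReal.mul_ne_top hCt (ENNReal.mul_ne_top hmr
        (ENNReal.mul_ne_top hmt (ENNReal.add_ne_top.2 ⟨hCt, hoit⟩))), hoit⟩)⟩)
  intro f hf hmod
  set f1 : En n → ℝ≥0∞ := fun y => f y ^ p y with hf1
  set f2 : En n → ℝ≥0∞ := fun y => min (f y) 1 with hf2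
  have hf1m : Measurable f1 := hf.pow hpm
  have hf2m : Measurable f2 := hf.min measurable_const
  have hf21 : ∀ y, f2 y ≤ 1 := fun y => min_le_right _ _
  have hle : ∀ x, Tk h f x ≤ Tk h f1 x + Tk h f2 x := by
    intro x
    unfold Tk
    have hk : Measurable (fun y => kap h (x - y) * f1 y) := ((measurable_kap h).comp
      (measurable_const.sub measurable_id)).mul hf1m
    rw [← lintegral_add_left hk]
    apply lintegral_mono
    intro y
    simp only
    rw [← mul_add]
    apply mul_le_mul' le_rfl
    rcases le_total (f y) 1 with h | h
    · simp only [hf2, min_eq_left h]; exact le_add_self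
    · exact (ENNReal.le_rpow_self_of_one_le h (hp1 y)).trans le_self_add
  have hg1 : ∀ x, Tk h f1 x ≤ 1 := by
    intro x
    refine le_trans ?_ hmod
    unfold Tk
    apply lintegral_mono
    intro y
    exact mul_le_of_le_one_left zero_le (kap_le_one hh0 _)
  have hg1i : ∫⁻ x, Tk h f1 x ^ p x ≤ m := by
    calc ∫⁻ x, Tk h f1 x ^ p x ≤ ∫⁻ x, Tk h f1 x :=
          lintegral_mono fun x => ENNReal.rpow_le_self_of_le_one (hg1 x) (hp1 x)
      _ = m * ∫⁻ y, f1 y := Tk_int h hf1m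
      _ ≤ m * 1 := by gcongr
      _ = m := mul_one m
  have hf2i : ∫⁻ y, f2 y ^ r ≤ C + oi := by
    calc ∫⁻ y, f2 y ^ r ≤ ∫⁻ y, (C * f1 y + om y) := by
          apply lintegral_mono
          intro y
          have hd := hdec' y
          rw [abs_sub_comm] at hd
          refine (om_conv y (hf21 y) hr1.le hd).trans ?_
          apply add_le_add _ le_rfl
          apply mul_le_mul' le_rfl
          exact ENNReal.rpow_le_rpow (min_le_left _ _) (by linarith [hp1 y])
      _ = C * (∫⁻ y, f1 y) + oi := by
          rw [lintegral_add_left (hf1m.const_mul _), lintegral_const_mul _ hf1m]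
      _ ≤ C * 1 + oi := by gcongr
      _ = _ := by rw [mul_one]
  have hg2 : ∀ x, Tk h f2 x ≤ m + 1 := by
    intro x
    refine le_trans ?_ le_self_add
    rw [hm, ← Tk_one h x]
    unfold Tk
    apply lintegral_mono
    intro y
    exact mul_le_of_le_one_right zero_le (hf21 y)
  have hg2r : ∫⁻ x, Tk h f2 x ^ r ≤ m ^ (r - 1) * (m * (C + oi)) := by
    calc ∫⁻ x, Tk h f2 x ^ r ≤ ∫⁻ x, m ^ (r - 1) * Tk h (fun y => f2 y ^ r) x :=
          lintegral_mono fun x => Tk_holder h hf2m hr1 x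
      _ = m ^ (r - 1) * (m * ∫⁻ y, f2 y ^ r) := by
          rw [lintegral_const_mul' _ _ hmr, Tk_int h (hf2m.pow_const r)]
      _ ≤ _ := by gcongr
  have hg2i : ∫⁻ x, Tk h f2 x ^ p x ≤ (m + 1) ^ P * (C * (m ^ (r - 1) * (m * (C + oi))) + oi) := by
    calc ∫⁻ x, Tk h f2 x ^ p x ≤ ∫⁻ x, (m + 1) ^ P * (C * Tk h f2 x ^ r + om x) := by
          apply lintegral_mono
          intro x
          have hpx : 0 ≤ p x := by linarith [hp1 x]
          have hm10 : m + 1 ≠ 0 := by simp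
          have hu : Tk h f2 x / (m + 1) ≤ 1 := ENNReal.div_le_of_le_mul (by simpa using hg2 x)
          calc Tk h f2 x ^ p x = ((m + 1) * (Tk h f2 x / (m + 1))) ^ p x := by
                rw [ENNReal.mul_div_cancel hm10 hm1t]
            _ = (m + 1) ^ p x * (Tk h f2 x / (m + 1)) ^ p x := ENNReal.mul_rpow_of_nonneg _ _ hpx
            _ ≤ (m + 1) ^ P * (C * (Tk h f2 x / (m + 1)) ^ r + om x) :=
                mul_le_mul' (ENNReal.rpow_le_rpow_of_exponent_le le_add_self (hp x).2)
                  (om_conv x hu (hp1 x) (hdec' x))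
            _ ≤ _ := by
                apply mul_le_mul' le_rfl
                apply add_le_add _ le_rfl
                apply mul_le_mul' le_rfl
                apply ENNReal.rpow_le_rpow _ (by linarith)
                apply ENNReal.div_le_of_le_mul
                exact le_mul_of_one_le_right zero_le le_add_self
      _ = (m + 1) ^ P * (C * (∫⁻ x, Tk h f2 x ^ r) + oi) := by
          rw [lintegral_const_mul' _ _ hmP, lintegral_add_right _ measurable_om,
            lintegral_const_mul' _ _ hCt]
      _ ≤ _ := by gcongr
  calc ∫⁻ x, Tk h f x ^ p x ≤ ∫⁻ x, 2 ^ P * (Tk h f1 x ^ p x + Tk h f2 x ^ p x) := by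
        apply lintegral_mono
        intro x
        have hpx : 0 ≤ p x := by linarith [hp1 x]
        exact (ENNReal.rpow_le_rpow (hle x) hpx).trans (aux_add_pow_le _ _ hpx (hp x).2)
    _ = 2 ^ P * ((∫⁻ x, Tk h f1 x ^ p x) + (∫⁻ x, Tk h f2 x ^ p x)) := by
        rw [lintegral_const_mul' _ _ h2P, lintegral_add_left ((measurable_Tk h hf1m).pow hpm)]
    _ ≤ _ := by gcongr


theorem floor_nested {a b : ℝ} (h : ⌊2 * a⌋ = ⌊2 * b⌋) : ⌊a⌋ = ⌊b⌋ := by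
  have key : ∀ a b : ℝ, ⌊2 * a⌋ = ⌊2 * b⌋ → ⌊b⌋ ≤ ⌊a⌋ := by
    intro a b h
    rw [Int.le_floor]
    have h1 : 2 * ⌊b⌋ ≤ ⌊2 * b⌋ := by
      rw [Int.le_floor]; push_cast; linarith [Int.floor_le b]
    rw [← h, Int.le_floor] at h1
    push_cast at h1
    linarith
  exact le_antisymm (key b a h.symm) (key a b h)

theorem floor_close {a b : ℝ} (h : ⌊a⌋ = ⌊b⌋) : |a - b| ≤ 1 := (Int.abs_sub_lt_one_of_floor_eq_floor h).le

/-- The dyadic grid shifted by `t`. -/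
def shiftGrid (n : ℕ) (t : Fin n → ℝ) : Grid n where
  c v x := fun i => ⌊(2 : ℝ) ^ v * (x i - t i)⌋
  meas v := by
    refine measurable_pi_lambda _ fun i => ?_
    apply Int.measurable_floor.comp
    fun_prop
  nested v x y h := by
    funext i
    have := congrFun h i
    simp only [pow_succ] at this
    apply floor_nested
    convert this using 2 <;> ring
  vol v x := by
    have hset : {y : En n | (fun i => ⌊(2 : ℝ) ^ v * (y i - t i)⌋) =
        fun i => ⌊(2 : ℝ) ^ v * (x i - t i)⌋} =
        (fun y : En n => WithLp.ofLp y) ⁻¹' (Set.univ.pi fun i =>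
          Ico ((⌊(2 : ℝ) ^ v * (x i - t i)⌋ : ℝ) / 2 ^ v + t i)
            (((⌊(2 : ℝ) ^ v * (x i - t i)⌋ : ℝ) + 1) / 2 ^ v + t i)) := by
      ext y
      simp only [mem_ofPred_eq, mem_preimage, mem_pi, mem_univ, true_imp_iff, mem_Ico, funext_iff]
      apply forall_congr'
      intro i
      rw [Int.floor_eq_iff, ← le_sub_iff_add_le, div_le_iff₀ (by positivity),
        ← sub_lt_iff_lt_add (c := t i), lt_div_iff₀ (by positivity),
        mul_comm ((2 : ℝ) ^ v) (y i - t i)]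
    rw [hset, (PiLp.volume_preserving_ofLp (Fin n)).measure_preimage
      (MeasurableSet.univ_pi fun i => measurableSet_Ico).nullMeasurableSet, volume_pi_pi]
    simp only [Real.volume_Ico]
    have : ∀ i, ENNReal.ofReal (((⌊(2 : ℝ) ^ v * (x i - t i)⌋ : ℝ) + 1) / 2 ^ v + t i -
        ((⌊(2 : ℝ) ^ v * (x i - t i)⌋ : ℝ) / 2 ^ v + t i)) = ((2 : ℝ≥0∞) ^ v)⁻¹ := by
      intro i
      have : (((⌊(2 : ℝ) ^ v * (x i - t i)⌋ : ℝ) + 1) / 2 ^ v + t i -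
        ((⌊(2 : ℝ) ^ v * (x i - t i)⌋ : ℝ) / 2 ^ v + t i)) = (2 ^ v)⁻¹ := by
        field_simp; ring
      rw [this, ENNReal.ofReal_inv_of_pos (by positivity), ENNReal.ofReal_pow (by norm_num)]
      simp
    simp only [this, Finset.prod_const, Finset.card_univ, Fintype.card_fin]
    rw [mul_comm n v, pow_mul]
    simp only [ENNReal.inv_pow]
  diam v x y h := by
    have hi : ∀ i, ((x i - y i) * 2 ^ v) ^ 2 ≤ 1 := by
      intro i
      have h1 := floor_close (congrFun h i)
      have h2 : (2 : ℝ) ^ v * (x i - t i) - 2 ^ v * (y i - t i) = (x i - y i) * 2 ^ v := by ring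
      rw [h2] at h1
      rw [← sq_abs]
      have := abs_nonneg ((x i - y i) * 2 ^ v)
      nlinarith
    have h2 : (‖x - y‖ * 2 ^ v) ^ 2 ≤ (n : ℝ) ^ 2 := by
      calc (‖x - y‖ * 2 ^ v) ^ 2 = ∑ i, ((x i - y i) * 2 ^ v) ^ 2 := by
            rw [mul_pow, EuclideanSpace.norm_sq_eq, Finset.sum_mul]
            simp [mul_pow]
        _ ≤ ∑ i : Fin n, (1 : ℝ) := Finset.sum_le_sum fun i _ => hi i
        _ = n := by simp
        _ ≤ (n : ℝ) ^ 2 := by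
            have : n ≤ n ^ 2 := Nat.le_self_pow (by norm_num) n
            exact_mod_cast this
    exact le_of_sq_le_sq h2 (Nat.cast_nonneg n)

theorem GlobLogHolder.cont {n : ℕ} {c : ℝ} {g : En n → ℝ} (hg : LocLogHolder c g) :
    Continuous g := by
  obtain ⟨hc, hg⟩ := hg
  rw [Metric.continuous_iff]
  intro x ε hε
  refine ⟨Real.exp (-(c / ε)), Real.exp_pos _, ?_⟩
  intro y hy
  rw [Real.dist_eq]
  by_cases hxy : y = x
  · simpa [hxy] using hε
  have hd : 0 < ‖y - x‖ := by rw [norm_pos_iff]; exact sub_ne_zero.2 hxy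
  rw [dist_eq_norm] at hy
  refine (hg y x).trans_lt ?_
  have h1 : c / ε < Real.log (Real.exp 1 + 1 / ‖y - x‖) := by
    rw [Real.lt_log_iff_exp_lt (by positivity)]
    calc Real.exp (c / ε) = 1 / Real.exp (-(c / ε)) := by rw [Real.exp_neg]; simp
      _ < 1 / ‖y - x‖ := one_div_lt_one_div_of_lt hd hy
      _ ≤ _ := by linarith [Real.exp_pos 1]
  have h0 : 0 < c / ε := by positivity
  rw [div_lt_iff₀ (by linarith)]
  rw [div_lt_iff₀ hε] at h1
  linarith

theorem one_le_log_add {s : ℝ} (hs : 0 ≤ s) : 1 ≤ Real.log (Real.exp 1 + s) := by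
  rw [Real.le_log_iff_exp_le (by positivity)]; linarith

theorem LHG_of_glob {n : ℕ} (G : Grid n) {c : ℝ} {g : En n → ℝ} (hg : GlobLogHolder c g) :
    ∃ C0, LHG G C0 g := by
  obtain ⟨⟨hc, hloc⟩, gi, cd, hcd, hdec⟩ := hg
  set L : ℝ := Real.log (n + 1) with hL
  have hn1 : (1 : ℝ) ≤ (n : ℝ) + 1 := by linarith [Nat.cast_nonneg (α := ℝ) n]
  have hL0 : 0 ≤ L := Real.log_nonneg hn1
  refine ⟨c * (L + 1) + (cd + cd * (L + 1)), ?_⟩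
  intro v x y hxy
  have hlog : Real.log (lamR v x) = v * Real.log 2 + Real.log (Real.exp 1 + ‖x‖) := by
    unfold lamR
    rw [Real.log_mul (by positivity) (by positivity), Real.log_pow]
  rw [hlog, mul_add]
  apply add_le_add
  · by_cases hxy' : x = y
    · subst hxy'; simp; positivity
    have hd : 0 < ‖x - y‖ := by rw [norm_pos_iff]; exact sub_ne_zero.2 hxy'
    have h1 := one_le_log_add (s := 1 / ‖x - y‖) (by positivity)
    have h2 : v * Real.log 2 ≤ (L + 1) * Real.log (Real.exp 1 + 1 / ‖x - y‖) := by
      have h3 : (2 : ℝ) ^ v ≤ (n + 1) * (Real.exp 1 + 1 / ‖x - y‖) := by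
        have h4 := G.diam v x y hxy
        have h5 : (2 : ℝ) ^ v ≤ n * (1 / ‖x - y‖) := by
          rw [mul_one_div, le_div_iff₀ hd]; linarith
        have : 0 < 1 / ‖x - y‖ := by positivity
        have := Real.exp_pos 1
        nlinarith [Nat.cast_nonneg (α := ℝ) n]
      have h6 := Real.log_le_log (by positivity) h3
      rw [Real.log_pow, Real.log_mul (by positivity) (by positivity)] at h6
      nlinarith
    calc |g x - g y| * (v * Real.log 2)
        ≤ c / Real.log (Real.exp 1 + 1 / ‖x - y‖) *
          ((L + 1) * Real.log (Real.exp 1 + 1 / ‖x - y‖)) := by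
          gcongr
          exact hloc x y
      _ = c * (L + 1) := by
          set W := Real.log (Real.exp 1 + 1 / ‖x - y‖) with hW
          field_simp
  · have hx1 := one_le_log_add (norm_nonneg x)
    have hy1 := one_le_log_add (norm_nonneg y)
    have h1 : |g x - g y| ≤ cd / Real.log (Real.exp 1 + ‖x‖) +
        cd / Real.log (Real.exp 1 + ‖y‖) := by
      calc |g x - g y| ≤ |g x - gi| + |gi - g y| := abs_sub_le _ _ _
        _ ≤ _ := by rw [abs_sub_comm gi]; exact add_le_add (hdec x) (hdec y)
    have h2 : Real.log (Real.exp 1 + ‖x‖) ≤ (L + 1) * Real.log (Real.exp 1 + ‖y‖) := by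
      have h3 := G.lamR_le (w := 0) hxy
      simp only [lamR, pow_zero, one_mul] at h3
      have h6 := Real.log_le_log (by positivity) h3
      rw [Real.log_mul (by positivity) (by positivity)] at h6
      nlinarith
    calc |g x - g y| * Real.log (Real.exp 1 + ‖x‖)
        ≤ (cd / Real.log (Real.exp 1 + ‖x‖) + cd / Real.log (Real.exp 1 + ‖y‖)) *
          Real.log (Real.exp 1 + ‖x‖) := by gcongr
      _ = cd + cd / Real.log (Real.exp 1 + ‖y‖) * Real.log (Real.exp 1 + ‖x‖) := by
          field_simp
      _ ≤ cd + cd / Real.log (Real.exp 1 + ‖y‖) * ((L + 1) * Real.log (Real.exp 1 + ‖y‖)) := by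
          gcongr
      _ = _ := by field_simp

theorem LHG_inv {n : ℕ} {G : Grid n} {C0 : ℝ} {q : En n → ℝ} (hq : ∀ x, 1 ≤ q x)
    (h : LHG G C0 q) : LHG G C0 (fun x => 1 / q x) := by
  intro v x y hxy
  refine le_trans ?_ (h v x y hxy)
  have hlog : 0 ≤ Real.log (lamR v x) := Real.log_nonneg (one_le_lamR v x)
  apply mul_le_mul_of_nonneg_right _ hlog
  have hx := hq x
  have hy := hq y
  simp only
  have e : 1 / q x - 1 / q y = (q y - q x) / (q x * q y) := by field_simp
  rw [e, abs_div, abs_sub_comm, abs_of_pos (show 0 < q x * q y by positivity)]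
  apply div_le_self (abs_nonneg _)
  nlinarith


theorem third_coord (j : ℕ) {a b : ℝ} (h : |a - b| ≤ 1 / 3) :
    ⌊a⌋ = ⌊b⌋ ∨ ⌊a - 2 ^ j / 3⌋ = ⌊b - 2 ^ j / 3⌋ := by
  wlog hab : a ≤ b with H
  · rcases H j (by rwa [abs_sub_comm]) (le_of_not_ge hab) with h1 | h1
    · exact Or.inl h1.symm
    · exact Or.inr h1.symm
  by_contra! hne
  obtain ⟨h1, h2⟩ := hne
  have key : ∀ u w : ℝ, u ≤ w → ⌊u⌋ ≠ ⌊w⌋ → u < ⌊w⌋ := by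
    intro u w huw hn
    have h3 : ⌊u⌋ < ⌊w⌋ := lt_of_le_of_ne (Int.floor_le_floor huw) hn
    exact Int.floor_lt.1 h3
  have k1 := key a b hab h1
  have k2 := key (a - 2 ^ j / 3) (b - 2 ^ j / 3) (by linarith) h2
  have k3 := Int.floor_le b
  have k4 := Int.floor_le (b - 2 ^ j / 3)
  set m := ⌊b⌋
  set m' := ⌊b - 2 ^ j / 3⌋
  rw [abs_le] at h
  have e1 : (3 * ((m : ℝ) - m') - 2 ^ j) < 1 := by linarith
  have e2 : -1 < (3 * ((m : ℝ) - m') - 2 ^ j) := by linarith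
  have e1' : 3 * (m - m') - 2 ^ j < 1 := by exact_mod_cast e1
  have e2' : -1 < 3 * (m - m') - 2 ^ j := by exact_mod_cast e2
  have e3 : (2 : ℤ) ^ j = 3 * (m - m') := by omega
  have h4 : (3 : ℤ) ∣ 2 ^ j := ⟨_, e3⟩
  have h5 : (3 : ℤ) ∣ 2 := (Int.prime_three).dvd_of_dvd_pow h4
  omega

/-- The family of grids shifted by `0` or `1/3` in each coordinate. -/
def tGrid (n : ℕ) (t : Fin n → Bool) : Grid n := shiftGrid n (fun i => if t i then 1 / 3 else 0)

theorem third_trick {n : ℕ} (j : ℕ) (x y : En n) (h : ‖x - y‖ * 2 ^ j ≤ 1 / 3) :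
    ∃ t, (tGrid n t).c j x = (tGrid n t).c j y := by
  have hc : ∀ i, ∃ b : Bool, ⌊(2 : ℝ) ^ j * (x i - (if b then 1 / 3 else 0))⌋ =
      ⌊(2 : ℝ) ^ j * (y i - (if b then 1 / 3 else 0))⌋ := by
    intro i
    have h1 : |(2 : ℝ) ^ j * x i - 2 ^ j * y i| ≤ 1 / 3 := by
      rw [← mul_sub, abs_mul, abs_of_pos (by positivity), mul_comm]
      refine le_trans ?_ h
      gcongr
      have := PiLp.norm_apply_le (x - y) i
      simpa using this
    rcases third_coord j h1 with h2 | h2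
    · exact ⟨false, by simpa using h2⟩
    · refine ⟨true, ?_⟩
      simp only [if_true]
      convert h2 using 2 <;> ring
  choose t ht using hc
  exact ⟨t, funext ht⟩

theorem eta_le {n : ℕ} {h : ℝ} (hh : (n : ℝ) < h) (v : ℕ) (z : En n) :
    (∃ k ≤ v, ‖z‖ * 2 ^ (v - k) ≤ 1 / 3 ∧
      eta n v h z ≤ 6 ^ h * ((2 : ℝ) ^ (-(h - n))) ^ k * 2 ^ (n * (v - k))) ∨
    eta n v h z ≤ 6 ^ h * ((2 : ℝ) ^ (-(h - n))) ^ v * (1 + ‖z‖) ^ (-h) := by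
  have hh0 : 0 < h := lt_of_le_of_lt (Nat.cast_nonneg n) hh
  have hz := norm_nonneg z
  have h6 : (1 : ℝ) ≤ 6 ^ h := Real.one_le_rpow (by norm_num) hh0.le
  have hpow : ∀ k : ℕ, ((2 : ℝ) ^ k) ^ (-h) = ((2 : ℝ) ^ (-(h - n))) ^ k * ((2 : ℝ) ^ (n * k))⁻¹ := by
    intro k
    rw [← Real.rpow_natCast, ← Real.rpow_natCast, ← Real.rpow_natCast, ← Real.rpow_mul (by norm_num),
      ← Real.rpow_mul (by norm_num), ← Real.rpow_neg (by norm_num), ← Real.rpow_add (by norm_num)]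
    congr 1; push_cast; ring
  by_cases hex : ∃ k, ‖z‖ * 2 ^ v ≤ 2 ^ k / 3 ∧ k ≤ v
  · left
    classical
    set k := Nat.find hex with hk
    obtain ⟨hk1, hk2⟩ := Nat.find_spec hex
    rw [← hk] at hk1 hk2
    refine ⟨k, hk2, ?_, ?_⟩
    · have : (2 : ℝ) ^ v = 2 ^ (v - k) * 2 ^ k := by rw [← pow_add, Nat.sub_add_cancel hk2]
      rw [this] at hk1
      have h2 : (0 : ℝ) < 2 ^ k := by positivity
      have : ‖z‖ * 2 ^ (v - k) * 2 ^ k ≤ 1 / 3 * 2 ^ k := by linarith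
      exact le_of_mul_le_mul_right this h2
    · have e1 : (1 + (2 : ℝ) ^ v * ‖z‖) ^ (-h) ≤ 6 ^ h * ((2 : ℝ) ^ k) ^ (-h) := by
        rcases Nat.eq_zero_or_pos k with h0 | h0
        · rw [h0]
          simp only [pow_zero, Real.one_rpow, mul_one]
          refine le_trans ?_ h6
          apply Real.rpow_le_one_of_one_le_of_nonpos _ (by linarith)
          have : 0 ≤ (2 : ℝ) ^ v * ‖z‖ := by positivity
          linarith
        · have hmin := Nat.find_min hex (m := k - 1) (by omega)
          have h3 : (2 : ℝ) ^ (k - 1) / 3 < ‖z‖ * 2 ^ v := by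
            by_contra! hcon
            exact hmin ⟨hcon, by omega⟩
          have h4 : (2 : ℝ) ^ k = 2 * 2 ^ (k - 1) := by
            rw [← pow_succ']; congr 1; omega
          have h5 : (2 : ℝ) ^ k / 6 ≤ 1 + (2 : ℝ) ^ v * ‖z‖ := by rw [h4]; linarith
          calc (1 + (2 : ℝ) ^ v * ‖z‖) ^ (-h) ≤ ((2 : ℝ) ^ k / 6) ^ (-h) :=
                Real.rpow_le_rpow_of_nonpos (by positivity) h5 (by linarith)
            _ = _ := by
                rw [Real.div_rpow (by positivity) (by norm_num), Real.rpow_neg (x := 6) (by norm_num)]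
                field_simp
      unfold eta
      calc (2 : ℝ) ^ (n * v) * (1 + (2 : ℝ) ^ v * ‖z‖) ^ (-h)
          ≤ (2 : ℝ) ^ (n * v) * (6 ^ h * ((2 : ℝ) ^ k) ^ (-h)) := by gcongr
        _ = _ := by
            rw [hpow]
            have : (2 : ℝ) ^ (n * v) = 2 ^ (n * (v - k)) * 2 ^ (n * k) := by
              rw [← pow_add, ← mul_add, Nat.sub_add_cancel hk2]
            rw [this]
            field_simp
  · right
    have h1 : 1 / 3 < ‖z‖ := by
      by_contra! hcon
      apply hex
      refine ⟨v, ?_, le_rfl⟩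
      have : (0 : ℝ) < 2 ^ v := by positivity
      nlinarith
    have h5 : (2 : ℝ) ^ v * ((1 + ‖z‖) / 6) ≤ 1 + (2 : ℝ) ^ v * ‖z‖ := by
      have : (0 : ℝ) < 2 ^ v := by positivity
      have : (2 : ℝ) ^ v * ((1 + ‖z‖) / 6) ≤ (2 : ℝ) ^ v * ‖z‖ := by gcongr; linarith
      linarith
    unfold eta
    calc (2 : ℝ) ^ (n * v) * (1 + (2 : ℝ) ^ v * ‖z‖) ^ (-h)
        ≤ (2 : ℝ) ^ (n * v) * ((2 : ℝ) ^ v * ((1 + ‖z‖) / 6)) ^ (-h) := by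
          apply mul_le_mul_of_nonneg_left _ (by positivity)
          exact Real.rpow_le_rpow_of_nonpos (by positivity) h5 (by linarith)
      _ = _ := by
          rw [Real.mul_rpow (by positivity) (by positivity), hpow,
            Real.div_rpow (by positivity) (by norm_num), Real.rpow_neg (x := 6) (by norm_num)]
          field_simp

/-- The decay rate. -/
def rho (n : ℕ) (h : ℝ) : ℝ≥0∞ := ENNReal.ofReal ((2 : ℝ) ^ (-(h - n)))

theorem rho_lt_one {n : ℕ} {h : ℝ} (hh : (n : ℝ) < h) : rho n h < 1 := by
  unfold rho
  rw [ENNReal.ofReal_lt_one]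
  exact Real.rpow_lt_one_of_one_lt_of_neg (by norm_num) (by linarith)

theorem conv_le {n : ℕ} {h : ℝ} (hh : (n : ℝ) < h) (v : ℕ) {F : En n → ℝ≥0∞} (hF : Measurable F)
    (x : En n) :
    ∫⁻ y, ENNReal.ofReal (eta n v h (x - y)) * F y ≤
      ENNReal.ofReal (6 ^ h) * ((∑ k ∈ Finset.range (v + 1), ∑ t : Fin n → Bool,
        rho n h ^ k * (tGrid n t).E (v - k) F x) + rho n h ^ v * Tk h F x) := by
  set C := ENNReal.ofReal ((6 : ℝ) ^ h) with hC
  set ρ := rho n h with hρ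
  have h6 : (0 : ℝ) ≤ 6 ^ h := by positivity
  have h20 : (0 : ℝ) ≤ (2 : ℝ) ^ (-(h - n)) := by positivity
  have hkm : Measurable (fun y => kap h (x - y) * F y) :=
    ((measurable_kap h).comp (measurable_const.sub measurable_id)).mul hF
  have hset : ∀ k t, MeasurableSet {y | (tGrid n t).c (v - k) y = (tGrid n t).c (v - k) x} :=
    fun k t => (tGrid n t).measSet _ _
  set I : ℕ → (Fin n → Bool) → En n → ℝ≥0∞ := fun k t y =>
    (ρ ^ k * 2 ^ (n * (v - k))) *
      ({y | (tGrid n t).c (v - k) y = (tGrid n t).c (v - k) x} : Set (En n)).indicator F y with hI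
  have hIm : ∀ k t, Measurable (I k t) := fun k t => (hF.indicator (hset k t)).const_mul _
  have hpt : ∀ y, ENNReal.ofReal (eta n v h (x - y)) * F y ≤
      C * ((∑ k ∈ Finset.range (v + 1), ∑ t : Fin n → Bool, I k t y) +
        ρ ^ v * (kap h (x - y) * F y)) := by
    intro y
    rcases eta_le hh v (x - y) with ⟨k, hk, h1, h2⟩ | h2
    · obtain ⟨t, ht⟩ := third_trick (v - k) x y h1
      have h3 : ENNReal.ofReal (eta n v h (x - y)) ≤ C * (ρ ^ k * 2 ^ (n * (v - k))) := by
        refine (ENNReal.ofReal_le_ofReal h2).trans (le_of_eq ?_)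
        rw [ENNReal.ofReal_mul (by positivity), ENNReal.ofReal_mul h6,
          ENNReal.ofReal_pow h20, ENNReal.ofReal_pow (by norm_num)]
        simp [hC, hρ, rho, mul_assoc]
      have h4 : ENNReal.ofReal (eta n v h (x - y)) * F y ≤ C * I k t y := by
        calc _ ≤ C * (ρ ^ k * 2 ^ (n * (v - k))) * F y := by gcongr
          _ = _ := by
            simp only [hI]
            rw [Set.indicator_of_mem (by exact ht.symm), mul_assoc]
      refine h4.trans ?_
      gcongr
      refine le_trans ?_ le_self_add
      calc I k t y ≤ ∑ t : Fin n → Bool, I k t y :=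
            Finset.single_le_sum (f := fun t => I k t y) (fun _ _ => zero_le) (Finset.mem_univ t)
        _ ≤ _ := Finset.single_le_sum (f := fun k => ∑ t : Fin n → Bool, I k t y)
            (fun _ _ => zero_le) (Finset.mem_range.2 (by omega))
    · have h3 : ENNReal.ofReal (eta n v h (x - y)) ≤ C * (ρ ^ v * kap h (x - y)) := by
        refine (ENNReal.ofReal_le_ofReal h2).trans (le_of_eq ?_)
        rw [ENNReal.ofReal_mul (by positivity), ENNReal.ofReal_mul h6, ENNReal.ofReal_pow h20]
        simp [hC, hρ, rho, kap, mul_assoc]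
      calc _ ≤ C * (ρ ^ v * kap h (x - y)) * F y := by gcongr
        _ = C * (ρ ^ v * (kap h (x - y) * F y)) := by ring
        _ ≤ _ := by gcongr; exact le_add_self
  refine (lintegral_mono hpt).trans (le_of_eq ?_)
  rw [lintegral_const_mul' _ _ ENNReal.ofReal_ne_top, lintegral_add_right _ (hkm.const_mul _),
    lintegral_const_mul _ hkm, lintegral_finsetSum _
      (fun k _ => Finset.measurable_sum _ (fun t _ => hIm k t))]
  congr 2
  apply Finset.sum_congr rfl
  intro k _
  rw [lintegral_finsetSum _ (fun t _ => hIm k t)]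
  apply Finset.sum_congr rfl
  intro t _
  simp only [hI]
  rw [lintegral_const_mul _ (hF.indicator (hset k t)), lintegral_indicator (hset k t), Grid.E,
    mul_assoc]


theorem combine {n : ℕ} {ι : Type*} [Countable ι] {p q : En n → ℝ} (hpm : Measurable p)
    (hqm : Measurable q) {P : ℝ} (hp : ∀ x, 1 ≤ p x ∧ p x ≤ P) (hq : ∀ x, 1 ≤ q x)
    (c : ι → ℝ≥0∞) (hc : ∀ i, c i ≤ 1) (z : ι → ℕ → En n → ℝ≥0∞)
    (hz : ∀ i v, Measurable (z i v)) {B : ℝ≥0∞}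
    (hB : ∀ i, ∫⁻ x, ((∑' v, z i v x ^ q x) ^ (1 / q x)) ^ p x ≤ B) :
    ∫⁻ x, ((∑' v, (∑' i, c i * z i v x) ^ q x) ^ (1 / q x)) ^ p x ≤
      ((∑' i, c i ^ (1 / 4 : ℝ)) + 1) ^ (2 * P) * ((∑' i, c i ^ (1 / 4 : ℝ)) * B) := by
  set A := ∑' i, c i ^ (1 / 4 : ℝ) with hA
  have hiq : Measurable (fun x => 1 / q x) := measurable_const.div hqm
  have hYm : ∀ i, Measurable (fun x => ((∑' v, z i v x ^ q x) ^ (1 / q x)) ^ p x) := fun i =>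
    ((Measurable.tsum fun v => (hz i v).pow hqm).pow hiq).pow hpm
  have hce : ∀ i {s t : ℝ}, s ≤ t → c i ^ t ≤ c i ^ s := fun i s t hst =>
    ENNReal.rpow_le_rpow_of_exponent_ge (hc i) hst
  have hpt : ∀ x, ((∑' v, (∑' i, c i * z i v x) ^ q x) ^ (1 / q x)) ^ p x ≤
      (A + 1) ^ (2 * P) * ∑' i, c i ^ (1 / 4 : ℝ) * ((∑' v, z i v x ^ q x) ^ (1 / q x)) ^ p x := by
    intro x
    have hq1 := hq x
    have hq0 : 0 < q x := by linarith
    have hp1 := (hp x).1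
    have hp0 : 0 < p x := by linarith
    set Y : ι → ℝ≥0∞ := fun i => ∑' v, z i v x ^ q x with hY
    have hr0 : 0 < 1 / q x * p x := by positivity
    have h1 : ∑' v, (∑' i, c i * z i v x) ^ q x ≤
        A ^ q x * ∑' i, (c i ^ (1 / 2 : ℝ)) ^ q x * Y i := by
      calc ∑' v, (∑' i, c i * z i v x) ^ q x
          ≤ ∑' v, A ^ q x * ∑' i, (c i ^ (1 / 2 : ℝ)) ^ q x * z i v x ^ q x := by
            apply ENNReal.tsum_le_tsum
            intro v
            refine (aux_tsum_pow c (fun i => z i v x) hq0).trans ?_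
            apply mul_le_mul' _ le_rfl
            apply ENNReal.rpow_le_rpow _ hq0.le
            exact ENNReal.tsum_le_tsum fun i => hce i (by norm_num)
        _ = _ := by
            rw [ENNReal.tsum_mul_left, ENNReal.tsum_comm]
            congr 2; ext i
            rw [ENNReal.tsum_mul_left]
    have h2 : (∑' i, (c i ^ (1 / 2 : ℝ)) ^ q x * Y i) ^ (1 / q x * p x) ≤
        (A + 1) ^ P * ∑' i, c i ^ (1 / 4 : ℝ) * Y i ^ (1 / q x * p x) := by
      refine (aux_tsum_pow (fun i => (c i ^ (1 / 2 : ℝ)) ^ q x) Y hr0).trans ?_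
      apply mul_le_mul'
      · calc (∑' i, ((c i ^ (1 / 2 : ℝ)) ^ q x) ^ (1 / 2 : ℝ)) ^ (1 / q x * p x)
            ≤ (A + 1) ^ (1 / q x * p x) := by
              apply ENNReal.rpow_le_rpow _ hr0.le
              refine le_trans ?_ le_self_add
              apply ENNReal.tsum_le_tsum
              intro i
              rw [← ENNReal.rpow_mul, ← ENNReal.rpow_mul]
              apply hce
              linarith
          _ ≤ _ := by
              apply ENNReal.rpow_le_rpow_of_exponent_le le_add_self
              refine le_trans ?_ (hp x).2
              rw [one_div, ← div_eq_inv_mul]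
              exact div_le_self hp0.le hq1
      · apply ENNReal.tsum_le_tsum
        intro i
        apply mul_le_mul' _ le_rfl
        rw [← ENNReal.rpow_mul, ← ENNReal.rpow_mul, ← ENNReal.rpow_mul]
        apply hce
        have : 1 / 2 * (q x * (1 / 2 * (1 / q x * p x))) = 1 / 4 * p x := by field_simp; norm_num
        rw [this]; linarith
    calc ((∑' v, (∑' i, c i * z i v x) ^ q x) ^ (1 / q x)) ^ p x
        = (∑' v, (∑' i, c i * z i v x) ^ q x) ^ (1 / q x * p x) := by rw [ENNReal.rpow_mul]
      _ ≤ (A ^ q x * ∑' i, (c i ^ (1 / 2 : ℝ)) ^ q x * Y i) ^ (1 / q x * p x) :=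
          ENNReal.rpow_le_rpow h1 hr0.le
      _ = A ^ p x * (∑' i, (c i ^ (1 / 2 : ℝ)) ^ q x * Y i) ^ (1 / q x * p x) := by
          rw [ENNReal.mul_rpow_of_nonneg _ _ hr0.le, ← ENNReal.rpow_mul]
          congr 2
          field_simp
      _ ≤ (A + 1) ^ P * ((A + 1) ^ P * ∑' i, c i ^ (1 / 4 : ℝ) * Y i ^ (1 / q x * p x)) := by
          apply mul_le_mul' _ h2
          exact (ENNReal.rpow_le_rpow le_self_add hp0.le).trans
            (ENNReal.rpow_le_rpow_of_exponent_le le_add_self (hp x).2)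
      _ = _ := by
          rw [← mul_assoc, ← ENNReal.rpow_add_of_nonneg _ _ (by linarith [(hp x).2])
            (by linarith [(hp x).2]), ← two_mul]
          simp only [ENNReal.rpow_mul, hY]
  refine (lintegral_mono hpt).trans ?_
  have hm : Measurable (fun x => ∑' i, c i ^ (1 / 4 : ℝ) *
      ((∑' v, z i v x ^ q x) ^ (1 / q x)) ^ p x) :=
    Measurable.tsum fun i => (hYm i).const_mul _
  rw [lintegral_const_mul _ hm, lintegral_tsum (fun i => ((hYm i).const_mul _).aemeasurable)]
  gcongr
  rw [← ENNReal.tsum_mul_right]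
  apply ENNReal.tsum_le_tsum
  intro i
  rw [lintegral_const_mul _ (hYm i)]
  gcongr
  exact hB i

theorem last_term {n : ℕ} {p q : En n → ℝ} (hqm : Measurable q)
    {P h : ℝ} (hp : ∀ x, 1 ≤ p x ∧ p x ≤ P) (hq : ∀ x, 1 ≤ q x) {ρ C6 : ℝ≥0∞} (hρ : ρ < 1)
    (hC : ∀ f : En n → ℝ≥0∞, Measurable f → ∫⁻ x, f x ^ p x ≤ 1 → ∫⁻ x, Tk h f x ^ p x ≤ C6)
    (f : ℕ → En n → ℝ≥0∞) (hf : ∀ v, Measurable (f v))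
    (hmod : ∫⁻ x, ((∑' v, f v x ^ q x) ^ (1 / q x)) ^ p x ≤ 1) :
    ∫⁻ x, ((∑' v, (ρ ^ v * Tk h (f v) x) ^ q x) ^ (1 / q x)) ^ p x ≤
      ((1 - ρ)⁻¹ + 1) ^ P * C6 := by
  have hiq : Measurable (fun x => 1 / q x) := measurable_const.div hqm
  set S : En n → ℝ≥0∞ := fun x => (∑' v, f v x ^ q x) ^ (1 / q x) with hS
  have hSm : Measurable S := (Measurable.tsum fun v => (hf v).pow hqm).pow hiq
  have hfS : ∀ v x, f v x ≤ S x := by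
    intro v x
    have hq0 : 0 < q x := by linarith [hq x]
    simp only [hS]
    rw [one_div, ENNReal.le_rpow_inv_iff hq0]
    exact ENNReal.le_tsum v
  set R : ℝ≥0∞ := (1 - ρ)⁻¹ + 1 with hR
  have hR1 : 1 ≤ R := le_add_self
  have hP0 : 0 ≤ P := by linarith [(hp 0).1, (hp 0).2]
  have hRt : R ≠ ∞ := ENNReal.add_ne_top.2
    ⟨ENNReal.inv_ne_top.2 (tsub_pos_of_lt hρ).ne', by norm_num⟩
  calc ∫⁻ x, ((∑' v, (ρ ^ v * Tk h (f v) x) ^ q x) ^ (1 / q x)) ^ p x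
      ≤ ∫⁻ x, R ^ P * Tk h S x ^ p x := by
        apply lintegral_mono
        intro x
        have hq0 : 0 < q x := by linarith [hq x]
        have hp0 : 0 ≤ p x := by linarith [(hp x).1]
        have h1 : ∑' v, (ρ ^ v * Tk h (f v) x) ^ q x ≤ (R * Tk h S x) ^ q x := by
          calc ∑' v, (ρ ^ v * Tk h (f v) x) ^ q x ≤ ∑' v : ℕ, ρ ^ v * Tk h S x ^ q x := by
                apply ENNReal.tsum_le_tsum
                intro v
                rw [ENNReal.mul_rpow_of_nonneg _ _ hq0.le]
                apply mul_le_mul'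
                · exact ENNReal.rpow_le_self_of_le_one (pow_le_one₀ zero_le hρ.le) (hq x)
                · exact ENNReal.rpow_le_rpow (Tk_mono h (hfS v) x) hq0.le
            _ = (1 - ρ)⁻¹ * Tk h S x ^ q x := by
                rw [ENNReal.tsum_mul_right, ENNReal.tsum_geometric]
            _ ≤ R ^ q x * Tk h S x ^ q x := by
                apply mul_le_mul' _ le_rfl
                exact (le_self_add (b := 1)).trans (ENNReal.le_rpow_self_of_one_le hR1 (hq x))
            _ = _ := by rw [ENNReal.mul_rpow_of_nonneg _ _ hq0.le]
        have h2 : (∑' v, (ρ ^ v * Tk h (f v) x) ^ q x) ^ (1 / q x) ≤ R * Tk h S x := by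
          rw [one_div, ENNReal.rpow_inv_le_iff hq0]; exact h1
        calc ((∑' v, (ρ ^ v * Tk h (f v) x) ^ q x) ^ (1 / q x)) ^ p x
            ≤ (R * Tk h S x) ^ p x := ENNReal.rpow_le_rpow h2 hp0
          _ = R ^ p x * Tk h S x ^ p x := ENNReal.mul_rpow_of_nonneg _ _ hp0
          _ ≤ _ := mul_le_mul' (ENNReal.rpow_le_rpow_of_exponent_le hR1 (hp x).2) le_rfl
    _ = R ^ P * ∫⁻ x, Tk h S x ^ p x :=
        lintegral_const_mul' _ _ (ENNReal.rpow_ne_top_of_nonneg hP0 hRt)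
    _ ≤ _ := by
        gcongr
        exact hC S hSm hmod

theorem shift_bound {n : ℕ} (G : Grid n) {p q : En n → ℝ}
    (hp : ∀ x, 1 ≤ p x) (hq : ∀ x, 1 ≤ q x) {C : ℝ≥0∞}
    (hC : ∀ f : ℕ → En n → ℝ≥0∞, (∀ v, Measurable (f v)) →
      ∫⁻ x, ((∑' v, f v x ^ q x) ^ (1 / q x)) ^ p x ≤ 1 →
      ∫⁻ x, ((∑' v, G.E v (f v) x ^ q x) ^ (1 / q x)) ^ p x ≤ C)
    (f : ℕ → En n → ℝ≥0∞) (hf : ∀ v, Measurable (f v))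
    (hmod : ∫⁻ x, ((∑' v, f v x ^ q x) ^ (1 / q x)) ^ p x ≤ 1) (k : ℕ) :
    ∫⁻ x, ((∑' v, (if k ≤ v then G.E (v - k) (f v) x else 0) ^ q x) ^ (1 / q x)) ^ p x ≤ C := by
  have h1 := hC (fun j => f (j + k)) (fun j => hf _) ?_
  · refine le_trans (le_of_eq ?_) h1
    congr 1; ext x
    congr 2
    have hq0 : 0 < q x := by linarith [hq x]
    rw [← Function.Injective.tsum_eq (add_left_injective k)]
    · congr 1; ext j
      simp
    · intro v hv
      rw [Function.mem_support] at hv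
      by_cases hkv : k ≤ v
      · exact ⟨v - k, Nat.sub_add_cancel hkv⟩
      · simp [hkv, hq0] at hv
  · refine le_trans (lintegral_mono fun x => ?_) hmod
    have hq0 : 0 < q x := by linarith [hq x]
    apply ENNReal.rpow_le_rpow _ (by linarith [hp x])
    apply ENNReal.rpow_le_rpow _ (by positivity)
    exact ENNReal.tsum_comp_le_tsum_of_injective (add_left_injective k) (fun v => f v x ^ q x)

theorem modular_bound {n : ℕ} (p q : En n → ℝ)
    (hp : ∃ c, GlobLogHolder c p) (hq : ∃ c, GlobLogHolder c q)
    (hpb : ∃ a b : ℝ, 1 < a ∧ ∀ x, a ≤ p x ∧ p x ≤ b)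
    (hqb : ∃ a b : ℝ, 1 < a ∧ ∀ x, a ≤ q x ∧ q x ≤ b)
    (h : ℝ) (hh : (n : ℝ) < h) :
    ∃ C : ℝ≥0∞, C ≠ ∞ ∧ ∀ f : ℕ → En n → ℝ≥0∞, (∀ v, Measurable (f v)) →
      ∫⁻ x, ((∑' v, f v x ^ q x) ^ (1 / q x)) ^ p x ≤ 1 →
      ∫⁻ x, ((∑' v, (∫⁻ y, ENNReal.ofReal (eta n v h (x - y)) * f v y) ^ q x) ^ (1 / q x)) ^ p x
        ≤ C := by
  obtain ⟨cp, hp⟩ := hp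
  obtain ⟨cq, hq⟩ := hq
  obtain ⟨a, P, ha, hpb⟩ := hpb
  obtain ⟨a', Q, ha', hqb⟩ := hqb
  have hpm : Measurable p := (GlobLogHolder.cont hp.1).measurable
  have hqm : Measurable q := (GlobLogHolder.cont hq.1).measurable
  have hp1 : ∀ x, 1 ≤ p x := fun x => by linarith [(hpb x).1]
  have hq1 : ∀ x, 1 ≤ q x := fun x => by linarith [(hqb x).1]
  have hpP : ∀ x, 1 ≤ p x ∧ p x ≤ P := fun x => ⟨hp1 x, (hpb x).2⟩
  have hP0 : 0 ≤ P := by linarith [(hpP 0).1, (hpP 0).2]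
  have hgrid : ∀ t : Fin n → Bool, ∃ C : ℝ≥0∞, C ≠ ∞ ∧ ∀ f : ℕ → En n → ℝ≥0∞,
      (∀ v, Measurable (f v)) → ∫⁻ x, ((∑' v, f v x ^ q x) ^ (1 / q x)) ^ p x ≤ 1 →
      ∫⁻ x, ((∑' v, (tGrid n t).E v (f v) x ^ q x) ^ (1 / q x)) ^ p x ≤ C := by
    intro t
    obtain ⟨C0, hC0⟩ := LHG_of_glob (tGrid n t) hp
    obtain ⟨C1, hC1⟩ := LHG_of_glob (tGrid n t) hq
    exact (tGrid n t).main hpm hqm ha hpb (fun x => ⟨hq1 x, (hqb x).2⟩) hC0 (LHG_inv hq1 hC1)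
  choose Cg hCgt hCg using hgrid
  obtain ⟨gi, cd, _, hdec⟩ := hp.2
  obtain ⟨C6, hC6t, hC6⟩ := Tk_bound hpm ha hpb hdec hh
  set ρ := rho n h with hρ
  have hρ1 : ρ < 1 := rho_lt_one hh
  set B1 : ℝ≥0∞ := ∑ t, Cg t with hB1
  have hB1t : B1 ≠ ∞ := ENNReal.sum_ne_top.2 fun t _ => hCgt t
  set A1 : ℝ≥0∞ := ∑' i : ℕ × (Fin n → Bool), (ρ ^ i.1) ^ (1 / 4 : ℝ) with hA1
  have hA1t : A1 ≠ ∞ := by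
    have h1 : A1 = (Fintype.card (Fin n → Bool)) * (1 - ρ ^ (1 / 4 : ℝ))⁻¹ := by
      rw [hA1, ENNReal.tsum_prod', ← ENNReal.tsum_geometric, ← ENNReal.tsum_mul_left]
      congr 1; ext k
      rw [tsum_fintype]
      simp only [Finset.sum_const, Finset.card_univ, nsmul_eq_mul]
      congr 1
      rw [← ENNReal.rpow_natCast, ← ENNReal.rpow_natCast, ← ENNReal.rpow_mul, ← ENNReal.rpow_mul,
        mul_comm]
    rw [h1]
    have h2 : ρ ^ (1 / 4 : ℝ) < 1 := ENNReal.rpow_lt_one hρ1 (by norm_num)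
    exact ENNReal.mul_ne_top (by simp) (ENNReal.inv_ne_top.2 (tsub_pos_of_lt h2).ne')
  set D1 : ℝ≥0∞ := (A1 + 1) ^ (2 * P) * (A1 * B1) with hD1
  have hD1t : D1 ≠ ∞ := ENNReal.mul_ne_top (ENNReal.rpow_ne_top_of_nonneg (by positivity)
    (ENNReal.add_ne_top.2 ⟨hA1t, by norm_num⟩)) (ENNReal.mul_ne_top hA1t hB1t)
  set D2 : ℝ≥0∞ := ((1 - ρ)⁻¹ + 1) ^ P * C6 with hD2
  have hD2t : D2 ≠ ∞ := ENNReal.mul_ne_top (ENNReal.rpow_ne_top_of_nonneg hP0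
    (ENNReal.add_ne_top.2 ⟨ENNReal.inv_ne_top.2 (tsub_pos_of_lt hρ1).ne', by norm_num⟩)) hC6t
  set A2 : ℝ≥0∞ := ∑' i : Bool, (1 : ℝ≥0∞) ^ (1 / 4 : ℝ) with hA2
  have hA2t : A2 ≠ ∞ := by simp [hA2]
  set D : ℝ≥0∞ := (A2 + 1) ^ (2 * P) * (A2 * (D1 + D2)) with hD
  have hDt : D ≠ ∞ := ENNReal.mul_ne_top (ENNReal.rpow_ne_top_of_nonneg (by positivity)
    (ENNReal.add_ne_top.2 ⟨hA2t, by norm_num⟩)) (ENNReal.mul_ne_top hA2t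
      (ENNReal.add_ne_top.2 ⟨hD1t, hD2t⟩))
  set C := ENNReal.ofReal ((6 : ℝ) ^ h) with hC
  have hC1 : 1 ≤ C := by
    rw [hC, ENNReal.one_le_ofReal]
    exact Real.one_le_rpow (by norm_num) (le_trans (Nat.cast_nonneg n) hh.le)
  have hCP : C ^ P ≠ ∞ := ENNReal.rpow_ne_top_of_nonneg hP0 ENNReal.ofReal_ne_top
  refine ⟨C ^ P * D, ENNReal.mul_ne_top hCP hDt, ?_⟩
  intro f hf hmod
  set w : ℕ × (Fin n → Bool) → ℕ → En n → ℝ≥0∞ := fun i v x =>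
    if i.1 ≤ v then (tGrid n i.2).E (v - i.1) (f v) x else 0 with hw
  have hwm : ∀ i v, Measurable (w i v) := by
    intro i v
    by_cases hi : i.1 ≤ v
    · simp only [hw, hi, if_true]; exact (tGrid n i.2).measurable_E _ _
    · simp only [hw, hi, if_false]; exact measurable_const
  have hwB : ∀ i, ∫⁻ x, ((∑' v, w i v x ^ q x) ^ (1 / q x)) ^ p x ≤ B1 := by
    intro i
    refine (shift_bound (tGrid n i.2) hp1 hq1 (hCg i.2) f hf hmod i.1).trans ?_
    exact Finset.single_le_sum (f := Cg) (fun _ _ => zero_le) (Finset.mem_univ _)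
  set c1 : ℕ × (Fin n → Bool) → ℝ≥0∞ := fun i => ρ ^ i.1 with hc1
  set z : Bool → ℕ → En n → ℝ≥0∞ := fun b v x =>
    if b then ∑' i, c1 i * w i v x else ρ ^ v * Tk h (f v) x with hzdef
  have hzm : ∀ b v, Measurable (z b v) := by
    intro b v
    cases b
    · simp only [hzdef, Bool.false_eq_true, if_false]; exact (measurable_Tk h (hf v)).const_mul _
    · simp only [hzdef, if_true]; exact Measurable.tsum fun i => (hwm i v).const_mul _
  have hzB : ∀ b, ∫⁻ x, ((∑' v, z b v x ^ q x) ^ (1 / q x)) ^ p x ≤ D1 + D2 := by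
    intro b
    cases b
    · simp only [hzdef, Bool.false_eq_true, if_false]
      exact (last_term hqm hpP hq1 hρ1 hC6 f hf hmod).trans le_add_self
    · simp only [hzdef, if_true]
      exact (combine hpm hqm hpP hq1 c1 (fun i => pow_le_one₀ zero_le hρ1.le) w hwm hwB).trans
        le_self_add
  have hfin := combine hpm hqm hpP hq1 (fun _ : Bool => 1) (fun _ => le_rfl) z hzm hzB
  have hptw : ∀ v x, ∫⁻ y, ENNReal.ofReal (eta n v h (x - y)) * f v y ≤
      C * ∑' b : Bool, 1 * z b v x := by
    intro v x
    refine (conv_le hh v (hf v) x).trans ?_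
    gcongr
    rw [tsum_bool]
    simp only [hzdef, Bool.false_eq_true, if_false, if_true, one_mul]
    rw [add_comm]
    gcongr
    rw [ENNReal.tsum_prod']
    calc _ ≤ ∑ k ∈ Finset.range (v + 1), ∑' t : Fin n → Bool, c1 (k, t) * w (k, t) v x := by
          apply Finset.sum_le_sum
          intro k hk
          rw [tsum_fintype]
          apply Finset.sum_le_sum
          intro t _
          have : k ≤ v := by simpa [Nat.lt_succ_iff] using hk
          simp [hc1, hw, this, hρ]
      _ ≤ _ := ENNReal.sum_le_tsum _
  calc ∫⁻ x, ((∑' v, (∫⁻ y, ENNReal.ofReal (eta n v h (x - y)) * f v y) ^ q x) ^ (1 / q x)) ^ p x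
      ≤ ∫⁻ x, C ^ P * ((∑' v, (∑' b : Bool, 1 * z b v x) ^ q x) ^ (1 / q x)) ^ p x := by
        apply lintegral_mono
        intro x
        have hq0 : 0 < q x := by linarith [hq1 x]
        have hp0 : 0 ≤ p x := by linarith [hp1 x]
        have h1 : ∑' v, (∫⁻ y, ENNReal.ofReal (eta n v h (x - y)) * f v y) ^ q x ≤
            C ^ q x * ∑' v, (∑' b : Bool, 1 * z b v x) ^ q x := by
          rw [← ENNReal.tsum_mul_left]
          apply ENNReal.tsum_le_tsum
          intro v
          rw [← ENNReal.mul_rpow_of_nonneg _ _ hq0.le]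
          exact ENNReal.rpow_le_rpow (hptw v x) hq0.le
        calc _ ≤ ((C ^ q x * ∑' v, (∑' b : Bool, 1 * z b v x) ^ q x) ^ (1 / q x)) ^ p x :=
              ENNReal.rpow_le_rpow (ENNReal.rpow_le_rpow h1 (by positivity)) hp0
          _ = C ^ p x * ((∑' v, (∑' b : Bool, 1 * z b v x) ^ q x) ^ (1 / q x)) ^ p x := by
              rw [ENNReal.mul_rpow_of_nonneg _ _ (by positivity), ← ENNReal.rpow_mul,
                mul_one_div_cancel hq0.ne', ENNReal.rpow_one, ENNReal.mul_rpow_of_nonneg _ _ hp0]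
          _ ≤ _ := mul_le_mul' (ENNReal.rpow_le_rpow_of_exponent_le hC1 (hpb x).2) le_rfl
    _ = C ^ P * ∫⁻ x, ((∑' v, (∑' b : Bool, 1 * z b v x) ^ q x) ^ (1 / q x)) ^ p x :=
        lintegral_const_mul' _ _ hCP
    _ ≤ _ := by gcongr

/-- boundedness of the convolution with `η_{v,h}`, `h > n`, on
`L^{p(·)}(ℓ_{q(·)})` for globally log-Hölder exponents with `1 < p⁻ ≤ p⁺ < ∞`,
`1 < q⁻ ≤ q⁺ < ∞`. -/
theorem stmt2 {n : ℕ} (p q : En n → ℝ)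
    (hp : ∃ c, GlobLogHolder c p) (hq : ∃ c, GlobLogHolder c q)
    (hpb : ∃ a b : ℝ, 1 < a ∧ ∀ x, a ≤ p x ∧ p x ≤ b)
    (hqb : ∃ a b : ℝ, 1 < a ∧ ∀ x, a ≤ q x ∧ q x ≤ b)
    (h : ℝ) (hh : (n : ℝ) < h) :
    ∃ c : ℝ, 0 < c ∧ ∀ f : ℕ → En n → ℝ, (∀ v, Measurable (f v)) →
      mixedNorm p q
          (fun v x => ∫⁻ y, ENNReal.ofReal (eta n v h (x - y) * |f v y|)) ≤
        ENNReal.ofReal c * mixedNorm p q (fun v x => ENNReal.ofReal |f v x|) := by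
  obtain ⟨C, hC, hmod⟩ := modular_bound p q hp hq hpb hqb h hh
  obtain ⟨a, b, ha, hpab⟩ := hpb
  obtain ⟨a', b', ha', hqab⟩ := hqb
  set D : ℝ≥0∞ := C + 1 with hD
  have hDt : D ≠ ∞ := by simp [hD, hC]
  have hD1 : 1 ≤ D := le_add_self
  have hD0 : D ≠ 0 := fun h0 => by rw [h0] at hD1; simp at hD1
  refine ⟨D.toReal, ENNReal.toReal_pos hD0 hDt, fun f hf => ?_⟩
  rw [ENNReal.ofReal_toReal hDt]
  unfold mixedNorm luxNorm
  rw [mul_comm, ← ENNReal.div_le_iff hD0 hDt]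
  apply le_sInf
  rintro c0 ⟨hc0, hc1⟩
  rw [ENNReal.div_le_iff hD0 hDt]
  by_cases hct : c0 = ∞
  · rw [hct, ENNReal.top_mul hD0]; exact le_top
  have hci : c0⁻¹ ≠ ∞ := ENNReal.inv_ne_top.2 hc0.ne'
  have hscale : ∀ (g : ℕ → En n → ℝ≥0∞) (x : En n),
      (∑' v, (g v x * c0⁻¹) ^ q x) ^ (1 / q x) = (∑' v, g v x ^ q x) ^ (1 / q x) / c0 := by
    intro g x
    have hq0 : 0 < q x := by linarith [(hqab x).1]
    have h1 : ∀ v, (g v x * c0⁻¹) ^ q x = g v x ^ q x * c0⁻¹ ^ q x := fun v =>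
      ENNReal.mul_rpow_of_nonneg _ _ hq0.le
    simp_rw [h1]
    rw [ENNReal.tsum_mul_right, ENNReal.mul_rpow_of_nonneg _ _ (by positivity),
      ← ENNReal.rpow_mul c0⁻¹, mul_one_div_cancel hq0.ne', ENNReal.rpow_one]
    simp only [div_eq_mul_inv]
  have key := hmod (fun v y => ENNReal.ofReal |f v y| * c0⁻¹)
    (fun v => ((hf v).norm.ennreal_ofReal).mul_const _) (by
      have h2 : ∀ x, (∑' v, (ENNReal.ofReal |f v x| * c0⁻¹) ^ q x) ^ (1 / q x) =
        (∑' v, ENNReal.ofReal |f v x| ^ q x) ^ (1 / q x) / c0 := fun x =>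
          hscale (fun v y => ENNReal.ofReal |f v y|) x
      simp_rw [h2]
      exact hc1)
  have hT : ∀ v x, ∫⁻ y, ENNReal.ofReal (eta n v h (x - y)) * (ENNReal.ofReal |f v y| * c0⁻¹) =
      (∫⁻ y, ENNReal.ofReal (eta n v h (x - y) * |f v y|)) * c0⁻¹ := by
    intro v x
    rw [← lintegral_mul_const' _ _ hci]
    apply lintegral_congr
    intro y
    rw [ENNReal.ofReal_mul (by unfold eta; positivity), mul_assoc]
  simp_rw [hT] at key
  have h3 : ∀ x, (∑' v, ((∫⁻ y, ENNReal.ofReal (eta n v h (x - y) * |f v y|)) * c0⁻¹) ^ q x)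
      ^ (1 / q x) = (∑' v, (∫⁻ y, ENNReal.ofReal (eta n v h (x - y) * |f v y|)) ^ q x)
      ^ (1 / q x) / c0 := fun x =>
    hscale (fun v x => ∫⁻ y, ENNReal.ofReal (eta n v h (x - y) * |f v y|)) x
  simp_rw [h3] at key
  apply sInf_le
  refine ⟨ENNReal.mul_pos hc0.ne' hD0, ?_⟩
  calc ∫⁻ x, ((∑' v, (∫⁻ y, ENNReal.ofReal (eta n v h (x - y) * |f v y|)) ^ q x)
      ^ (1 / q x) / (c0 * D)) ^ p x
      ≤ ∫⁻ x, D⁻¹ * ((∑' v, (∫⁻ y, ENNReal.ofReal (eta n v h (x - y) * |f v y|)) ^ q x)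
      ^ (1 / q x) / c0) ^ p x := by
        apply lintegral_mono
        intro x
        have hp1 : 1 ≤ p x := by linarith [(hpab x).1]
        simp only [div_eq_mul_inv]
        rw [ENNReal.mul_inv (Or.inl hc0.ne') (Or.inl hct), ← mul_assoc,
          ENNReal.mul_rpow_of_nonneg _ D⁻¹ (by linarith), mul_comm]
        apply mul_le_mul' _ le_rfl
        calc D⁻¹ ^ p x ≤ D⁻¹ ^ (1 : ℝ) :=
              ENNReal.rpow_le_rpow_of_exponent_ge (ENNReal.inv_le_one.2 hD1) hp1
          _ = D⁻¹ := ENNReal.rpow_one _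
    _ = D⁻¹ * ∫⁻ x, ((∑' v, (∫⁻ y, ENNReal.ofReal (eta n v h (x - y) * |f v y|)) ^ q x)
      ^ (1 / q x) / c0) ^ p x := lintegral_const_mul' _ _ (ENNReal.inv_ne_top.2 hD0)
    _ ≤ D⁻¹ * D := by
        apply mul_le_mul' le_rfl
        exact key.trans le_self_add
    _ = 1 := ENNReal.inv_mul_cancel hD0 hDt
end
end

section
/- Let α : ℝ^n → ℝ be locally log-Hölder continuous and let p, q be globally log-Hölder continuous exponents with 0 < p⁻ ≤ p⁺ < ∞ and 0 < q⁻ ≤ q⁺ < ∞. Then there exists a constant c > 0 such that for every complex sequence λ = {λ_{v,m}}_{v∈ℕ₀,m∈ℤ^n} with ‖λ‖_{f^{α(·)}_{p(·),q(·)}} < ∞, every j ∈ ℕ₀, every m ∈ ℤ^n, and every x ∈ Q_{j,m}, one has |λ_{j,m}| ≤ c 2^{−j(α(x) − n/p(x) + n/2)} ‖λ‖_{f^{α(·)}_{p(·),q(·)}}, with c independent of j, m, x and λ. -/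
open MeasureTheory ENNReal Real Set

noncomputable section

lemma cube_norm_le {n : ℕ} (j : ℕ) (m : Fin n → ℤ) {x y : En n}
    (hx : x ∈ dyadicCube n (j : ℤ) m) (hy : y ∈ dyadicCube n (j : ℤ) m) :
    ‖x - y‖ ≤ ((n : ℝ) + 1) / 2 ^ j := by
  have hpos : (0 : ℝ) < 2 ^ j := by positivity
  rw [EuclideanSpace.norm_eq]
  apply Real.sqrt_le_iff.mpr
  refine ⟨by positivity, ?_⟩
  have h1 : ∀ i ∈ Finset.univ, ‖(x - y) i‖ ^ 2 ≤ (1 / (2 : ℝ) ^ j) ^ 2 := by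
    intro i _
    have a := hx i
    have b := hy i
    simp only [zpow_natCast] at a b
    have : |x i - y i| ≤ 1 / 2 ^ j := by
      rw [le_div_iff₀ hpos, ← abs_of_pos hpos, ← abs_mul, abs_le]
      constructor <;> nlinarith [a.1, a.2, b.1, b.2]
    have h2 : ‖(x - y) i‖ = |x i - y i| := by simp
    rw [h2]
    gcongr
  refine (Finset.sum_le_sum h1).trans ?_
  simp only [Finset.sum_const, Finset.card_univ, Fintype.card_fin, nsmul_eq_mul]
  rw [div_pow, div_pow, mul_div_assoc']
  gcongr
  nlinarith [(Nat.cast_nonneg n : (0 : ℝ) ≤ n)]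

lemma logHolder_cube {n : ℕ} {c : ℝ} {g : En n → ℝ} (hg : LocLogHolder c g) :
    ∃ A : ℝ, 0 ≤ A ∧ ∀ (j : ℕ) (m : Fin n → ℤ), ∀ x ∈ dyadicCube n (j : ℤ) m,
      ∀ y ∈ dyadicCube n (j : ℤ) m, (j : ℝ) * |g x - g y| ≤ A := by
  obtain ⟨hc, hg⟩ := hg
  have hs : 0 ≤ Real.log ((n : ℝ) + 1) :=
    Real.log_nonneg (by linarith [(Nat.cast_nonneg n : (0 : ℝ) ≤ n)])
  have hl2 : 0 < Real.log 2 := Real.log_pos (by norm_num)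
  refine ⟨c * (1 + Real.log ((n : ℝ) + 1)) / Real.log 2, by positivity, ?_⟩
  intro j m x hx y hy
  by_cases hxy : x = y
  · subst hxy
    simp
    positivity
  have hn : 0 < ‖x - y‖ := norm_pos_iff.mpr (sub_ne_zero.mpr hxy)
  have hle := cube_norm_le j m hx hy
  have hg' := hg x y
  set L := Real.log (Real.exp 1 + 1 / ‖x - y‖) with hL
  have h1 : 1 ≤ L := by
    rw [hL, Real.le_log_iff_exp_le (by positivity)]
    have : 0 < 1 / ‖x - y‖ := by positivity
    linarith
  have h2 : (j : ℝ) * Real.log 2 - Real.log ((n : ℝ) + 1) ≤ L := by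
    rw [← Real.log_pow, ← Real.log_div (by positivity) (by positivity)]
    apply Real.log_le_log (by positivity)
    have h3 : (2 : ℝ) ^ j / ((n : ℝ) + 1) ≤ 1 / ‖x - y‖ := by
      rw [le_div_iff₀ hn, div_mul_eq_mul_div, div_le_one (by positivity)]
      rw [le_div_iff₀ (by positivity)] at hle
      linarith
    linarith [Real.exp_pos 1]
  have hL0 : 0 < L := by linarith
  rw [le_div_iff₀ hL0] at hg'
  rw [le_div_iff₀ hl2]
  have h4 : (j : ℝ) * Real.log 2 ≤ L * (1 + Real.log ((n : ℝ) + 1)) := by nlinarith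
  calc (j : ℝ) * |g x - g y| * Real.log 2 = |g x - g y| * ((j : ℝ) * Real.log 2) := by ring
    _ ≤ |g x - g y| * (L * (1 + Real.log ((n : ℝ) + 1))) := by gcongr
    _ = (|g x - g y| * L) * (1 + Real.log ((n : ℝ) + 1)) := by ring
    _ ≤ c * (1 + Real.log ((n : ℝ) + 1)) := by gcongr

lemma cube_eq {n : ℕ} (j : ℕ) (m : Fin n → ℤ) :
    dyadicCube n (j : ℤ) m = (WithLp.ofLp : En n → (Fin n → ℝ)) ⁻¹'
      (Set.pi univ fun i => Ico ((m i : ℝ) / 2 ^ j) (((m i : ℝ) + 1) / 2 ^ j)) := by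
  ext x
  simp only [dyadicCube, mem_setOf_eq, mem_preimage, mem_pi, mem_univ, true_imp_iff, mem_Ico,
    zpow_natCast]
  refine forall_congr' fun i => ?_
  rw [div_le_iff₀ (by positivity), lt_div_iff₀ (by positivity), mul_comm]

lemma cube_meas {n : ℕ} (j : ℕ) (m : Fin n → ℤ) : MeasurableSet (dyadicCube n (j : ℤ) m) := by
  rw [cube_eq]
  exact (PiLp.volume_preserving_ofLp (Fin n)).measurable
    (MeasurableSet.univ_pi fun i => measurableSet_Ico)

lemma cube_vol {n : ℕ} (j : ℕ) (m : Fin n → ℤ) :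
    volume (dyadicCube n (j : ℤ) m) = ENNReal.ofReal (1 / (2 : ℝ) ^ ((j : ℝ) * n)) := by
  rw [cube_eq, (PiLp.volume_preserving_ofLp (Fin n)).measure_preimage
    (MeasurableSet.univ_pi fun i => measurableSet_Ico).nullMeasurableSet, Real.volume_pi_Ico]
  have : ∀ i, ((m i : ℝ) + 1) / 2 ^ j - (m i : ℝ) / 2 ^ j = 1 / 2 ^ j := fun i => by ring
  simp only [this, Finset.prod_const, Finset.card_univ, Fintype.card_fin]
  rw [← ENNReal.ofReal_pow (by positivity), Real.rpow_mul (by norm_num), Real.rpow_natCast,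
    Real.rpow_natCast, div_pow, one_pow]

lemma real_key (n : ℕ) {a A B L r αx αy px py j : ℝ} (hj : 0 ≤ j) (ha : 0 < a) (hr : 0 < r)
    (hB : 0 ≤ B) (hpx : a ≤ px) (hpy : a ≤ py)
    (hα : j * |αx - αy| ≤ A) (hp : j * |px - py| ≤ B)
    (hL : (2 : ℝ) ^ (A + (1 + n * B / a) / a) * (2 : ℝ) ^ (-j * (αx - n / px + n / 2)) * r ≤ L) :
    2 * (2 : ℝ) ^ (j * n) ≤ ((2 : ℝ) ^ (j * (αy + n / 2)) * L / r) ^ py := by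
  have hpx0 : 0 < px := by linarith
  have hpy0 : 0 < py := by linarith
  have h1 : (2 : ℝ) ^ ((1 + n * B / a) / a + j * n / px)
      ≤ (2 : ℝ) ^ (j * (αy + n / 2)) * L / r := by
    rw [le_div_iff₀ hr]
    refine le_trans ?_ (mul_le_mul_of_nonneg_left hL (by positivity))
    rw [← mul_assoc, ← Real.rpow_add (by norm_num), ← Real.rpow_add (by norm_num)]
    refine mul_le_mul_of_nonneg_right ?_ hr.le
    apply Real.rpow_le_rpow_of_exponent_le (by norm_num)
    have : j * (αx - αy) ≤ A := (mul_le_mul_of_nonneg_left (le_abs_self _) hj).trans hα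
    have e : j * n / px = j * (n / px) := by ring
    rw [e]
    linarith
  refine le_trans ?_ (Real.rpow_le_rpow (by positivity) h1 hpy0.le)
  rw [← Real.rpow_mul (by norm_num)]
  have : (2 : ℝ) * (2 : ℝ) ^ (j * n) = (2 : ℝ) ^ (1 + j * n) := by
    rw [Real.rpow_add (by norm_num), Real.rpow_one]
  rw [this]
  apply Real.rpow_le_rpow_of_exponent_le (by norm_num)
  have h2 : 1 + n * B / a ≤ (1 + n * B / a) / a * py := by
    rw [div_mul_eq_mul_div, le_div_iff₀ ha]
    gcongr
  have h3 : j * (px - py) ≤ B := (mul_le_mul_of_nonneg_left (le_abs_self _) hj).trans hp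
  have h4 : (n : ℝ) * (j * (px - py)) / px ≤ n * B / a := by
    calc (n : ℝ) * (j * (px - py)) / px ≤ n * B / px := by gcongr
      _ ≤ n * B / a := by gcongr
  have h5 : (n : ℝ) * (j * (px - py)) / px = j * n - j * n / px * py := by
    field_simp
  rw [add_mul]
  linarith

/-- Lemma `lamda-est`: pointwise estimate for the coefficients of a
sequence in `f^{α(·)}_{p(·),q(·)}`. -/
theorem stmt4 {n : ℕ} (α p q : En n → ℝ)
    (hα : ∃ c, LocLogHolder c α) (hp : ∃ c, GlobLogHolder c p) (hq : ∃ c, GlobLogHolder c q)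
    (hpb : ∃ a b : ℝ, 0 < a ∧ ∀ x, a ≤ p x ∧ p x ≤ b)
    (hqb : ∃ a b : ℝ, 0 < a ∧ ∀ x, a ≤ q x ∧ q x ≤ b) :
    ∃ c : ℝ, 0 < c ∧ ∀ lam : ℕ → (Fin n → ℤ) → ℂ, seqNorm α p q lam ≠ ∞ →
      ∀ (j : ℕ) (m : Fin n → ℤ), ∀ x ∈ dyadicCube n (j : ℤ) m,
        ENNReal.ofReal ‖lam j m‖ ≤
          ENNReal.ofReal (c * (2 : ℝ) ^ (-(j : ℝ) * (α x - n / p x + n / 2))) *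
            seqNorm α p q lam := by
  obtain ⟨cα, hα⟩ := hα
  obtain ⟨cp, hp, -⟩ := hp
  obtain ⟨a, b, ha, hpb⟩ := hpb
  obtain ⟨a', b', ha', hqb⟩ := hqb
  obtain ⟨A, hA, hα⟩ := logHolder_cube hα
  obtain ⟨B, hB, hp⟩ := logHolder_cube hp
  refine ⟨(2 : ℝ) ^ (A + (1 + n * B / a) / a), by positivity, ?_⟩
  intro lam _ j m x hx
  set K := (2 : ℝ) ^ (A + (1 + n * B / a) / a) * (2 : ℝ) ^ (-(j : ℝ) * (α x - n / p x + n / 2))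
    with hK
  have hK0 : 0 < K := by positivity
  have hKE : ENNReal.ofReal K ≠ 0 := by simpa using hK0
  rw [mul_comm, ← ENNReal.div_le_iff hKE ENNReal.ofReal_ne_top]
  unfold seqNorm mixedNorm luxNorm
  apply le_sInf
  rintro c ⟨hc0, hc⟩
  rw [ENNReal.div_le_iff hKE ENNReal.ofReal_ne_top]
  by_cases hct : c = ∞
  · subst hct
    rw [ENNReal.top_mul hKE]
    exact le_top
  have hr : 0 < c.toReal := ENNReal.toReal_pos hc0.ne' hct
  have hcr : c = ENNReal.ofReal c.toReal := (ENNReal.ofReal_toReal hct).symm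
  set r := c.toReal
  by_contra hcon
  rw [not_le, hcr, ← ENNReal.ofReal_mul hr.le] at hcon
  have hL : K * r ≤ ‖lam j m‖ := by
    rw [mul_comm]
    exact ((ENNReal.ofReal_lt_ofReal_iff_of_nonneg (by positivity)).mp hcon).le
  have hlow : ∀ y ∈ dyadicCube n (j : ℤ) m, ENNReal.ofReal (2 * (2 : ℝ) ^ ((j : ℝ) * n)) ≤
      ((∑' v : ℕ, (∑' m : Fin n → ℤ,
      ENNReal.ofReal ((2 : ℝ) ^ ((v : ℝ) * (α y + n / 2)) * ‖lam v m‖) *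
        (dyadicCube n (v : ℤ) m).indicator (fun _ => (1 : ℝ≥0∞)) y) ^ q y) ^ (1 / q y) / c)
        ^ p y := by
    intro y hy
    have hpy : 0 < p y := ha.trans_le (hpb y).1
    have hqy : 0 < q y := ha'.trans_le (hqb y).1
    have hk := real_key n (Nat.cast_nonneg j) ha hr hB (hpb x).1 (hpb y).1
      (hα j m x hx y hy) (hp j m x hx y hy) hL
    refine (ENNReal.ofReal_le_ofReal hk).trans ?_
    rw [← ENNReal.ofReal_rpow_of_nonneg (by positivity) hpy.le, ENNReal.ofReal_div_of_pos hr, ← hcr]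
    refine ENNReal.rpow_le_rpow (ENNReal.div_le_div_right ?_ _) hpy.le
    have h1 : ENNReal.ofReal ((2 : ℝ) ^ ((j : ℝ) * (α y + n / 2)) * ‖lam j m‖) ≤
        ∑' m : Fin n → ℤ, ENNReal.ofReal ((2 : ℝ) ^ ((j : ℝ) * (α y + n / 2)) * ‖lam j m‖) *
        (dyadicCube n (j : ℤ) m).indicator (fun _ => (1 : ℝ≥0∞)) y := by
      refine le_trans (le_of_eq ?_) (ENNReal.le_tsum m)
      rw [indicator_of_mem hy, mul_one]
    rw [one_div, ENNReal.le_rpow_inv_iff hqy]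
    exact (ENNReal.rpow_le_rpow h1 hqy.le).trans
      (ENNReal.le_tsum (f := fun v : ℕ => (∑' m : Fin n → ℤ,
        ENNReal.ofReal ((2 : ℝ) ^ ((v : ℝ) * (α y + n / 2)) * ‖lam v m‖) *
        (dyadicCube n (v : ℤ) m).indicator (fun _ => (1 : ℝ≥0∞)) y) ^ q y) j)
  have h2 := ((setLIntegral_mono' (μ := volume) (cube_meas j m) hlow).trans
    (setLIntegral_le_lintegral _ _)).trans hc
  rw [setLIntegral_const, cube_vol, ← ENNReal.ofReal_mul (by positivity)] at h2
  have h3 : 2 * (2 : ℝ) ^ ((j : ℝ) * n) * (1 / (2 : ℝ) ^ ((j : ℝ) * n)) = 2 := by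
    field_simp
  rw [h3] at h2
  norm_num at h2
end
end

section
/- Let α : ℝ^n → ℝ be locally log-Hölder continuous and let 0 < q < ∞. Then there exists a constant c > 0 such that for every complex sequence λ = {λ_{v,m}}_{v∈ℕ₀,m∈ℤ^n} and every collection {E_{v,m}}_{v∈ℕ₀,m∈ℤ^n} of measurable sets with E_{v,m} ⊂ Q_{v,m} and |E_{v,m}| > |Q_{v,m}|/2 for all v, m, one has ‖λ‖_{f^{α(·)}_{∞,q}} ≤ c ‖ (∑_{v=0}^∞ ∑_{m∈ℤ^n} 2^{v(α(·)+n/2)q} |λ_{v,m}|^q χ_{E_{v,m}})^{1/q} ‖_{L^∞}. -/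
open MeasureTheory ENNReal Real Set

noncomputable section

lemma measurableSet_dyadicCube (n : ℕ) (v : ℤ) (m : Fin n → ℤ) :
    MeasurableSet (dyadicCube n v m) := by
  have : dyadicCube n v m = ⋂ i : Fin n,
      {x : En n | (m i : ℝ) ≤ (2 : ℝ) ^ v * x i} ∩ {x : En n | (2 : ℝ) ^ v * x i < m i + 1} := by
    ext x; simp [dyadicCube]
  rw [this]
  refine MeasurableSet.iInter fun i => MeasurableSet.inter ?_ ?_
  · exact measurableSet_le (by fun_prop) (by fun_prop)
  · exact measurableSet_lt (by fun_prop) (by fun_prop)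

lemma dyadicCube_nested {n : ℕ} {u : ℤ} {v : ℕ} (huv : u ≤ (v : ℤ)) {k m : Fin n → ℤ}
    {x z : En n} (hx : x ∈ dyadicCube n v m) (hxQ : x ∈ dyadicCube n u k)
    (hz : z ∈ dyadicCube n v m) : z ∈ dyadicCube n u k := by
  obtain ⟨d, hd⟩ := Int.eq_ofNat_of_zero_le (sub_nonneg.mpr huv)
  have hv : (v : ℤ) = u + d := by omega
  intro i
  obtain ⟨h1, h2⟩ := hx i
  obtain ⟨h3, h4⟩ := hxQ i
  obtain ⟨h5, h6⟩ := hz i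
  have hp : (2 : ℝ) ^ (v : ℤ) = 2 ^ d * 2 ^ u := by
    rw [hv, zpow_add₀ (by norm_num), zpow_natCast, mul_comm]
  rw [hp, mul_assoc] at h1 h2 h5 h6
  have hD : (0 : ℝ) < 2 ^ d := by positivity
  have e1 : (2 ^ d * k i : ℤ) < m i + 1 := by
    have : (2 ^ d * k i : ℝ) < m i + 1 := by nlinarith
    exact_mod_cast this
  have e2 : m i < (2 ^ d * (k i + 1) : ℤ) := by
    have : (m i : ℝ) < (2 ^ d * (k i + 1) : ℝ) := by nlinarith
    exact_mod_cast this
  have e1' : (2 ^ d * k i : ℝ) ≤ m i := by exact_mod_cast Int.lt_add_one_iff.mp e1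
  have e2' : (m i + 1 : ℝ) ≤ (2 ^ d * (k i + 1) : ℝ) := by exact_mod_cast e2
  constructor
  · exact le_of_mul_le_mul_left (e1'.trans h5) hD
  · exact lt_of_mul_lt_mul_left (h6.trans_le e2') hD.le

lemma dyadicCube_norm_sub {n : ℕ} {v : ℕ} {m : Fin n → ℤ} {x y : En n}
    (hx : x ∈ dyadicCube n v m) (hy : y ∈ dyadicCube n v m) :
    2 ^ v * ‖x - y‖ ≤ (n : ℝ) + 1 := by
  have h2 : (0 : ℝ) < 2 ^ v := by positivity
  have key : (2 ^ v * ‖x - y‖) ^ 2 ≤ n := by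
    rw [mul_pow, EuclideanSpace.norm_sq_eq, Finset.mul_sum]
    calc _ ≤ ∑ i : Fin n, (1 : ℝ) := by
          refine Finset.sum_le_sum fun i _ => ?_
          have a := hx i
          have b := hy i
          simp only [zpow_natCast] at a b
          rw [Real.norm_eq_abs, sq_abs, ← mul_pow, PiLp.sub_apply, mul_sub]
          rw [sq_le_one_iff_abs_le_one, abs_le]
          constructor <;> linarith [a.1, a.2, b.1, b.2]
      _ = n := by simp
  have hn : (0 : ℝ) ≤ n := by positivity
  nlinarith [mul_nonneg h2.le (norm_nonneg (x - y))]

lemma weight_compare {n : ℕ} {α : En n → ℝ} {c q : ℝ} (h : LocLogHolder c α) (hq : 0 < q) :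
    ∃ C : ℝ, 0 < C ∧ ∀ (v : ℕ) (m : Fin n → ℤ) (x y : En n), x ∈ dyadicCube n v m →
      y ∈ dyadicCube n v m →
      (2 : ℝ) ^ ((v : ℝ) * (α x + n / 2) * q) ≤ C * (2 : ℝ) ^ ((v : ℝ) * (α y + n / 2) * q) := by
  obtain ⟨hc, h⟩ := h
  set K : ℝ := (Real.log (n + 1) + 1) / Real.log 2 with hK
  have hl2 : 0 < Real.log 2 := Real.log_pos (by norm_num)
  have hlN : 0 ≤ Real.log ((n : ℝ) + 1) := Real.log_nonneg (by simp)
  have hK0 : 0 ≤ K := by positivity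
  refine ⟨2 ^ (c * K * q), by positivity, fun v m x y hx hy => ?_⟩
  rw [← Real.rpow_add (by norm_num)]
  refine Real.rpow_le_rpow_of_exponent_le (by norm_num) ?_
  suffices hs : (v : ℝ) * (α x - α y) ≤ c * K by nlinarith
  rcases eq_or_ne x y with rfl | hxy
  · simp; positivity
  have hpos : 0 < ‖x - y‖ := norm_pos_iff.mpr (sub_ne_zero.mpr hxy)
  set L := Real.log (Real.exp 1 + 1 / ‖x - y‖) with hL
  have hL1 : 1 ≤ L := by
    rw [hL, Real.le_log_iff_exp_le (by positivity)]
    have : 0 ≤ 1 / ‖x - y‖ := by positivity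
    linarith
  have hd := dyadicCube_norm_sub hx hy
  have hvL : (v : ℝ) ≤ K * L := by
    have h1 : (2 : ℝ) ^ v ≤ (n + 1) * (Real.exp 1 + 1 / ‖x - y‖) := by
      have : (2 : ℝ) ^ v ≤ (n + 1) * (1 / ‖x - y‖) := by
        rw [mul_one_div, le_div_iff₀ hpos]; exact hd
      have : 0 ≤ ((n : ℝ) + 1) * Real.exp 1 := by positivity
      linarith
    have h2 := Real.log_le_log (by positivity) h1
    rw [Real.log_pow, Real.log_mul (by positivity) (by positivity), ← hL] at h2
    rw [hK, div_mul_eq_mul_div, le_div_iff₀ hl2]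
    nlinarith
  have h3 : α x - α y ≤ c / L := (le_abs_self _).trans (h x y)
  calc (v : ℝ) * (α x - α y) ≤ v * (c / L) := by gcongr
    _ ≤ (K * L) * (c / L) := by gcongr
    _ = c * K := by field_simp

lemma dyadicCube_nonempty (n : ℕ) (v : ℕ) (m : Fin n → ℤ) : (dyadicCube n v m).Nonempty := by
  refine ⟨WithLp.toLp 2 fun i => (m i : ℝ) / 2 ^ v, fun i => ?_⟩
  have : (2 : ℝ) ^ (v : ℤ) * ((m i : ℝ) / 2 ^ v) = m i := by
    rw [zpow_natCast]; field_simp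
  simp only [this]
  simp

/-- one direction of Proposition `prop1`: the `f^{α(·)}_{∞,q}` norm is
dominated by the `L^∞` norm of the corresponding expression over any choice of
subsets `E_{v,m} ⊂ Q_{v,m}` with `|E_{v,m}| > |Q_{v,m}|/2`. -/
theorem stmt5 {n : ℕ} (α : En n → ℝ) (hα : ∃ c, LocLogHolder c α)
    (q : ℝ) (hq : 0 < q) :
    ∃ c : ℝ, 0 < c ∧ ∀ (lam : ℕ → (Fin n → ℤ) → ℂ) (E : ℕ → (Fin n → ℤ) → Set (En n)),
      (∀ (v : ℕ) (m : Fin n → ℤ), MeasurableSet (E v m) ∧ E v m ⊆ dyadicCube n (v : ℤ) m ∧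
        volume (dyadicCube n (v : ℤ) m) / 2 < volume (E v m)) →
      seqNormInf α q lam ≤
        ENNReal.ofReal c *
          essSup (fun x =>
            (∑' (v : ℕ) (m : Fin n → ℤ),
              ENNReal.ofReal ((2 : ℝ) ^ ((v : ℝ) * (α x + n / 2) * q) * ‖lam v m‖ ^ q) *
                (E v m).indicator (fun _ => (1 : ℝ≥0∞)) x) ^ (1 / q)) volume := by
  obtain ⟨c₀, hα⟩ := hα
  obtain ⟨C, hC, hcomp⟩ := weight_compare hα hq
  refine ⟨(2 * C * C) ^ (1 / q), by positivity, fun lam E hE => ?_⟩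
  set D : ℝ≥0∞ := ENNReal.ofReal C with hD
  set w : ℕ → (Fin n → ℤ) → En n → ℝ≥0∞ := fun v m x =>
    ENNReal.ofReal ((2 : ℝ) ^ ((v : ℝ) * (α x + n / 2) * q) * ‖lam v m‖ ^ q) with hw
  choose p hp using dyadicCube_nonempty n
  have hw1 : ∀ v m x y, x ∈ dyadicCube n (v : ℕ) m → y ∈ dyadicCube n v m →
      w v m x ≤ D * w v m y := by
    intro v m x y hx hy
    rw [hD, hw, ← ENNReal.ofReal_mul hC.le]
    refine ENNReal.ofReal_le_ofReal ?_
    rw [← mul_assoc]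
    exact mul_le_mul_of_nonneg_right (hcomp v m x y hx hy) (by positivity)
  set S : En n → ℝ≥0∞ := fun x => ∑' (v : ℕ) (m : Fin n → ℤ),
    w v m x * (E v m).indicator (fun _ => (1 : ℝ≥0∞)) x with hS
  set M := essSup (fun x => S x ^ (1 / q)) volume with hM
  change seqNormInf α q lam ≤ _ * M
  have hSM : ∀ᵐ x, S x ≤ M ^ q := by
    filter_upwards [ENNReal.ae_le_essSup (μ := volume) (fun x => S x ^ (1 / q))] with x hx
    have := ENNReal.rpow_le_rpow hx hq.le
    rwa [← ENNReal.rpow_mul, one_div_mul_cancel hq.ne', ENNReal.rpow_one] at this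
  unfold seqNormInf
  refine iSup_le fun u => iSup_le fun k => ?_
  set Q := dyadicCube n u k with hQ
  have hQm : MeasurableSet Q := measurableSet_dyadicCube n u k
  have step : ∀ v : ℕ, (if u ≤ (v : ℤ) then ∫⁻ x in Q, ∑' m : Fin n → ℤ, w v m x *
      (dyadicCube n (v : ℤ) m).indicator (fun _ => (1 : ℝ≥0∞)) x else 0) ≤
      2 * D * ∑' m : Fin n → ℤ, ∫⁻ x in Q, w v m (p v m) *
        (E v m).indicator (fun _ => (1 : ℝ≥0∞)) x := by
    intro v
    split_ifs with huv
    swap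
    · exact zero_le
    calc ∫⁻ x in Q, ∑' m : Fin n → ℤ, w v m x *
          (dyadicCube n (v : ℤ) m).indicator (fun _ => (1 : ℝ≥0∞)) x
        ≤ ∫⁻ x in Q, ∑' m : Fin n → ℤ, D * w v m (p v m) *
          (dyadicCube n (v : ℤ) m).indicator (fun _ => (1 : ℝ≥0∞)) x := by
          refine lintegral_mono fun x => ENNReal.tsum_le_tsum fun m => ?_
          by_cases hx : x ∈ dyadicCube n (v : ℤ) m
          · gcongr
            exact hw1 v m x _ hx (hp v m)
          · simp [hx]
      _ = ∑' m : Fin n → ℤ, ∫⁻ x in Q, D * w v m (p v m) *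
          (dyadicCube n (v : ℤ) m).indicator (fun _ => (1 : ℝ≥0∞)) x := by
          refine lintegral_tsum fun m => Measurable.aemeasurable ?_
          exact (measurable_const.indicator (measurableSet_dyadicCube n v m)).const_mul _
      _ ≤ _ := by
          rw [← ENNReal.tsum_mul_left]
          refine ENNReal.tsum_le_tsum fun m => ?_
          obtain ⟨hEm, hEs, hEv⟩ := hE v m
          have hdm := measurableSet_dyadicCube n v m
          rw [lintegral_const_mul _ (measurable_const.indicator hdm),
            lintegral_const_mul _ (measurable_const.indicator hEm),
            lintegral_indicator_const hdm, lintegral_indicator_const hEm,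
            Measure.restrict_apply hdm, Measure.restrict_apply hEm]
          have hvol : volume (dyadicCube n (v : ℤ) m ∩ Q) ≤ 2 * volume (E v m ∩ Q) := by
            rcases (dyadicCube n (v : ℤ) m ∩ Q).eq_empty_or_nonempty with h0 | ⟨x, hx, hxQ⟩
            · simp [h0]
            · have hsub : dyadicCube n (v : ℤ) m ⊆ Q := fun z hz =>
                dyadicCube_nested huv hx hxQ hz
              rw [inter_eq_left.mpr hsub, inter_eq_left.mpr (hEs.trans hsub), mul_comm]
              exact (ENNReal.div_le_iff (by norm_num) (by norm_num)).mp hEv.le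
          calc D * w v m (p v m) * (1 * volume (dyadicCube n (v : ℤ) m ∩ Q))
              ≤ D * w v m (p v m) * (1 * (2 * volume (E v m ∩ Q))) := by gcongr
            _ = _ := by ring
  have total : (∑' v : ℕ, if u ≤ (v : ℤ) then ∫⁻ x in Q, ∑' m : Fin n → ℤ, w v m x *
      (dyadicCube n (v : ℤ) m).indicator (fun _ => (1 : ℝ≥0∞)) x else 0) ≤
      2 * D * D * (M ^ q * volume Q) := by
    calc _ ≤ ∑' v : ℕ, 2 * D * ∑' m : Fin n → ℤ, ∫⁻ x in Q, w v m (p v m) *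
          (E v m).indicator (fun _ => (1 : ℝ≥0∞)) x := ENNReal.tsum_le_tsum step
      _ = 2 * D * ∫⁻ x in Q, ∑' (v : ℕ) (m : Fin n → ℤ), w v m (p v m) *
          (E v m).indicator (fun _ => (1 : ℝ≥0∞)) x := by
          have hmeas : ∀ (v : ℕ) (m : Fin n → ℤ), Measurable fun x => w v m (p v m) *
              (E v m).indicator (fun _ => (1 : ℝ≥0∞)) x := fun v m =>
            (measurable_const.indicator (hE v m).1).const_mul _
          rw [ENNReal.tsum_mul_left, lintegral_tsum
            fun v => (Measurable.tsum (hmeas v)).aemeasurable]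
          congr 1
          refine tsum_congr fun v => ?_
          rw [lintegral_tsum fun m => (hmeas v m).aemeasurable]
      _ ≤ 2 * D * ∫⁻ x in Q, D * S x := by
          gcongr with x
          rw [hS]
          simp only
          rw [← ENNReal.tsum_mul_left]
          refine ENNReal.tsum_le_tsum fun v => ?_
          rw [← ENNReal.tsum_mul_left]
          refine ENNReal.tsum_le_tsum fun m => ?_
          by_cases hx : x ∈ E v m
          · rw [← mul_assoc]
            gcongr
            exact hw1 v m _ x (hp v m) ((hE v m).2.1 hx)
          · simp [hx]
      _ ≤ 2 * D * ∫⁻ x in Q, D * M ^ q := by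
          gcongr 1
          refine lintegral_mono_ae (ae_restrict_of_ae ?_)
          filter_upwards [hSM] with x hx
          gcongr
      _ = _ := by
          rw [setLIntegral_const]; ring
  have hq' : 0 ≤ 1 / q := by positivity
  calc _ ≤ volume Q ^ (-(1 / q)) * (2 * D * D * (M ^ q * volume Q)) ^ (1 / q) := by
        gcongr
    _ = (2 * D * D) ^ (1 / q) * M * ((volume Q ^ (1 / q))⁻¹ * volume Q ^ (1 / q)) := by
        rw [ENNReal.mul_rpow_of_nonneg _ _ hq', ENNReal.mul_rpow_of_nonneg (M ^ q) _ hq',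
          ← ENNReal.rpow_mul, mul_one_div_cancel hq.ne', ENNReal.rpow_one, ENNReal.rpow_neg]
        ring
    _ ≤ (2 * D * D) ^ (1 / q) * M * 1 := by
        gcongr
        exact ENNReal.inv_mul_le_one _
    _ = _ := by
        rw [mul_one, ← ENNReal.ofReal_rpow_of_pos (by positivity),
          ENNReal.ofReal_mul (by positivity), ENNReal.ofReal_mul (by positivity)]
        simp [hD]
end
end
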